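/- Boundedness of the electromagnetic field under a momentum support bound: Let τ > 0, let f ∈ C¹([0,τ)×ℝ³×ℝ³) and (E,B) ∈ C¹([0,τ)×ℝ³; ℝ³×ℝ³) be a solution of the relativistic Vlasov–Maxwell system with initial data f(0,·,·) = f^in, where f^in ∈ C¹(ℝ³×ℝ³) is nonnegative with compact support, and (E,B)(0,·) = (E^in, B^in) with E^in, B^in ∈ C²(ℝ³;ℝ³) compactly supported and satisfying div_x E^in = ∫_{ℝ³} f^in dξ and div_x B^in = 0. If sup_{t∈[0,τ)} R_f(t) < +∞, then sup_{(t,x)∈[0,τ)×ℝ³} ( |E(t,x)| + |B(t,x)| ) < +∞. -/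

import Mathlib

open MeasureTheory Real Set Filter Metric RealInnerProductSpace
open scoped ENNReal NNReal Topology

noncomputable section

/-- Physical space `ℝ³` with its Euclidean structure. -/
abbrev E3 : Type := EuclideanSpace ℝ (Fin 3)

/-- The `i`-th standard basis vector of `ℝ³`. -/
def e3 (i : Fin 3) : E3 := EuclideanSpace.single i 1

/-- The relativistic velocity `v(ξ) = ξ/√(1+|ξ|²)`. -/
def vrel (ξ : E3) : E3 := (Real.sqrt (1 + ‖ξ‖ ^ 2))⁻¹ • ξ

/-- Cross product on `ℝ³`. -/
def cross3 (a b : E3) : E3 :=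
  (WithLp.equiv 2 (Fin 3 → ℝ)).symm
    ![a 1 * b 2 - a 2 * b 1, a 2 * b 0 - a 0 * b 2, a 0 * b 1 - a 1 * b 0]

/-- Partial derivative in the `i`-th coordinate direction. -/
def pd3 (u : E3 → ℝ) (i : Fin 3) (x : E3) : ℝ := fderiv ℝ u x (e3 i)

/-- Divergence of a vector field on `ℝ³`. -/
def divg (F : E3 → E3) (x : E3) : ℝ := ∑ i : Fin 3, pd3 (fun y => F y i) i x

/-- Curl of a vector field on `ℝ³`. -/
def curl3 (F : E3 → E3) (x : E3) : E3 :=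
  (WithLp.equiv 2 (Fin 3 → ℝ)).symm
    ![pd3 (fun y => F y 2) 1 x - pd3 (fun y => F y 1) 2 x,
      pd3 (fun y => F y 0) 2 x - pd3 (fun y => F y 2) 0 x,
      pd3 (fun y => F y 1) 0 x - pd3 (fun y => F y 0) 1 x]

/-- `W^{1,∞}_{x,ξ}` norm (as an extended real) of `f(t,·,·)`. -/
def WfNorm (f : ℝ → E3 → E3 → ℝ) (t : ℝ) : ℝ≥0∞ :=
  ⨆ p : E3 × E3,
    ((‖f t p.1 p.2‖₊ : ℝ≥0∞) + (‖fderiv ℝ (fun q : E3 × E3 => f t q.1 q.2) p‖₊ : ℝ≥0∞))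

/-- `W^{1,∞}_x` norm (as an extended real) of a field `F(t,·)`. -/
def WFieldNorm (F : ℝ → E3 → E3) (t : ℝ) : ℝ≥0∞ :=
  ⨆ x : E3, ((‖F t x‖₊ : ℝ≥0∞) + (‖fderiv ℝ (F t) x‖₊ : ℝ≥0∞))

/-- The momentum support radius
`R_f(t) = inf { r > 0 | f(t,x,ξ) = 0 for all x and all |ξ| > r }` (with value `∞` if no
such radius exists). -/
def Rsupp (f : ℝ → E3 → E3 → ℝ) (t : ℝ) : ℝ≥0∞ :=
  sInf {r : ℝ≥0∞ | 0 < r ∧ ∀ x ξ : E3, r < (‖ξ‖₊ : ℝ≥0∞) → f t x ξ = 0}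

section General
variable {V : Type*} [NormedAddCommGroup V] [NormedSpace ℝ V] [FiniteDimensional ℝ V]
  [MeasurableSpace V] [BorelSpace V] (μ : Measure V) [μ.IsAddHaarMeasure]

theorem vm_ibp {u w : V → ℝ} (hu : ContDiff ℝ 1 u) (hw : ContDiff ℝ 1 w)
    (hc : HasCompactSupport (fun x => u x * w x)) (v : V)
    (hc1 : HasCompactSupport (fun x => fderiv ℝ u x v * w x))
    (hc2 : HasCompactSupport (fun x => u x * fderiv ℝ w x v)) :
    ∫ x, fderiv ℝ u x v * w x ∂μ = - ∫ x, u x * fderiv ℝ w x v ∂μ := by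
  have hu' : Continuous (fun x => fderiv ℝ u x v) :=
    (hu.continuous_fderiv one_ne_zero).clm_apply continuous_const
  have hw' : Continuous (fun x => fderiv ℝ w x v) :=
    (hw.continuous_fderiv one_ne_zero).clm_apply continuous_const
  rw [integral_mul_fderiv_eq_neg_fderiv_mul_of_integrable, neg_neg]
  · exact (hu'.mul hw.continuous).integrable_of_hasCompactSupport hc1
  · exact (hu.continuous.mul hw').integrable_of_hasCompactSupport hc2
  · exact (hu.continuous.mul hw.continuous).integrable_of_hasCompactSupport hc
  · exact fun x _ => (hu.differentiable one_ne_zero) x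
  · exact fun x _ => (hw.differentiable one_ne_zero) x

/-- IBP when the second function has compact support -/
theorem vm_ibp_r {u w : V → ℝ} (hu : ContDiff ℝ 1 u) (hw : ContDiff ℝ 1 w)
    (hc : HasCompactSupport w) (v : V) :
    ∫ x, fderiv ℝ u x v * w x ∂μ = - ∫ x, u x * fderiv ℝ w x v ∂μ :=
  vm_ibp μ hu hw (hc.mul_left (f := u)) v (hc.mul_left (f := fun x => fderiv ℝ u x v))
    ((hc.fderiv_apply (𝕜 := ℝ) v).mul_left (f := u))

theorem vm_time {T : ℝ} (hT : 0 ≤ T) {h ht : ℝ → V → ℝ} {K : Set V} (hK : IsCompact K)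
    (hc : ContinuousOn (Function.uncurry h) (Icc 0 T ×ˢ univ))
    (hct : ContinuousOn (Function.uncurry ht) (Icc 0 T ×ˢ univ))
    (hd : ∀ t ∈ Ioo 0 T, ∀ x, HasDerivAt (fun s => h s x) (ht t x) t)
    (h0 : ∀ t ∈ Icc 0 T, ∀ x, x ∉ K → h t x = 0)
    (ht0 : ∀ t ∈ Icc 0 T, ∀ x, x ∉ K → ht t x = 0) :
    ContinuousOn (fun t => ∫ x, ht t x ∂μ) (Icc 0 T) ∧
    ∫ t in (0:ℝ)..T, ∫ x, ht t x ∂μ = ∫ x, h T x ∂μ - ∫ x, h 0 x ∂μ := by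
  have c1 : ContinuousOn (fun t => ∫ x, h t x ∂μ) (Icc 0 T) :=
    continuousOn_integral_of_compact_support hK hc (fun p x hp hx => h0 p hp x hx)
  have c2 : ContinuousOn (fun t => ∫ x, ht t x ∂μ) (Icc 0 T) :=
    continuousOn_integral_of_compact_support hK hct (fun p x hp hx => ht0 p hp x hx)
  have slice : ∀ {q : ℝ → V → ℝ}, ContinuousOn (Function.uncurry q) (Icc 0 T ×ˢ univ) →
      ∀ t ∈ Icc 0 T, Continuous (q t) := by
    intro q hq t ht
    rw [← continuousOn_univ]
    exact hq.comp (f := fun x => (t, x)) (by fun_prop) (fun x _ => ⟨ht, mem_univ _⟩)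
  refine ⟨c2, ?_⟩
  obtain ⟨C, hC⟩ := (isCompact_Icc.prod hK).exists_bound_of_continuousOn
    (hct.mono (prod_mono_right (subset_univ K)))
  refine intervalIntegral.integral_eq_sub_of_hasDerivAt_of_le hT c1 ?_
    (c2.intervalIntegrable_of_Icc hT)
  intro t htt
  have htI := Ioo_subset_Icc_self htt
  refine (hasDerivAt_integral_of_dominated_loc_of_deriv_le (s := Ioo 0 T)
    (bound := K.indicator (fun _ => C)) (Ioo_mem_nhds htt.1 htt.2) ?_ ?_ ?_ ?_ ?_ ?_).2
  · filter_upwards [Ioo_mem_nhds htt.1 htt.2] with s hs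
    exact (slice hc s (Ioo_subset_Icc_self hs)).aestronglyMeasurable
  · exact (slice hc t htI).integrable_of_hasCompactSupport
      (HasCompactSupport.intro hK (h0 t htI))
  · exact (slice hct t htI).aestronglyMeasurable
  · refine Eventually.of_forall fun x s hs => ?_
    by_cases hx : x ∈ K
    · rw [indicator_of_mem hx]
      exact hC (s, x) ⟨Ioo_subset_Icc_self hs, hx⟩
    · rw [indicator_of_notMem hx, ht0 s (Ioo_subset_Icc_self hs) x hx, norm_zero]
  · exact (integrable_indicator_iff hK.measurableSet).2 (integrableOn_const (hK.measure_lt_top.ne))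
  · exact Eventually.of_forall fun x s hs => hd s hs x

end General

section Joint
variable {V : Type*} [NormedAddCommGroup V] [NormedSpace ℝ V]

/-- joint C¹ functions on `[0,τ)×V` -/
theorem vm_joint {τ : ℝ} {u : ℝ → V → ℝ}
    (hu : ContDiffOn ℝ 1 (fun p : ℝ × V => u p.1 p.2) (Ico 0 τ ×ˢ univ)) :
    ∃ D : ℝ × V → (ℝ × V →L[ℝ] ℝ), ContinuousOn D (Ico 0 τ ×ˢ univ) ∧
      (∀ t ∈ Ioo 0 τ, ∀ x, HasFDerivAt (fun p : ℝ × V => u p.1 p.2) (D (t, x)) (t, x)) ∧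
      (∀ t ∈ Ioo 0 τ, ∀ x, HasDerivAt (fun s => u s x) (D (t, x) (1, 0)) t) ∧
      (∀ t ∈ Ioo 0 τ, ∀ x, ∀ v, fderiv ℝ (u t) x v = D (t, x) (0, v)) ∧
      (∀ t ∈ Ioo 0 τ, ContDiff ℝ 1 (u t)) := by
  have hS : UniqueDiffOn ℝ (Ico 0 τ ×ˢ (univ : Set V)) :=
    UniqueDiffOn.prod (uniqueDiffOn_Ico 0 τ) uniqueDiffOn_univ
  have hnh : ∀ t ∈ Ioo 0 τ, ∀ x : V, Ico 0 τ ×ˢ (univ : Set V) ∈ 𝓝 (t, x) := fun t ht x =>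
    prod_mem_nhds (Ico_mem_nhds ht.1 ht.2) univ_mem
  have hF : ∀ t ∈ Ioo 0 τ, ∀ x, HasFDerivAt (fun p : ℝ × V => u p.1 p.2)
      (fderivWithin ℝ (fun p : ℝ × V => u p.1 p.2) (Ico 0 τ ×ˢ univ) (t, x)) (t, x) := by
    intro t ht x
    have := (hu.differentiableOn one_ne_zero) (t, x) ⟨Ioo_subset_Ico_self ht, mem_univ _⟩
    exact this.hasFDerivWithinAt.hasFDerivAt (hnh t ht x)
  refine ⟨fderivWithin ℝ (fun p : ℝ × V => u p.1 p.2) (Ico 0 τ ×ˢ univ),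
    hu.continuousOn_fderivWithin hS le_rfl, hF, ?_, ?_, ?_⟩
  · intro t ht x
    have h1 : HasDerivAt (fun s : ℝ => (s, x)) ((1 : ℝ), (0 : V)) t :=
      (hasDerivAt_id t).prodMk (hasDerivAt_const t x)
    exact (hF t ht x).comp_hasDerivAt t h1
  · intro t ht x v
    have h1 : HasFDerivAt (fun y : V => (t, y)) (ContinuousLinearMap.inr ℝ ℝ V) x :=
      hasFDerivAt_prodMk_right t x
    have := ((hF t ht x).comp x h1).fderiv
    simp only [Function.comp_def] at this
    change fderiv ℝ (fun y => u t y) x v = _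
    rw [this]; simp
  · intro t ht
    rw [← contDiffOn_univ]
    exact hu.comp (f := fun x => (t, x)) (by fun_prop)
      (fun x _ => ⟨Ioo_subset_Ico_self ht, mem_univ _⟩)

end Joint

theorem cross3_0 (a b : E3) : cross3 a b 0 = a 1 * b 2 - a 2 * b 1 := rfl
theorem cross3_1 (a b : E3) : cross3 a b 1 = a 2 * b 0 - a 0 * b 2 := rfl
theorem cross3_2 (a b : E3) : cross3 a b 2 = a 0 * b 1 - a 1 * b 0 := rfl
theorem curl3_0 (F : E3 → E3) (x : E3) :
    curl3 F x 0 = pd3 (fun y => F y 2) 1 x - pd3 (fun y => F y 1) 2 x := rfl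
theorem curl3_1 (F : E3 → E3) (x : E3) :
    curl3 F x 1 = pd3 (fun y => F y 0) 2 x - pd3 (fun y => F y 2) 0 x := rfl
theorem curl3_2 (F : E3 → E3) (x : E3) :
    curl3 F x 2 = pd3 (fun y => F y 1) 0 x - pd3 (fun y => F y 0) 1 x := rfl

theorem e3_apply (i j : Fin 3) : e3 i j = if j = i then 1 else 0 := by
  simp [e3]

theorem gam_pos (ξ : E3) : 0 < Real.sqrt (1 + ‖ξ‖ ^ 2) := Real.sqrt_pos.2 (by positivity)

theorem vrel_contDiff : ContDiff ℝ ⊤ vrel := by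
  unfold vrel
  have : ContDiff ℝ ⊤ (fun ξ : E3 => Real.sqrt (1 + ‖ξ‖ ^ 2)) :=
    ContDiff.sqrt (contDiff_const.add (contDiff_norm_sq ℝ)) (fun x => by positivity)
  exact (this.inv (fun x => (gam_pos x).ne')).smul contDiff_id

theorem vrel_norm_lt (ξ : E3) : ‖vrel ξ‖ < 1 := by
  unfold vrel
  rw [norm_smul, norm_inv, Real.norm_of_nonneg (gam_pos ξ).le, inv_mul_lt_iff₀ (gam_pos ξ), mul_one]
  exact Real.lt_sqrt_of_sq_lt (by linarith)

theorem vrel_apply (ξ : E3) (j : Fin 3) : vrel ξ j = (Real.sqrt (1 + ‖ξ‖ ^ 2))⁻¹ * ξ j := by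
  simp [vrel]

theorem coord_contDiff {n : WithTop ℕ∞} (j : Fin 3) : ContDiff ℝ n (fun x : E3 => x j) :=
  (EuclideanSpace.proj (𝕜 := ℝ) j).contDiff

theorem coord_hasFDerivAt (j : Fin 3) (x : E3) :
    HasFDerivAt (fun x : E3 => x j) (EuclideanSpace.proj (𝕜 := ℝ) j) x :=
  (EuclideanSpace.proj (𝕜 := ℝ) j).hasFDerivAt

theorem vrel_pd (ξ : E3) (i j : Fin 3) : fderiv ℝ (fun η => vrel η j) ξ (e3 i) =
    (Real.sqrt (1 + ‖ξ‖ ^ 2))⁻¹ * (if j = i then 1 else 0)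
      - ξ i * ξ j * ((Real.sqrt (1 + ‖ξ‖ ^ 2))⁻¹) ^ 3 := by
  have h1 : HasFDerivAt (fun ξ : E3 => 1 + ‖ξ‖ ^ 2) (2 • innerSL ℝ ξ) ξ :=
    ((hasStrictFDerivAt_norm_sq ξ).hasFDerivAt).const_add 1
  have h2 := h1.sqrt (by positivity)
  have h3 : HasFDerivAt (fun y : E3 => (Real.sqrt (1 + ‖y‖ ^ 2))⁻¹) _ ξ :=
    (hasDerivAt_inv (gam_pos ξ).ne').comp_hasFDerivAt ξ h2
  have h4 := h3.fun_mul (coord_hasFDerivAt j ξ)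
  have h5 : (fun η => vrel η j) = fun η : E3 => (Real.sqrt (1 + ‖η‖ ^ 2))⁻¹ * η j := by
    funext η; exact vrel_apply η j
  rw [h5]
  have h6 := h4.fderiv
  rw [h6]
  have hi : ⟪ξ, e3 i⟫ = ξ i := by simp [e3, EuclideanSpace.inner_single_right]
  have := (gam_pos ξ).ne'
  simp [hi, e3_apply]
  field_simp
  ring

/-- the force is divergence free in momentum -/
theorem force_div (e b : E3) (ξ : E3) :
    ∑ i : Fin 3, fderiv ℝ (fun η => (e + cross3 (vrel η) b) i) ξ (e3 i) = 0 := by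
  have hd : ∀ j, HasFDerivAt (fun η => vrel η j) (fderiv ℝ (fun η => vrel η j) ξ) ξ := fun j =>
    (((coord_contDiff (n := 1) j).comp (vrel_contDiff.of_le le_top)).differentiable one_ne_zero ξ).hasFDerivAt
  have h0 := (((hd 1).mul_const (b 2)).fun_sub ((hd 2).mul_const (b 1))).const_add (e 0)
  have h1 := (((hd 2).mul_const (b 0)).fun_sub ((hd 0).mul_const (b 2))).const_add (e 1)
  have h2 := (((hd 0).mul_const (b 1)).fun_sub ((hd 1).mul_const (b 0))).const_add (e 2)
  rw [Fin.sum_univ_three]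
  have e0 := h0.fderiv
  have e1 := h1.fderiv
  have e2 := h2.fderiv
  simp only [PiLp.add_apply, cross3_0, cross3_1, cross3_2]
  rw [e0, e1, e2]
  simp [vrel_pd]
  ring

theorem force_contDiff (e b : E3) (i : Fin 3) :
    ContDiff ℝ ⊤ (fun η => (e + cross3 (vrel η) b) i) := by
  have h : ∀ j, ContDiff ℝ ⊤ (fun η => vrel η j) := fun j =>
    (coord_contDiff j).comp vrel_contDiff
  fin_cases i
  · exact contDiff_const.add (((h 1).mul contDiff_const).sub ((h 2).mul contDiff_const))
  · exact contDiff_const.add (((h 2).mul contDiff_const).sub ((h 0).mul contDiff_const))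
  · exact contDiff_const.add (((h 0).mul contDiff_const).sub ((h 1).mul contDiff_const))

theorem vec_eq_sum (x : E3) : x = ∑ i : Fin 3, x i • e3 i := by
  ext j
  fin_cases j <;> simp [Fin.sum_univ_three, e3_apply]

theorem coord_le (x : E3) (i : Fin 3) : |x i| ≤ ‖x‖ := by
  have := PiLp.norm_apply_le x i
  simpa using this

theorem norm_le_sum (x : E3) : ‖x‖ ≤ |x 0| + |x 1| + |x 2| := by
  conv_lhs => rw [vec_eq_sum x]
  refine (norm_sum_le _ _).trans ?_
  simp [Fin.sum_univ_three, norm_smul, e3]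

theorem cross3_norm (a b : E3) (ha : ‖a‖ ≤ 1) : ‖cross3 a b‖ ≤ ‖b‖ := by
  rw [EuclideanSpace.norm_eq, EuclideanSpace.norm_eq]
  apply Real.sqrt_le_sqrt
  have h := EuclideanSpace.norm_sq_eq a
  have : ‖a‖ ^ 2 ≤ 1 := by nlinarith [norm_nonneg a]
  rw [h] at this
  simp only [Fin.sum_univ_three, Real.norm_eq_abs, sq_abs, cross3_0, cross3_1, cross3_2] at *
  nlinarith [sq_nonneg (a 0 * b 0 + a 1 * b 1 + a 2 * b 2), sq_nonneg (b 0), sq_nonneg (b 1),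
    sq_nonneg (b 2), mul_nonneg (sub_nonneg.2 this) (add_nonneg (add_nonneg (sq_nonneg (b 0)) (sq_nonneg (b 1))) (sq_nonneg (b 2)))]

theorem force_norm (e b ξ : E3) : ‖e + cross3 (vrel ξ) b‖ ≤ ‖e‖ + ‖b‖ :=
  (norm_add_le _ _).trans (by gcongr; exact cross3_norm _ _ (vrel_norm_lt ξ).le)

/-- maximum principle -/
theorem vm_max {τ r M : ℝ} (hM : 0 ≤ M) (f : ℝ → E3 → E3 → ℝ)
    (Fc : ℝ → E3 → E3 → E3)
    (hfreg : ContDiffOn ℝ 1 (fun p : ℝ × E3 × E3 => f p.1 p.2.1 p.2.2)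
      (Set.Ico 0 τ ×ˢ (Set.univ : Set (E3 × E3))))
    (h0 : ∀ x ξ, f 0 x ξ ≤ M)
    (hR : ∀ t ∈ Ico 0 τ, ∀ x ξ, r < ‖ξ‖ → f t x ξ = 0)
    (hV : ∀ t ∈ Ioo 0 τ, ∀ x ξ, fderiv ℝ (fun p : ℝ × E3 × E3 => f p.1 p.2.1 p.2.2) (t, x, ξ)
      (1, vrel ξ, Fc t x ξ) = 0) :
    ∀ t ∈ Ico 0 τ, ∀ x ξ, f t x ξ ≤ M := by
  intro T hT x0 ξ0
  by_cases hξ0 : r < ‖ξ0‖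
  · rw [hR T hT x0 ξ0 hξ0]; exact hM
  push Not at hξ0
  by_contra hcon
  push Not at hcon
  obtain ⟨η, hη, hηT⟩ : ∃ η : ℝ, 0 < η ∧ M < f T x0 ξ0 - η * T := by
    refine ⟨(f T x0 ξ0 - M) / (2 * (T + 1)), by have := hT.1; apply div_pos <;> linarith, ?_⟩
    have hT1 := hT.1
    have : (f T x0 ξ0 - M) / (2 * (T + 1)) * T < f T x0 ξ0 - M := by
      rw [div_mul_eq_mul_div, div_lt_iff₀ (by positivity)]
      nlinarith
    linarith
  set K : Set (ℝ × E3 × E3) := {p | p.1 ∈ Icc 0 T ∧ ‖p.2.1 - x0‖ ≤ T - p.1 ∧ ‖p.2.2‖ ≤ r + 1} with hKdef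
  have hKc : IsCompact K := by
    have : K ⊆ Icc 0 T ×ˢ closedBall x0 T ×ˢ closedBall 0 (r + 1) := by
      rintro ⟨t, x, ξ⟩ ⟨h1, h2, h3⟩
      refine ⟨h1, ?_, ?_⟩
      · simp only [mem_closedBall, dist_eq_norm]; simp at h2 h1; linarith
      · simpa using h3
    refine IsCompact.of_isClosed_subset
      (isCompact_Icc.prod ((isCompact_closedBall _ _).prod (isCompact_closedBall _ _))) ?_ this
    refine IsClosed.and (isClosed_Icc.preimage continuous_fst) (IsClosed.and ?_ ?_)
    · exact isClosed_le (by fun_prop) (by fun_prop)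
    · exact isClosed_le (by fun_prop) (by fun_prop)
  have hKsub : K ⊆ Set.Ico 0 τ ×ˢ (Set.univ : Set (E3 × E3)) := by
    rintro ⟨t, x, ξ⟩ ⟨h1, h2, h3⟩
    exact ⟨⟨h1.1, lt_of_le_of_lt h1.2 hT.2⟩, mem_univ _⟩
  have hmem : (T, x0, ξ0) ∈ K := ⟨⟨hT.1, le_rfl⟩, by simp, by simp; linarith⟩
  obtain ⟨⟨t, x, ξ⟩, hp, hmax⟩ := hKc.exists_isMaxOn ⟨_, hmem⟩
    (f := fun p : ℝ × E3 × E3 => f p.1 p.2.1 p.2.2 - η * p.1)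
    ((hfreg.continuousOn.mono hKsub).sub (by fun_prop))
  have hpv : M < f t x ξ - η * t := lt_of_lt_of_le hηT (hmax hmem)
  obtain ⟨h1, h2, h3⟩ := hp
  simp only at h1 h2 h3
  have ht0 : 0 < t := by
    rcases h1.1.eq_or_lt with h | h
    · rw [← h] at hpv; have := h0 x ξ; simp at hpv; linarith
    · exact h
  have htτ : t < τ := lt_of_le_of_lt h1.2 hT.2
  have hξ : ‖ξ‖ ≤ r := by
    by_contra hc
    push Not at hc
    rw [hR t ⟨ht0.le, htτ⟩ x ξ hc] at hpv
    nlinarith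
  -- derivative along the backward characteristic
  have hd : HasFDerivAt (fun p : ℝ × E3 × E3 => f p.1 p.2.1 p.2.2)
      (fderiv ℝ (fun p : ℝ × E3 × E3 => f p.1 p.2.1 p.2.2) (t, x, ξ)) (t, x, ξ) := by
    have hn : Set.Ico 0 τ ×ˢ (Set.univ : Set (E3 × E3)) ∈ 𝓝 (t, x, ξ) :=
      prod_mem_nhds (Ico_mem_nhds ht0 htτ) univ_mem
    exact ((hfreg.differentiableOn one_ne_zero).differentiableAt hn).hasFDerivAt
  set d : ℝ × E3 × E3 := (1, vrel ξ, Fc t x ξ) with hddef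
  have hline : HasDerivAt (fun h : ℝ => (t, x, ξ) - h • d) (-d) 0 := by
    have := ((hasDerivAt_id (0:ℝ)).smul_const d).const_sub (t, x, ξ)
    simpa using this
  have hd1 : HasFDerivAt (fun p : ℝ × E3 × E3 => f p.1 p.2.1 p.2.2)
      (fderiv ℝ (fun p : ℝ × E3 × E3 => f p.1 p.2.1 p.2.2) (t, x, ξ)) ((t, x, ξ) - (0:ℝ) • d) := by
    simpa using hd
  have hcomp := hd1.comp_hasDerivAt (0:ℝ) hline
  rw [map_neg, hV t ⟨ht0, htτ⟩ x ξ, neg_zero] at hcomp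
  have hl2 : HasDerivAt (fun h : ℝ => η * (t - h)) (-η) 0 := by
    have := ((hasDerivAt_id (0:ℝ)).const_sub t).const_mul η
    simpa using this
  have hw := hcomp.sub hl2
  -- eventually in K
  have hev : ∀ᶠ h in 𝓝[>] (0:ℝ), (t, x, ξ) - h • d ∈ K := by
    have c1 : Continuous (fun h : ℝ => t - h) := by fun_prop
    have c2 : Continuous (fun h : ℝ => ‖ξ - h • Fc t x ξ‖) := by fun_prop
    have e1 : ∀ᶠ h in 𝓝 (0:ℝ), 0 < t - h := c1.continuousAt.eventually_const_lt (by simpa using ht0)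
    have e2 : ∀ᶠ h in 𝓝 (0:ℝ), ‖ξ - h • Fc t x ξ‖ < r + 1 :=
      c2.continuousAt.eventually_lt_const (by simp; linarith)
    filter_upwards [e1.filter_mono nhdsWithin_le_nhds, e2.filter_mono nhdsWithin_le_nhds,
      self_mem_nhdsWithin] with h a1 a2 a3
    have a3' : 0 < h := a3
    refine ⟨⟨?_, ?_⟩, ?_, ?_⟩
    · simpa [hddef] using a1.le
    · simp [hddef]; linarith [h1.2]
    · simp only [hddef, Prod.smul_mk, Prod.mk_sub_mk, smul_eq_mul, mul_one]
      calc ‖x - h • vrel ξ - x0‖ = ‖(x - x0) - h • vrel ξ‖ := by congr 1; abel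
        _ ≤ ‖x - x0‖ + ‖h • vrel ξ‖ := norm_sub_le _ _
        _ ≤ (T - t) + h * 1 := by
          rw [norm_smul, Real.norm_of_nonneg a3'.le]
          gcongr
          exact (vrel_norm_lt ξ).le
        _ = T - (t - h) := by ring
    · simpa [hddef] using a2.le
  have hle : ∀ᶠ h in 𝓝[>] (0:ℝ), (f (t - h) (x - h • vrel ξ) (ξ - h • Fc t x ξ) - η * (t - h))
      ≤ f t x ξ - η * t := by
    filter_upwards [hev] with h hh
    have := hmax hh
    simpa [hddef] using this
  have hslope := hw.hasDerivWithinAt (s := Ioi 0)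
  rw [hasDerivWithinAt_iff_tendsto_slope' (by simp)] at hslope
  have : (0 - -η : ℝ) ≤ 0 := by
    refine le_of_tendsto hslope ?_
    filter_upwards [hle, self_mem_nhdsWithin] with h hh h0
    have h0' : 0 < h := h0
    simp only [slope, vsub_eq_sub, smul_eq_mul, sub_zero, Pi.sub_apply, Function.comp, zero_smul]
    apply mul_nonpos_of_nonneg_of_nonpos (by positivity)
    simp [hddef]
    linarith
  linarith

def rho (ε : ℝ) (x1 x : E3) : ℝ := Real.sqrt (ε ^ 2 + ‖x - x1‖ ^ 2)

def Kr (ε T : ℝ) (x1 : E3) (g : ℝ → ℝ) (t : ℝ) (x : E3) : ℝ :=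
  g (T - t - rho ε x1 x) * (rho ε x1 x)⁻¹

def Kd (ε T : ℝ) (x1 : E3) (g g1 : ℝ → ℝ) (t : ℝ) (x : E3) : ℝ :=
  -(g1 (T - t - rho ε x1 x) * (rho ε x1 x)⁻¹ ^ 2 + g (T - t - rho ε x1 x) * (rho ε x1 x)⁻¹ ^ 3)

def Kb (ε T : ℝ) (x1 : E3) (g g1 g2 : ℝ → ℝ) (t : ℝ) (x : E3) : ℝ :=
  g2 (T - t - rho ε x1 x) * (rho ε x1 x)⁻¹ ^ 3 + 3 * g1 (T - t - rho ε x1 x) * (rho ε x1 x)⁻¹ ^ 4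
    + 3 * g (T - t - rho ε x1 x) * (rho ε x1 x)⁻¹ ^ 5

section Kernel
variable {ε T : ℝ}

theorem rho_pos (hε : 0 < ε) (x1 : E3) (x : E3) : 0 < rho ε x1 x := Real.sqrt_pos.2 (by positivity)

theorem rho_sq (x1 : E3) (x : E3) : rho ε x1 x ^ 2 = ε ^ 2 + ‖x - x1‖ ^ 2 := Real.sq_sqrt (by positivity)

theorem norm_le_rho (x1 : E3) (x : E3) : ‖x - x1‖ ≤ rho ε x1 x :=
  Real.le_sqrt_of_sq_le (by nlinarith [sq_nonneg ε])

theorem norm_lt_rho (hε : 0 < ε) (x1 : E3) (x : E3) : ‖x - x1‖ < rho ε x1 x :=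
  Real.lt_sqrt_of_sq_lt (by nlinarith [pow_pos hε 2])

theorem rho_contDiff (hε : 0 < ε) (x1 : E3) {n : WithTop ℕ∞} : ContDiff ℝ n (rho ε x1) :=
  ContDiff.sqrt (contDiff_const.add ((contDiff_norm_sq ℝ).comp (contDiff_id.sub contDiff_const)))
    (fun x => by positivity)

theorem rho_hasFDerivAt (hε : 0 < ε) (x1 : E3) (x : E3) :
    HasFDerivAt (rho ε x1) ((rho ε x1 x)⁻¹ • innerSL ℝ (x - x1)) x := by
  have h0 : HasFDerivAt (fun x : E3 => x - x1) (ContinuousLinearMap.id ℝ E3) x :=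
    (hasFDerivAt_id x).sub_const x1
  have h1 : HasFDerivAt (fun x : E3 => ε ^ 2 + ‖x - x1‖ ^ 2)
      ((2 • innerSL ℝ (x - x1)).comp (ContinuousLinearMap.id ℝ E3)) x :=
    (HasFDerivAt.comp x ((hasStrictFDerivAt_norm_sq (x - x1)).hasFDerivAt) h0).const_add _
  have h2 := h1.sqrt (by positivity)
  refine h2.congr_fderiv ?_
  have := (rho_pos hε x1 x).ne'
  ext v
  simp only [rho] at *
  simp
  field_simp

theorem rhoinv_hasFDerivAt (hε : 0 < ε) (x1 : E3) (x : E3) (n : ℕ) :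
    HasFDerivAt (fun y => (rho ε x1 y)⁻¹ ^ n)
      ((-(n * (rho ε x1 x)⁻¹ ^ (n + 2))) • innerSL ℝ (x - x1)) x := by
  have hp := (rho_pos hε x1 x).ne'
  have h : HasDerivAt (fun s : ℝ => s⁻¹ ^ n) (-(n * (rho ε x1 x)⁻¹ ^ (n + 1))) (rho ε x1 x) := by
    have := (hasDerivAt_inv hp).pow n
    refine this.congr_deriv ?_
    rcases n with _ | n
    · simp
    · simp; field_simp; ring
  refine (h.comp_hasFDerivAt x (rho_hasFDerivAt hε x1 x)).congr_fderiv ?_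
  ext v
  simp
  ring

theorem gcomp_hasFDerivAt (hε : 0 < ε) (x1 : E3) {g g1 : ℝ → ℝ} (hg : ∀ s, HasDerivAt g (g1 s) s) (t : ℝ) (x : E3) :
    HasFDerivAt (fun y => g (T - t - rho ε x1 y))
      ((-(g1 (T - t - rho ε x1 x) * (rho ε x1 x)⁻¹)) • innerSL ℝ (x - x1)) x := by
  refine ((hg _).comp_hasFDerivAt x ((rho_hasFDerivAt hε x1 x).const_sub (T - t))).congr_fderiv ?_
  ext v
  simp
  ring

theorem Kr_hasFDerivAt (hε : 0 < ε) (x1 : E3) {g g1 : ℝ → ℝ} (hg : ∀ s, HasDerivAt g (g1 s) s) (t : ℝ) (x : E3) :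
    HasFDerivAt (Kr ε T x1 g t) (Kd ε T x1 g g1 t x • innerSL ℝ (x - x1)) x := by
  have h1 : HasFDerivAt (fun y => (rho ε x1 y)⁻¹) ((-((rho ε x1 x)⁻¹ ^ 3)) • innerSL ℝ (x - x1)) x := by
    simpa using rhoinv_hasFDerivAt hε x1 x 1
  refine ((gcomp_hasFDerivAt (T := T) hε x1 hg t x).fun_mul h1).congr_fderiv ?_
  ext v
  simp [Kd]
  ring

theorem Kd_hasFDerivAt (hε : 0 < ε) (x1 : E3) {g g1 g2 : ℝ → ℝ} (hg : ∀ s, HasDerivAt g (g1 s) s)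
    (hg1 : ∀ s, HasDerivAt g1 (g2 s) s) (t : ℝ) (x : E3) :
    HasFDerivAt (Kd ε T x1 g g1 t) (Kb ε T x1 g g1 g2 t x • innerSL ℝ (x - x1)) x := by
  have h2 := (gcomp_hasFDerivAt (T := T) hε x1 hg1 t x).fun_mul (rhoinv_hasFDerivAt hε x1 x 2)
  have h3 := (gcomp_hasFDerivAt (T := T) hε x1 hg t x).fun_mul (rhoinv_hasFDerivAt hε x1 x 3)
  refine (h2.fun_add h3).fun_neg.congr_fderiv ?_
  ext v
  simp [Kb]
  ring

theorem inner_e3 (z : E3) (k : Fin 3) : ⟪z, e3 k⟫ = z k := by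
  simp [e3, EuclideanSpace.inner_single_right]

theorem Kr_fderiv (hε : 0 < ε) (x1 : E3) {g g1 : ℝ → ℝ} (hg : ∀ s, HasDerivAt g (g1 s) s) (t : ℝ) (x : E3) (k : Fin 3) :
    fderiv ℝ (Kr ε T x1 g t) x (e3 k) = Kd ε T x1 g g1 t x * (x - x1) k := by
  rw [(Kr_hasFDerivAt hε x1 hg t x).fderiv]
  simp [inner_e3]

theorem Kdz_fderiv (hε : 0 < ε) (x1 : E3) {g g1 g2 : ℝ → ℝ} (hg : ∀ s, HasDerivAt g (g1 s) s)
    (hg1 : ∀ s, HasDerivAt g1 (g2 s) s) (t : ℝ) (x : E3) (j k : Fin 3) :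
    fderiv ℝ (fun y => Kd ε T x1 g g1 t y * (y - x1) j) x (e3 k) =
      Kb ε T x1 g g1 g2 t x * (x - x1) j * (x - x1) k
        + Kd ε T x1 g g1 t x * (if j = k then 1 else 0) := by
  have h : HasFDerivAt (fun y : E3 => (y - x1) j) (EuclideanSpace.proj (𝕜 := ℝ) j) x := by
    simpa using (coord_hasFDerivAt j x).sub_const (x1 j)
  rw [((Kd_hasFDerivAt hε x1 hg hg1 t x).fun_mul h).fderiv]
  have hh : (EuclideanSpace.proj (𝕜 := ℝ) j) (e3 k) = if j = k then 1 else 0 := e3_apply k j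
  simp only [add_apply, smul_apply, smul_eq_mul, innerSL_apply_apply, inner_e3, hh]
  ring

theorem box_eq (hε : 0 < ε) (x1 : E3) {g g1 g2 : ℝ → ℝ} (t : ℝ) (x : E3) :
    ∑ k : Fin 3, (Kb ε T x1 g g1 g2 t x * (x - x1) k * (x - x1) k + Kd ε T x1 g g1 t x * 1)
      = Kr ε T x1 g2 t x - ε ^ 2 * Kb ε T x1 g g1 g2 t x := by
  have h1 : (x - x1) 0 * (x - x1) 0 + (x - x1) 1 * (x - x1) 1 + (x - x1) 2 * (x - x1) 2
      = rho ε x1 x ^ 2 - ε ^ 2 := by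
    rw [rho_sq, EuclideanSpace.norm_sq_eq]
    simp [Fin.sum_univ_three]; ring
  have hp := (rho_pos hε x1 x).ne'
  have : ∑ k : Fin 3, (Kb ε T x1 g g1 g2 t x * (x - x1) k * (x - x1) k + Kd ε T x1 g g1 t x * 1)
     = Kb ε T x1 g g1 g2 t x * ((x - x1) 0 * (x - x1) 0 + (x - x1) 1 * (x - x1) 1 + (x - x1) 2 * (x - x1) 2) + 3 * Kd ε T x1 g g1 t x := by
    rw [Fin.sum_univ_three]; ring
  rw [this, h1]
  simp only [Kb, Kd, Kr]
  field_simp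
  ring

theorem Kr_dt (x1 : E3) {g g1 : ℝ → ℝ} (hg : ∀ s, HasDerivAt g (g1 s) s) (t : ℝ) (x : E3) :
    HasDerivAt (fun s => Kr ε T x1 g s x) (-Kr ε T x1 g1 t x) t := by
  have h1 : HasDerivAt (fun s : ℝ => T - s - rho ε x1 x) (-1) t := by
    simpa using ((hasDerivAt_id t).const_sub T).sub_const (rho ε x1 x)
  refine (((hg _).comp t h1).mul_const _).congr_deriv ?_
  simp [Kr]

theorem Kd_dt (x1 : E3) {g g1 g2 : ℝ → ℝ} (hg : ∀ s, HasDerivAt g (g1 s) s)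
    (hg1 : ∀ s, HasDerivAt g1 (g2 s) s) (t : ℝ) (x : E3) :
    HasDerivAt (fun s => Kd ε T x1 g g1 s x) (-Kd ε T x1 g1 g2 t x) t := by
  have h1 : HasDerivAt (fun s : ℝ => T - s - rho ε x1 x) (-1) t := by
    simpa using ((hasDerivAt_id t).const_sub T).sub_const (rho ε x1 x)
  refine ((((hg1 _).comp t h1).mul_const _).fun_add (((hg _).comp t h1).mul_const _)).fun_neg.congr_deriv ?_
  simp [Kd]; ring

theorem sig_contDiff (hε : 0 < ε) (x1 : E3) {n : WithTop ℕ∞} {g : ℝ → ℝ} (hg : ContDiff ℝ n g) :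
    ContDiff ℝ n (fun p : ℝ × E3 => g (T - p.1 - rho ε x1 p.2)) :=
  hg.comp ((contDiff_const.sub contDiff_fst).sub ((rho_contDiff hε x1).comp contDiff_snd))

theorem rhoinv_contDiff (hε : 0 < ε) (x1 : E3) {n : WithTop ℕ∞} :
    ContDiff ℝ n (fun p : ℝ × E3 => (rho ε x1 p.2)⁻¹) :=
  ((rho_contDiff hε x1).comp contDiff_snd).inv (fun p => (rho_pos hε x1 p.2).ne')

theorem Kr_contDiff (hε : 0 < ε) (x1 : E3) {n : WithTop ℕ∞} {g : ℝ → ℝ} (hg : ContDiff ℝ n g) :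
    ContDiff ℝ n (fun p : ℝ × E3 => Kr ε T x1 g p.1 p.2) :=
  (sig_contDiff hε x1 hg).mul (rhoinv_contDiff hε x1)

theorem Kd_contDiff (hε : 0 < ε) (x1 : E3) {n : WithTop ℕ∞} {g g1 : ℝ → ℝ} (hg : ContDiff ℝ n g) (hg1 : ContDiff ℝ n g1) :
    ContDiff ℝ n (fun p : ℝ × E3 => Kd ε T x1 g g1 p.1 p.2) :=
  (((sig_contDiff hε x1 hg1).mul ((rhoinv_contDiff hε x1).pow 2)).add
    ((sig_contDiff hε x1 hg).mul ((rhoinv_contDiff hε x1).pow 3))).neg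

theorem Kb_continuous (hε : 0 < ε) (x1 : E3) {g g1 g2 : ℝ → ℝ} (hg : Continuous g) (hg1 : Continuous g1)
    (hg2 : Continuous g2) :
    Continuous (fun p : ℝ × E3 => Kb ε T x1 g g1 g2 p.1 p.2) := by
  have h := (rhoinv_contDiff hε x1 (n := 0)).continuous
  have s := fun {g : ℝ → ℝ} (hg : Continuous g) =>
    (sig_contDiff (T := T) hε x1 (contDiff_zero.2 hg)).continuous
  exact ((((s hg2).mul (h.pow 3)).add (((continuous_const.mul (s hg1))).mul (h.pow 4))).add
    ((continuous_const.mul (s hg)).mul (h.pow 5)))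

theorem sig_zero (x1 : E3) {g : ℝ → ℝ} (hg : ∀ s ≤ 0, g s = 0) {t : ℝ} {x : E3} (h : T - t ≤ ‖x - x1‖) :
    g (T - t - rho ε x1 x) = 0 := hg _ (by have := norm_le_rho (ε := ε) x1 x; linarith)

theorem Kr_zero (x1 : E3) {g : ℝ → ℝ} (hg : ∀ s ≤ 0, g s = 0) {t : ℝ} {x : E3} (h : T - t ≤ ‖x - x1‖) :
    Kr ε T x1 g t x = 0 := by rw [Kr, sig_zero x1 hg h, zero_mul]

theorem Kd_zero (x1 : E3) {g g1 : ℝ → ℝ} (hg : ∀ s ≤ 0, g s = 0) (hg1 : ∀ s ≤ 0, g1 s = 0)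
    {t : ℝ} {x : E3} (h : T - t ≤ ‖x - x1‖) :
    Kd ε T x1 g g1 t x = 0 := by rw [Kd, sig_zero x1 hg h, sig_zero x1 hg1 h]; simp

theorem Kb_zero (x1 : E3) {g g1 g2 : ℝ → ℝ} (hg : ∀ s ≤ 0, g s = 0) (hg1 : ∀ s ≤ 0, g1 s = 0)
    (hg2 : ∀ s ≤ 0, g2 s = 0) {t : ℝ} {x : E3} (h : T - t ≤ ‖x - x1‖) :
    Kb ε T x1 g g1 g2 t x = 0 := by
  rw [Kb, sig_zero x1 hg h, sig_zero x1 hg1 h, sig_zero x1 hg2 h]; simp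

end Kernel

theorem int_add_zero {X : Type*} [MeasurableSpace X] {μ : Measure X} {L R c : X → ℝ}
    (hc : Integrable c μ) (h0 : ∫ x, c x ∂μ = 0) (h : ∀ x, L x = R x + c x) :
    ∫ x, L x ∂μ = ∫ x, R x ∂μ := by
  have hL : L = fun x => R x + c x := funext h
  by_cases hR : Integrable R μ
  · rw [hL, integral_add hR hc, h0, add_zero]
  · rw [integral_undef hR, integral_undef]
    intro hLi
    apply hR
    have : R = fun x => L x - c x := by funext x; rw [h]; ring
    rw [this]; exact hLi.sub hc

theorem vm_td {u w : E3 → ℝ} (hu : ContDiff ℝ 1 u) (hw : ContDiff ℝ 1 w)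
    (hc : HasCompactSupport w) (k : Fin 3) :
    Integrable (fun x => pd3 u k x * w x + u x * pd3 w k x) ∧
    ∫ x, (pd3 u k x * w x + u x * pd3 w k x) = 0 := by
  have c1 : Continuous (fun x => pd3 u k x) := (hu.continuous_fderiv one_ne_zero).clm_apply continuous_const
  have c2 : Continuous (fun x => pd3 w k x) := (hw.continuous_fderiv one_ne_zero).clm_apply continuous_const
  have s2 : HasCompactSupport (fun x => pd3 w k x) := hc.fderiv_apply ℝ _
  have i1 : Integrable (fun x => pd3 u k x * w x) :=
    (c1.mul hw.continuous).integrable_of_hasCompactSupport hc.mul_left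
  have i2 : Integrable (fun x => u x * pd3 w k x) :=
    (hu.continuous.mul c2).integrable_of_hasCompactSupport s2.mul_left
  refine ⟨i1.add i2, ?_⟩
  rw [integral_add i1 i2]
  have := vm_ibp_r volume hu hw hc (e3 k)
  simp only [pd3]
  rw [this]; ring

theorem vm_maxwell_slice {Ea Eb Ec Bb Bc φ Pa Pb Pc dEa dBb dBc φ' J R Sb Sc : E3 → ℝ}
    {a b c : Fin 3}
    (hEa : ContDiff ℝ 1 Ea) (hEb : ContDiff ℝ 1 Eb) (hEc : ContDiff ℝ 1 Ec)
    (hBb : ContDiff ℝ 1 Bb) (hBc : ContDiff ℝ 1 Bc)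
    (hφ : ContDiff ℝ 1 φ) (hPa : ContDiff ℝ 1 Pa) (hPb : ContDiff ℝ 1 Pb) (hPc : ContDiff ℝ 1 Pc)
    (cφ : HasCompactSupport φ) (cPa : HasCompactSupport Pa) (cPb : HasCompactSupport Pb)
    (cPc : HasCompactSupport Pc)
    (sab : ∀ x, pd3 Pb a x = pd3 Pa b x) (sac : ∀ x, pd3 Pc a x = pd3 Pa c x)
    (h1 : ∀ x, dEa x = pd3 Bc b x - pd3 Bb c x - J x)
    (h2 : ∀ x, dBb x = -(pd3 Ea c x - pd3 Ec a x) + Sc x)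
    (h3 : ∀ x, dBc x = -(pd3 Eb a x - pd3 Ea b x) - Sb x)
    (h4 : ∀ x, pd3 Ea a x + pd3 Eb b x + pd3 Ec c x = R x) :
    ∫ x, (dEa x * φ x + Ea x * φ' x + (dBc x * Pb x + Bc x * pd3 φ b x)
        - (dBb x * Pc x + Bb x * pd3 φ c x))
      = ∫ x, (Ea x * (φ' x - (pd3 Pa a x + pd3 Pb b x + pd3 Pc c x))
          - (J x * φ x + R x * Pa x + Sb x * Pb x + Sc x * Pc x)) := by
  have t1 := vm_td hBc hφ cφ b
  have t2 := vm_td hBb hφ cφ c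
  have t3 := vm_td hEa hPa cPa a
  have t4 := vm_td hEa hPb cPb b
  have t5 := vm_td hEa hPc cPc c
  have t6 := vm_td hEb hPb cPb a
  have t7 := vm_td hEb hPa cPa b
  have t8 := vm_td hEc hPc cPc a
  have t9 := vm_td hEc hPa cPa c
  have key := ((((((t1.1.sub t2.1).add t3.1).add t4.1).add t5.1).sub t6.1).add t7.1).sub t8.1 |>.add t9.1
  refine int_add_zero key ?_ ?_
  · rw [integral_add' _ t9.1, integral_sub' _ t8.1, integral_add' _ t7.1, integral_sub' _ t6.1,
      integral_add' _ t5.1, integral_add' _ t4.1, integral_add' _ t3.1, integral_sub' t1.1 t2.1,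
      t1.2, t2.2, t3.2, t4.2, t5.2, t6.2, t7.2, t8.2, t9.2]
    · simp
    · exact t1.1.sub t2.1
    · exact (t1.1.sub t2.1).add t3.1
    · exact ((t1.1.sub t2.1).add t3.1).add t4.1
    · exact (((t1.1.sub t2.1).add t3.1).add t4.1).add t5.1
    · exact ((((t1.1.sub t2.1).add t3.1).add t4.1).add t5.1).sub t6.1
    · exact (((((t1.1.sub t2.1).add t3.1).add t4.1).add t5.1).sub t6.1).add t7.1
    · exact ((((((t1.1.sub t2.1).add t3.1).add t4.1).add t5.1).sub t6.1).add t7.1).sub t8.1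
  · intro x
    simp only [Pi.add_apply, Pi.sub_apply]
    rw [h1, h2, h3, ← h4, sab, sac]
    ring

/-- double integration by parts for the initial field -/
theorem vm_lap {u Φ : E3 → ℝ} {P : Fin 3 → E3 → ℝ} (hu : ContDiff ℝ 2 u) (hΦ : ContDiff ℝ 1 Φ)
    (hP : ∀ k, ContDiff ℝ 1 (P k)) (cΦ : HasCompactSupport Φ) (cP : ∀ k, HasCompactSupport (P k))
    (hd : ∀ k x, pd3 Φ k x = P k x) :
    ∫ x, u x * ∑ k, pd3 (P k) k x = ∫ x, (∑ k, pd3 (pd3 u k) k x) * Φ x := by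
  have hu1 : ContDiff ℝ 1 u := hu.of_le (by norm_num)
  have hdu : ∀ k, ContDiff ℝ 1 (pd3 u k) := fun k =>
    (hu.fderiv_right (m := 1) (by norm_num)).clm_apply contDiff_const
  have t1 := fun k => vm_td hu1 (hP k) (cP k) k
  have t2 := fun k => vm_td (hdu k) hΦ cΦ k
  have key : Integrable (fun x => ∑ k : Fin 3, ((pd3 u k x * P k x + u x * pd3 (P k) k x)
      - (pd3 (pd3 u k) k x * Φ x + pd3 u k x * pd3 Φ k x))) :=
    integrable_finsetSum _ (fun k _ => (t1 k).1.sub (t2 k).1)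
  refine int_add_zero key ?_ ?_
  · refine (integral_finsetSum _ (fun k _ => (t1 k).1.sub (t2 k).1)).trans ?_
    refine Finset.sum_eq_zero (fun k _ => ?_)
    rw [integral_sub' (t1 k).1 (t2 k).1, (t1 k).2, (t2 k).2, sub_zero]
  · intro x
    simp only [hd, Finset.mul_sum, Finset.sum_mul, ← Finset.sum_add_distrib]
    refine Finset.sum_congr rfl (fun k _ => by ring)

theorem cs_prod {x1 : E3} {T r : ℝ} {h : E3 × E3 → ℝ}
    (h1 : ∀ x ξ, T ≤ ‖x - x1‖ → h (x, ξ) = 0) (h2 : ∀ x ξ, r < ‖ξ‖ → h (x, ξ) = 0) :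
    HasCompactSupport h := by
  refine HasCompactSupport.intro ((isCompact_closedBall x1 T).prod (isCompact_closedBall (0 : E3) r)) ?_
  rintro ⟨x, ξ⟩ hp
  by_cases hx : T ≤ ‖x - x1‖
  · exact h1 _ _ hx
  · apply h2
    by_contra hh
    apply hp
    refine ⟨?_, ?_⟩
    · rw [mem_closedBall, dist_eq_norm]; exact (not_le.1 hx).le
    · rw [mem_closedBall, dist_zero_right]; exact not_lt.1 hh

theorem fderiv_zero_of_xi {u : E3 × E3 → ℝ} {r : ℝ} (h : ∀ x ξ, r < ‖ξ‖ → u (x, ξ) = 0)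
    (x ξ : E3) (hξ : r < ‖ξ‖) : fderiv ℝ u (x, ξ) = 0 := by
  have : u =ᶠ[𝓝 (x, ξ)] fun _ => 0 := by
    have ho : IsOpen {p : E3 × E3 | r < ‖p.2‖} := isOpen_lt continuous_const (continuous_norm.comp continuous_snd)
    filter_upwards [ho.mem_nhds (show (x, ξ) ∈ {p : E3 × E3 | r < ‖p.2‖} from hξ)] with p hp
    exact h p.1 p.2 hp
  rw [this.fderiv_eq]; simp

/-- derivative vanishes also where a function vanishes on `T ≤ ‖x-x1‖`, up to enlarging -/
theorem fderiv_zero_of_x {u : E3 × E3 → ℝ} {x1 : E3} {T : ℝ} (h : ∀ x ξ, T ≤ ‖x - x1‖ → u (x, ξ) = 0)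
    (x ξ : E3) (hx : T + 1 ≤ ‖x - x1‖) : fderiv ℝ u (x, ξ) = 0 := by
  have : u =ᶠ[𝓝 (x, ξ)] fun _ => 0 := by
    have ho : IsOpen {p : E3 × E3 | T < ‖p.1 - x1‖} :=
      isOpen_lt continuous_const (continuous_norm.comp (continuous_fst.sub continuous_const))
    filter_upwards [ho.mem_nhds (show (x, ξ) ∈ {p : E3 × E3 | T < ‖p.1 - x1‖} by
      show T < ‖x - x1‖; linarith)] with p hp
    exact h p.1 p.2 (le_of_lt hp)
  rw [this.fderiv_eq]; simp

theorem td2 {u c Ψ : E3 × E3 → ℝ} {x1 : E3} {T r : ℝ} (hu : ContDiff ℝ 1 u) (hc : ContDiff ℝ 1 c)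
    (hΨ : ContDiff ℝ 1 Ψ)
    (h1 : ∀ x ξ, T ≤ ‖x - x1‖ → Ψ (x, ξ) = 0) (h2 : ∀ x ξ, r < ‖ξ‖ → u (x, ξ) = 0) (d : E3 × E3) :
    Integrable (fun p => fderiv ℝ u p d * (c p * Ψ p)
      + u p * (fderiv ℝ c p d * Ψ p + c p * fderiv ℝ Ψ p d)) ∧
    ∫ p, (fderiv ℝ u p d * (c p * Ψ p)
      + u p * (fderiv ℝ c p d * Ψ p + c p * fderiv ℝ Ψ p d)) = 0 := by
  have hw : ContDiff ℝ 1 (fun p => c p * Ψ p) := hc.mul hΨ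
  have hd : ∀ p, fderiv ℝ (fun p => c p * Ψ p) p d = fderiv ℝ c p d * Ψ p + c p * fderiv ℝ Ψ p d := by
    intro p
    rw [fderiv_fun_mul (hc.differentiable one_ne_zero p) (hΨ.differentiable one_ne_zero p)]
    simp; ring
  have hw1 : ∀ x ξ, T ≤ ‖x - x1‖ → c (x, ξ) * Ψ (x, ξ) = 0 := fun x ξ h => by rw [h1 x ξ h, mul_zero]
  have s0 : HasCompactSupport (fun p => u p * (c p * Ψ p)) :=
    cs_prod (x1 := x1) (T := T) (r := r) (fun x ξ h => by rw [h1 x ξ h]; simp) (fun x ξ h => by rw [h2 x ξ h]; simp)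
  have s1 : HasCompactSupport (fun p => fderiv ℝ u p d * (c p * Ψ p)) :=
    cs_prod (x1 := x1) (T := T) (r := r) (fun x ξ h => by rw [h1 x ξ h]; simp)
      (fun x ξ h => by rw [fderiv_zero_of_xi h2 x ξ h]; simp)
  have s2 : HasCompactSupport (fun p => u p * fderiv ℝ (fun p => c p * Ψ p) p d) :=
    cs_prod (x1 := x1) (T := T + 1) (r := r)
      (fun x ξ h => by rw [fderiv_zero_of_x (u := fun p => c p * Ψ p) hw1 x ξ h]; simp)
      (fun x ξ h => by rw [h2 x ξ h]; simp)
  have i1 : Integrable (fun p => fderiv ℝ u p d * (c p * Ψ p)) :=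
    (((hu.continuous_fderiv one_ne_zero).clm_apply continuous_const).mul hw.continuous).integrable_of_hasCompactSupport s1
  have i2 : Integrable (fun p => u p * fderiv ℝ (fun p => c p * Ψ p) p d) :=
    (hu.continuous.mul ((hw.continuous_fderiv one_ne_zero).clm_apply continuous_const)).integrable_of_hasCompactSupport s2
  haveI : (volume : Measure (E3 × E3)).IsAddHaarMeasure := by
    rw [Measure.volume_eq_prod]; infer_instance
  have := vm_ibp volume hu hw s0 d s1 s2
  simp only [hd] at i2 this
  refine ⟨i1.add i2, ?_⟩
  rw [integral_add i1 i2, this]; ring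

theorem vlasov_slice {u Ψ Ψt du : E3 × E3 → ℝ} {Fc : E3 × E3 → E3} {x1 : E3} {T r : ℝ}
    (hu : ContDiff ℝ 1 u) (hΨ : ContDiff ℝ 1 Ψ) (hF : ∀ i, ContDiff ℝ 1 (fun p => Fc p i))
    (hdiv : ∀ p, ∑ i, fderiv ℝ (fun p => Fc p i) p (0, e3 i) = 0)
    (h1 : ∀ x ξ, T ≤ ‖x - x1‖ → Ψ (x, ξ) = 0) (h2 : ∀ x ξ, r < ‖ξ‖ → u (x, ξ) = 0)
    (hdu : ∀ p, du p = - fderiv ℝ u p (vrel p.2, Fc p)) :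
    ∫ p, (du p * Ψ p + u p * Ψt p) =
      ∫ p, u p * (Ψt p + fderiv ℝ Ψ p (vrel p.2, Fc p)) := by
  have hv : ∀ i, ContDiff ℝ 1 (fun p : E3 × E3 => vrel p.2 i) := fun i =>
    ((coord_contDiff i).comp ((vrel_contDiff.of_le le_top).comp contDiff_snd))
  have t1 := fun i => td2 hu (hv i) hΨ h1 h2 (e3 i, 0)
  have t2 := fun i => td2 hu (hF i) hΨ h1 h2 (0, e3 i)
  have hdec : ∀ (L : E3 × E3 →L[ℝ] ℝ) (a b : E3), L (a, b) = ∑ i, (a i * L (e3 i, 0) + b i * L (0, e3 i)) := by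
    intro L a b
    have ha := vec_eq_sum a
    have hb := vec_eq_sum b
    have e1 : (a, b) = ((a, 0) : E3 × E3) + (0, b) := by simp
    have e2 : L (a, 0) = ∑ i, a i * L (e3 i, 0) := by
      have := congrArg (L.comp (ContinuousLinearMap.inl ℝ E3 E3)) ha
      simp only [map_sum, map_smul] at this
      exact this
    have e3' : L (0, b) = ∑ i, b i * L (0, e3 i) := by
      have := congrArg (L.comp (ContinuousLinearMap.inr ℝ E3 E3)) hb
      simp only [map_sum, map_smul] at this
      exact this
    rw [e1, map_add, e2, e3', Finset.sum_add_distrib]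
  have hv0 : ∀ i p, fderiv ℝ (fun p : E3 × E3 => vrel p.2 i) p (e3 i, 0) = 0 := by
    intro i p
    have hh : HasFDerivAt (fun p : E3 × E3 => vrel p.2 i)
      ((fderiv ℝ (fun ξ : E3 => vrel ξ i) p.2).comp (ContinuousLinearMap.snd ℝ E3 E3)) p := by
      have : DifferentiableAt ℝ (fun ξ : E3 => vrel ξ i) p.2 :=
        ((coord_contDiff i).comp (vrel_contDiff.of_le le_top : ContDiff ℝ 1 vrel)).differentiable one_ne_zero _
      exact this.hasFDerivAt.comp p hasFDerivAt_snd
    rw [hh.fderiv]; simp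
  symm
  have key := integrable_finsetSum Finset.univ (fun i (_ : i ∈ Finset.univ) => (t1 i).1.add (t2 i).1)
  refine int_add_zero key ?_ ?_
  · refine (integral_finsetSum _ (fun i _ => (t1 i).1.add (t2 i).1)).trans ?_
    refine Finset.sum_eq_zero (fun i _ => ?_)
    rw [integral_add' (t1 i).1 (t2 i).1, (t1 i).2, (t2 i).2, add_zero]
  · intro p
    simp only [Pi.add_apply]
    rw [hdu, hdec, hdec (fderiv ℝ u p)]
    have := hdiv p
    simp only [hv0]
    rw [Fin.sum_univ_three] at *
    rw [Fin.sum_univ_three, Fin.sum_univ_three]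
    linear_combination (-u p * Ψ p) * this

def om (ε : ℝ) (x1 x : E3) : E3 := (rho ε x1 x)⁻¹ • (x - x1)

def Aq (α : E3 → ℝ) (β : E3 → E3) (q : E3 × E3) : ℝ :=
  (α q.2 + ⟪β q.2, q.1⟫) / (1 + ⟪vrel q.2, q.1⟫)

def Aw (α : E3 → ℝ) (β : E3 → E3) (ε : ℝ) (x1 : E3) (p : E3 × E3) : ℝ :=
  Aq α β (om ε x1 p.1, p.2)

theorem om_norm {ε : ℝ} (hε : 0 < ε) (x1 x : E3) : ‖om ε x1 x‖ ≤ 1 := by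
  have h := rho_pos hε x1 x
  rw [om, norm_smul, norm_inv, Real.norm_of_nonneg h.le, inv_mul_le_iff₀ h, mul_one]
  exact norm_le_rho x1 x

theorem om_smul {ε : ℝ} (hε : 0 < ε) (x1 x : E3) : x - x1 = rho ε x1 x • om ε x1 x := by
  rw [om, smul_smul, mul_inv_cancel₀ (rho_pos hε x1 x).ne', one_smul]

theorem den_pos (ω ξ : E3) (h : ‖ω‖ ≤ 1) : 0 < 1 + ⟪vrel ξ, ω⟫ := by
  have h1 := abs_real_inner_le_norm (vrel ξ) ω
  have h2 := vrel_norm_lt ξ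
  have h3 : ‖vrel ξ‖ * ‖ω‖ < 1 := by nlinarith [norm_nonneg (vrel ξ), norm_nonneg ω]
  have := neg_abs_le ⟪vrel ξ, ω⟫
  linarith

theorem om_hasFDerivAt {ε : ℝ} (hε : 0 < ε) (x1 x : E3) :
    ∃ L : E3 →L[ℝ] E3, HasFDerivAt (om ε x1) L x ∧ ∀ w, ‖L w‖ ≤ 2 * (rho ε x1 x)⁻¹ * ‖w‖ := by
  have h0 : HasFDerivAt (fun x : E3 => x - x1) (ContinuousLinearMap.id ℝ E3) x :=
    (hasFDerivAt_id x).sub_const x1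
  have h1 : HasFDerivAt (fun y => (rho ε x1 y)⁻¹) ((-((rho ε x1 x)⁻¹ ^ 3)) • innerSL ℝ (x - x1)) x := by
    simpa using rhoinv_hasFDerivAt hε x1 x 1
  refine ⟨_, h1.fun_smul h0, fun w => ?_⟩
  have hp := rho_pos hε x1 x
  have hn := norm_le_rho (ε := ε) x1 x
  simp only [add_apply, smul_apply, ContinuousLinearMap.smulRight_apply, innerSL_apply_apply,
    ContinuousLinearMap.id_apply, smul_eq_mul]
  refine (norm_add_le _ _).trans ?_
  rw [norm_smul, norm_smul, norm_mul, norm_neg, norm_pow, norm_inv, Real.norm_of_nonneg hp.le]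
  have h4 : ‖⟪x - x1, w⟫‖ ≤ rho ε x1 x * ‖w‖ :=
    (abs_real_inner_le_norm _ _).trans (by gcongr)
  have : (rho ε x1 x)⁻¹ ^ 3 * ‖⟪x - x1, w⟫‖ * ‖x - x1‖ ≤
      (rho ε x1 x)⁻¹ ^ 3 * (rho ε x1 x * ‖w‖) * rho ε x1 x := by gcongr
  have e : (rho ε x1 x)⁻¹ ^ 3 * (rho ε x1 x * ‖w‖) * rho ε x1 x = (rho ε x1 x)⁻¹ * ‖w‖ := by
    field_simp
  linarith

section A
variable {α : E3 → ℝ} {β : E3 → E3}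

theorem Aq_contDiffAt (hα : ContDiff ℝ 1 α) (hβ : ContDiff ℝ 1 β) {q : E3 × E3} (h : ‖q.1‖ ≤ 1) :
    ContDiffAt ℝ 1 (Aq α β) q := by
  have hv : ContDiff ℝ 1 vrel := vrel_contDiff.of_le le_top
  refine ContDiffAt.div ?_ ?_ (den_pos q.1 q.2 h).ne'
  · exact ((hα.comp contDiff_snd).add ((hβ.comp contDiff_snd).inner ℝ contDiff_fst)).contDiffAt
  · exact (contDiff_const.add ((hv.comp contDiff_snd).inner ℝ contDiff_fst)).contDiffAt

theorem om_contDiff {ε : ℝ} (hε : 0 < ε) (x1 : E3) {n : WithTop ℕ∞} : ContDiff ℝ n (om ε x1) :=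
  ((rho_contDiff hε x1).inv (fun x => (rho_pos hε x1 x).ne')).smul (contDiff_id.sub contDiff_const)

theorem Aw_contDiff (hα : ContDiff ℝ 1 α) (hβ : ContDiff ℝ 1 β) {ε : ℝ} (hε : 0 < ε) (x1 : E3) :
    ContDiff ℝ 1 (Aw α β ε x1) := by
  rw [contDiff_iff_contDiffAt]
  intro p
  refine ContDiffAt.comp p (Aq_contDiffAt hα hβ (q := (om ε x1 p.1, p.2)) (om_norm hε x1 p.1)) ?_
  exact (((om_contDiff hε x1).comp contDiff_fst).prodMk contDiff_snd).contDiffAt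

theorem Aw_bound (hα : ContDiff ℝ 1 α) (hβ : ContDiff ℝ 1 β) (r : ℝ) :
    ∃ C, 0 ≤ C ∧ ∀ ε, 0 < ε → ∀ x1 x ξ : E3, ‖ξ‖ ≤ r →
      |Aw α β ε x1 (x, ξ)| ≤ C ∧ ‖β ξ‖ ≤ C ∧
      (∀ w, |fderiv ℝ (Aw α β ε x1) (x, ξ) (w, 0)| ≤ C * (rho ε x1 x)⁻¹ * ‖w‖) ∧
      (∀ w, |fderiv ℝ (Aw α β ε x1) (x, ξ) (0, w)| ≤ C * ‖w‖) := by
  have hK := (isCompact_closedBall (0 : E3) 1).prod (isCompact_closedBall (0 : E3) r)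
  have hm : ∀ q ∈ closedBall (0 : E3) 1 ×ˢ closedBall (0 : E3) r, ‖q.1‖ ≤ 1 := fun q hq => by
    simpa using hq.1
  obtain ⟨C1, h1⟩ := hK.exists_bound_of_continuousOn (f := Aq α β)
    (fun q hq => (Aq_contDiffAt hα hβ (hm q hq)).continuousAt.continuousWithinAt)
  obtain ⟨C2, h2⟩ := hK.exists_bound_of_continuousOn (f := fderiv ℝ (Aq α β))
    (fun q hq => ((Aq_contDiffAt hα hβ (hm q hq)).fderiv_right (m := 0) (by norm_num)).continuousAt.continuousWithinAt)
  obtain ⟨C3, h3⟩ := (isCompact_closedBall (0 : E3) r).exists_bound_of_continuousOn hβ.continuous.continuousOn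
  refine ⟨|C1| + 2 * |C2| + |C3|, by positivity, fun ε hε x1 x ξ hξ => ?_⟩
  have hq : (om ε x1 x, ξ) ∈ closedBall (0 : E3) 1 ×ˢ closedBall (0 : E3) r :=
    ⟨by simpa using om_norm hε x1 x, by simpa using hξ⟩
  have hξ' : ξ ∈ closedBall (0 : E3) r := hq.2
  have b1 := (h1 _ hq).trans (le_abs_self C1)
  have b2 := (h2 _ hq).trans (le_abs_self C2)
  have b3 := (h3 _ hξ').trans (le_abs_self C3)
  have p1 := abs_nonneg C1
  have p2 := abs_nonneg C2
  have p3 := abs_nonneg C3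
  obtain ⟨L, hL, hLb⟩ := om_hasFDerivAt hε x1 x
  have hA : HasFDerivAt (Aw α β ε x1)
      ((fderiv ℝ (Aq α β) (om ε x1 x, ξ)).comp
        ((L.comp (ContinuousLinearMap.fst ℝ E3 E3)).prod (ContinuousLinearMap.snd ℝ E3 E3))) (x, ξ) := by
    have g1 : HasFDerivAt (fun p : E3 × E3 => om ε x1 p.1) (L.comp (ContinuousLinearMap.fst ℝ E3 E3)) (x, ξ) :=
      HasFDerivAt.comp (x, ξ) (g := om ε x1) (f := Prod.fst) hL hasFDerivAt_fst
    have g2 := g1.prodMk (hasFDerivAt_snd (𝕜 := ℝ) (p := ((x, ξ) : E3 × E3)))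
    exact HasFDerivAt.comp (x, ξ) (g := Aq α β) (f := fun p : E3 × E3 => (om ε x1 p.1, p.2))
      ((Aq_contDiffAt hα hβ (q := (om ε x1 x, ξ)) (om_norm hε x1 x)).differentiableAt one_ne_zero).hasFDerivAt g2
  refine ⟨?_, by linarith, ?_, ?_⟩
  · have : |Aw α β ε x1 (x, ξ)| ≤ |C1| := b1
    linarith
  · intro w
    rw [hA.fderiv]
    simp only [ContinuousLinearMap.comp_apply, ContinuousLinearMap.prod_apply, ContinuousLinearMap.coe_fst',
      ContinuousLinearMap.coe_snd']
    rw [← Real.norm_eq_abs]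
    refine (ContinuousLinearMap.le_opNorm _ _).trans ?_
    have : ‖(L w, (0 : E3))‖ ≤ 2 * (rho ε x1 x)⁻¹ * ‖w‖ := by
      rw [Prod.norm_def]; simp only [norm_zero]
      exact max_le (hLb w) ((norm_nonneg _).trans (hLb w))
    have hr := (inv_pos.2 (rho_pos hε x1 x)).le
    calc _ ≤ |C2| * (2 * (rho ε x1 x)⁻¹ * ‖w‖) := by gcongr
      _ = (2 * |C2|) * ((rho ε x1 x)⁻¹ * ‖w‖) := by ring
      _ ≤ (|C1| + 2 * |C2| + |C3|) * ((rho ε x1 x)⁻¹ * ‖w‖) := by gcongr; linarith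
      _ = _ := by ring
  · intro w
    rw [hA.fderiv]
    simp only [ContinuousLinearMap.comp_apply, ContinuousLinearMap.prod_apply, ContinuousLinearMap.coe_fst',
      ContinuousLinearMap.coe_snd', map_zero]
    rw [← Real.norm_eq_abs]
    refine (ContinuousLinearMap.le_opNorm _ _).trans ?_
    have : ‖((0 : E3), w)‖ ≤ ‖w‖ := by
      rw [Prod.norm_def]; simp
    calc _ ≤ |C2| * ‖w‖ := by gcongr
      _ ≤ (|C1| + 2 * |C2| + |C3|) * ‖w‖ := by gcongr; linarith

theorem Q_bound (hα : ContDiff ℝ 1 α) (hβ : ContDiff ℝ 1 β) (r : ℝ) :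
    ∃ C, 0 ≤ C ∧ ∀ ε, 0 < ε → ∀ (T : ℝ) (g g1 : ℝ → ℝ), (∀ s, HasDerivAt g (g1 s) s) → (∀ s, 0 ≤ g s) →
      ∀ (t : ℝ) (x1 x ξ : E3), ‖ξ‖ ≤ r → 
      |Aw α β ε x1 (x, ξ)| ≤ C ∧ ∀ F : E3, 
      |(-(Aw α β ε x1 (x, ξ) * Kr ε T x1 g1 t x)
          + fderiv ℝ (fun p : E3 × E3 => Aw α β ε x1 p * Kr ε T x1 g t p.1) (x, ξ) (vrel ξ, F))
        - (-(α ξ * Kr ε T x1 g1 t x) + Kd ε T x1 g g1 t x * ⟪x - x1, β ξ⟫)|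
      ≤ C * Kr ε T x1 g t x * ((rho ε x1 x)⁻¹ + ‖F‖) := by
  obtain ⟨C, hC, h⟩ := Aw_bound hα hβ r
  refine ⟨3 * C, by positivity, fun ε hε T g g1 hg hg0 t x1 x ξ hξ => ?_⟩
  obtain ⟨b1, b2, b3, b4⟩ := h ε hε x1 x ξ hξ
  refine ⟨by linarith, fun F => ?_⟩
  have hp := rho_pos hε x1 x
  have hA := ((Aw_contDiff hα hβ hε x1).differentiable one_ne_zero (x, ξ)).hasFDerivAt
  have hKr : HasFDerivAt (fun p : E3 × E3 => Kr ε T x1 g t p.1)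
      ((Kd ε T x1 g g1 t x • innerSL ℝ (x - x1)).comp (ContinuousLinearMap.fst ℝ E3 E3)) (x, ξ) :=
    HasFDerivAt.comp (x, ξ) (g := Kr ε T x1 g t) (f := Prod.fst) (Kr_hasFDerivAt hε x1 hg t x) hasFDerivAt_fst
  rw [(hA.fun_mul hKr).fderiv]
  have hsplit : fderiv ℝ (Aw α β ε x1) (x, ξ) (vrel ξ, F) =
      fderiv ℝ (Aw α β ε x1) (x, ξ) (vrel ξ, 0) + fderiv ℝ (Aw α β ε x1) (x, ξ) (0, F) := by
    rw [← map_add]; simp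
  simp only [add_apply, smul_apply, ContinuousLinearMap.comp_apply, ContinuousLinearMap.coe_fst',
    innerSL_apply_apply, smul_eq_mul]
  rw [hsplit]
  set X := fderiv ℝ (Aw α β ε x1) (x, ξ) (vrel ξ, 0) with hX
  set Y := fderiv ℝ (Aw α β ε x1) (x, ξ) (0, F) with hY
  set a := Aw α β ε x1 (x, ξ) with ha
  have haeq : a * (1 + ⟪vrel ξ, om ε x1 x⟫) = α ξ + ⟪β ξ, om ε x1 x⟫ := by
    rw [ha, Aw, Aq]
    exact div_mul_cancel₀ _ (den_pos _ _ (om_norm hε x1 x)).ne'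
  have z1 : ⟪x - x1, vrel ξ⟫ = rho ε x1 x * ⟪vrel ξ, om ε x1 x⟫ := by
    conv_lhs => rw [om_smul hε x1 x]
    rw [real_inner_smul_left, real_inner_comm]
  have z2 : ⟪x - x1, β ξ⟫ = rho ε x1 x * ⟪β ξ, om ε x1 x⟫ := by
    conv_lhs => rw [om_smul hε x1 x]
    rw [real_inner_smul_left, real_inner_comm]
  rw [z1, z2]
  set p := ⟪vrel ξ, om ε x1 x⟫ with hpdef
  set q := ⟪β ξ, om ε x1 x⟫ with hqdef
  set R := rho ε x1 x with hR
  have hk : Kr ε T x1 g t x = g (T - t - R) * R⁻¹ := rfl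
  have hk1 : Kr ε T x1 g1 t x = g1 (T - t - R) * R⁻¹ := rfl
  have hkd : Kd ε T x1 g g1 t x = -(g1 (T - t - R) * R⁻¹ ^ 2 + g (T - t - R) * R⁻¹ ^ 3) := rfl
  have key : -(a * Kr ε T x1 g1 t x) + (a * (Kd ε T x1 g g1 t x * (R * p)) + Kr ε T x1 g t x * (X + Y))
      - (-(α ξ * Kr ε T x1 g1 t x) + Kd ε T x1 g g1 t x * (R * q))
      = Kr ε T x1 g t x * (X + Y + R⁻¹ * (q - a * p)) := by
    have hαe : α ξ = a * (1 + p) - q := by linarith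
    rw [hαe, hk, hk1, hkd]
    field_simp
    ring
  rw [key, abs_mul]
  have hk0 : 0 ≤ Kr ε T x1 g t x := by rw [hk]; exact mul_nonneg (hg0 _) (inv_pos.2 hp).le
  rw [abs_of_nonneg hk0]
  have hX' : |X| ≤ C * R⁻¹ := (b3 _).trans (by
    have := (vrel_norm_lt ξ).le
    have h0 : 0 ≤ C * R⁻¹ := by positivity
    nlinarith)
  have hp1 : |p| ≤ 1 := (abs_real_inner_le_norm _ _).trans (by
    have := (vrel_norm_lt ξ).le
    have := om_norm hε x1 x
    nlinarith [norm_nonneg (vrel ξ), norm_nonneg (om ε x1 x)])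
  have hq1 : |q| ≤ C := (abs_real_inner_le_norm _ _).trans (by
    have := om_norm hε x1 x
    nlinarith [norm_nonneg (β ξ), norm_nonneg (om ε x1 x)])
  have hqa : |q - a * p| ≤ 2 * C := by
    refine (abs_sub _ _).trans ?_
    rw [abs_mul]
    have : |a| * |p| ≤ C * 1 := mul_le_mul b1 hp1 (abs_nonneg _) hC
    linarith
  have hsum : |X + Y + R⁻¹ * (q - a * p)| ≤ 3 * C * (R⁻¹ + ‖F‖) := by
    have t1 := abs_add_le (X + Y) (R⁻¹ * (q - a * p))
    have t2 := abs_add_le X Y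
    rw [abs_mul, abs_of_nonneg (inv_pos.2 hp).le] at t1
    have t3 : R⁻¹ * |q - a * p| ≤ R⁻¹ * (2 * C) := by gcongr
    have t4 := b4 F
    have t5 : 0 ≤ C * ‖F‖ := by positivity
    have t6 : 3 * C * (R⁻¹ + ‖F‖) = 3 * (C * R⁻¹) + 3 * (C * ‖F‖) := by ring
    have t7 : R⁻¹ * (2 * C) = 2 * (C * R⁻¹) := by ring
    rw [t6]
    linarith
  calc _ ≤ Kr ε T x1 g t x * (3 * C * (R⁻¹ + ‖F‖)) := by gcongr
    _ = _ := by ring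

end A

structure GG (g g1 g2 G : ℝ → ℝ) : Prop where
  d0 : ∀ s, HasDerivAt g (g1 s) s
  d1 : ∀ s, HasDerivAt g1 (g2 s) s
  dG : ∀ s, HasDerivAt G (g s) s
  c0 : ContDiff ℝ 1 g
  c1 : ContDiff ℝ 1 g1
  c2 : Continuous g2
  nn : ∀ s, 0 ≤ g s
  z0 : ∀ s ≤ 0, g s = 0
  z1 : ∀ s ≤ 0, g1 s = 0
  z2 : ∀ s ≤ 0, g2 s = 0
  zG : ∀ s ≤ 0, G s = 0
  G1 : ∀ s, G s ≤ 1

def cR : ℝ := 3 * (volume : Measure E3).real (ball 0 1)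

theorem cR_nonneg : 0 ≤ cR := by unfold cR; positivity

theorem Kr_nonneg {ε T : ℝ} (hε : 0 < ε) {g g1 g2 G : ℝ → ℝ} (h : GG g g1 g2 G) (t : ℝ) (x1 x : E3) :
    0 ≤ Kr ε T x1 g t x := mul_nonneg (h.nn _) (inv_pos.2 (rho_pos hε x1 x)).le

theorem Kr_cs {ε T : ℝ} {g : ℝ → ℝ} (h : ∀ s ≤ 0, g s = 0) (t : ℝ) (x1 : E3) :
    HasCompactSupport (Kr ε T x1 g t) :=
  HasCompactSupport.intro (isCompact_closedBall x1 (T - t)) (fun x hx => Kr_zero x1 h (by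
    rw [mem_closedBall, dist_eq_norm] at hx; exact (not_le.1 hx).le))

theorem I2_bound {ε T : ℝ} (hε : 0 < ε) {g g1 g2 G : ℝ → ℝ} (h : GG g g1 g2 G) (t : ℝ) (x1 : E3) :
    ∫ x, Kr ε T x1 g t x * (rho ε x1 x)⁻¹ ≤ cR := by
  set F : ℝ → ℝ := fun y => g (T - t - √(ε ^ 2 + y ^ 2)) * (√(ε ^ 2 + y ^ 2))⁻¹ * (√(ε ^ 2 + y ^ 2))⁻¹ with hF
  have e1 : ∫ x, Kr ε T x1 g t x * (rho ε x1 x)⁻¹ = ∫ x : E3, F ‖x‖ := by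
    rw [← integral_sub_right_eq_self (fun x : E3 => F ‖x‖) x1]
    rfl
  rw [e1, integral_fun_norm_addHaar]
  have hdim : Module.finrank ℝ E3 = 3 := by simp
  rw [hdim]
  have hsq : ∀ y : ℝ, 0 < √(ε ^ 2 + y ^ 2) := fun y => Real.sqrt_pos.2 (by positivity)
  set q : ℝ → ℝ := fun y => -G (T - t - √(ε ^ 2 + y ^ 2)) with hq
  set q' : ℝ → ℝ := fun y => g (T - t - √(ε ^ 2 + y ^ 2)) * (y / √(ε ^ 2 + y ^ 2)) with hq'
  have hd : ∀ y ∈ Ici (0 : ℝ), HasDerivAt q (q' y) y := by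
    intro y _
    have a1 : HasDerivAt (fun y : ℝ => ε ^ 2 + y ^ 2) (2 * y) y := by
      simpa using (hasDerivAt_pow 2 y).const_add (ε ^ 2)
    have a2 := ((a1.sqrt (by positivity)).const_sub (T - t))
    refine ((h.dG _).comp y a2).fun_neg.congr_deriv ?_
    have := (hsq y).ne'
    simp only [hq']
    field_simp
  have hpos : ∀ y ∈ Ioi (0 : ℝ), 0 ≤ q' y := fun y hy =>
    mul_nonneg (h.nn _) (div_nonneg (le_of_lt hy) (hsq y).le)
  have hlim : Tendsto q atTop (𝓝 0) := by
    refine tendsto_const_nhds.congr' ?_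
    filter_upwards [eventually_ge_atTop (T - t), eventually_ge_atTop 0] with y hy hy0
    simp only [hq]
    rw [h.zG, neg_zero]
    have : y ≤ √(ε ^ 2 + y ^ 2) := Real.le_sqrt_of_sq_le (by nlinarith [sq_nonneg ε])
    linarith
  have hint := integrableOn_Ioi_deriv_of_nonneg' hd hpos hlim
  have hval := integral_Ioi_of_hasDerivAt_of_nonneg' hd hpos hlim
  have hle : ∫ y in Ioi (0 : ℝ), y ^ (3 - 1) • F y ≤ ∫ y in Ioi (0 : ℝ), q' y := by
    refine integral_mono_of_nonneg ?_ hint ?_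
    · filter_upwards with y
      have := h.nn (T - t - √(ε ^ 2 + y ^ 2))
      have := (hsq y).le
      simp only [hF, smul_eq_mul, Pi.zero_apply]
      exact mul_nonneg (sq_nonneg y) (by positivity)
    · filter_upwards [ae_restrict_mem measurableSet_Ioi] with y hy
      have hy0 : (0 : ℝ) < y := hy
      simp only [hF, hq', smul_eq_mul]
      have hle : y ≤ √(ε ^ 2 + y ^ 2) := Real.le_sqrt_of_sq_le (by nlinarith [sq_nonneg ε])
      have hs := hsq y
      have := h.nn (T - t - √(ε ^ 2 + y ^ 2))
      have e : y ^ (3 - 1) * (g (T - t - √(ε ^ 2 + y ^ 2)) * (√(ε ^ 2 + y ^ 2))⁻¹ * (√(ε ^ 2 + y ^ 2))⁻¹)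
        = g (T - t - √(ε ^ 2 + y ^ 2)) * (y / √(ε ^ 2 + y ^ 2)) * (y / √(ε ^ 2 + y ^ 2)) := by
        field_simp
      rw [e]
      have h1 : y / √(ε ^ 2 + y ^ 2) ≤ 1 := (div_le_one hs).2 hle
      exact mul_le_of_le_one_right (by positivity) h1
  have hq0 : 0 - q 0 ≤ 1 := by
    simp only [hq]; have := h.G1 (T - t - √(ε ^ 2 + 0 ^ 2)); linarith
  have : ∫ y in Ioi (0 : ℝ), y ^ (3 - 1) • F y ≤ 1 := by linarith
  have hv : 0 ≤ (volume : Measure E3).real (ball 0 1) := by positivity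
  simp only [smul_eq_mul, nsmul_eq_mul, cR] at *
  push_cast
  nlinarith

theorem I1_bound {ε T : ℝ} (hε : 0 < ε) {g g1 g2 G : ℝ → ℝ} (h : GG g g1 g2 G) {t : ℝ} (ht : 0 ≤ t)
    (hT : 0 ≤ T) (x1 : E3) :
    ∫ x, Kr ε T x1 g t x ≤ T * cR := by
  have hc : Continuous (Kr ε T x1 g t) :=
    (Kr_contDiff hε x1 (T := T) h.c0).continuous.comp (Continuous.prodMk_right t)
  have hr : Continuous (fun x => (rho ε x1 x)⁻¹) :=
    (rho_contDiff hε x1 (n := 0)).continuous.inv₀ (fun x => (rho_pos hε x1 x).ne')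
  have hi : Integrable (fun x => T * (Kr ε T x1 g t x * (rho ε x1 x)⁻¹)) :=
    ((hc.mul hr).integrable_of_hasCompactSupport ((Kr_cs h.z0 t x1).mul_right)).const_mul T
  calc ∫ x, Kr ε T x1 g t x ≤ ∫ x, T * (Kr ε T x1 g t x * (rho ε x1 x)⁻¹) := by
        refine integral_mono (hc.integrable_of_hasCompactSupport (Kr_cs h.z0 t x1)) hi (fun x => ?_)
        have hp := rho_pos hε x1 x
        have hk := Kr_nonneg (T := T) hε h t x1 x
        by_cases hle : rho ε x1 x ≤ T
        · have : 1 ≤ T * (rho ε x1 x)⁻¹ := by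
            rw [← div_eq_mul_inv]; exact (one_le_div hp).2 hle
          show Kr ε T x1 g t x ≤ T * (Kr ε T x1 g t x * (rho ε x1 x)⁻¹)
          nlinarith
        · have : Kr ε T x1 g t x = 0 := by
            rw [Kr, h.z0 _ (by linarith), zero_mul]
          show Kr ε T x1 g t x ≤ T * (Kr ε T x1 g t x * (rho ε x1 x)⁻¹)
          rw [this]; simp
    _ = T * ∫ x, Kr ε T x1 g t x * (rho ε x1 x)⁻¹ := integral_const_mul _ _
    _ ≤ T * cR := by gcongr; exact I2_bound hε h t x1

def jb (y : E3) : ℝ := √(1 + ‖y‖ ^ 2)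

def Nk (g g1 g2 : ℝ → ℝ) (s ε : ℝ) (y : E3) : ℝ :=
  ε ^ 2 * g2 (s - ε * jb y) * (jb y)⁻¹ ^ 3 + 3 * ε * g1 (s - ε * jb y) * (jb y)⁻¹ ^ 4
    + 3 * g (s - ε * jb y) * (jb y)⁻¹ ^ 5

def c0 : ℝ := ∫ y : E3, 3 * (jb y)⁻¹ ^ 5

theorem jb_ge (y : E3) : 1 ≤ jb y := Real.one_le_sqrt.2 (by nlinarith [sq_nonneg ‖y‖])

theorem jb_norm (y : E3) : ‖y‖ ≤ jb y := Real.le_sqrt_of_sq_le (by linarith)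

theorem jb_cont : Continuous jb := by unfold jb; fun_prop

theorem jb_int4 : Integrable (fun y : E3 => (jb y)⁻¹ ^ 4) := by
  have h := integrable_rpow_neg_one_add_norm_sq (E := E3) (μ := volume) (r := 4) (by simp; norm_num)
  refine h.congr (Eventually.of_forall fun y => ?_)
  have h1 : (0 : ℝ) ≤ 1 + ‖y‖ ^ 2 := by positivity
  have h2 : jb y ^ 2 = 1 + ‖y‖ ^ 2 := Real.sq_sqrt h1
  have h3 : (-4 / 2 : ℝ) = -((2 : ℕ) : ℝ) := by norm_num
  simp only
  rw [h3, Real.rpow_neg h1, Real.rpow_natCast, ← h2, inv_pow]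
  ring

theorem jb_int5 : Integrable (fun y : E3 => 3 * (jb y)⁻¹ ^ 5) := by
  refine Integrable.mono' (jb_int4.const_mul 3) ?_ ?_
  · exact (continuous_const.mul ((jb_cont.inv₀ (fun y => (lt_of_lt_of_le one_pos (jb_ge y)).ne')).pow 5)).aestronglyMeasurable
  · refine Eventually.of_forall fun y => ?_
    have h := jb_ge y
    have h0 : 0 < jb y := by linarith
    have hi : (jb y)⁻¹ ≤ 1 := inv_le_one_of_one_le₀ h
    rw [Real.norm_of_nonneg (by positivity), pow_succ (jb y)⁻¹ 4]
    have : (jb y)⁻¹ ^ 4 * (jb y)⁻¹ ≤ (jb y)⁻¹ ^ 4 := mul_le_of_le_one_right (by positivity) hi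
    linarith

theorem c0_pos : 0 < c0 := by
  unfold c0
  rw [integral_pos_iff_support_of_nonneg]
  · have : Function.support (fun y : E3 => 3 * (jb y)⁻¹ ^ 5) = univ := by
      ext y
      have h0 : 0 < jb y := lt_of_lt_of_le one_pos (jb_ge y)
      simp [h0.ne']
    rw [this]; simp
  · intro y
    have h0 : 0 < jb y := lt_of_lt_of_le one_pos (jb_ge y)
    simp only [Pi.zero_apply]; positivity
  · exact jb_int5

theorem rho_scale {ε : ℝ} (hε : 0 < ε) (x1 y : E3) : rho ε x1 (x1 + ε • y) = ε * jb y := by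
  unfold rho jb
  rw [add_sub_cancel_left, norm_smul, Real.norm_of_nonneg hε.le]
  rw [show ε ^ 2 + (ε * ‖y‖) ^ 2 = ε ^ 2 * (1 + ‖y‖ ^ 2) by ring, Real.sqrt_mul (by positivity),
    Real.sqrt_sq hε.le]

theorem N_subst {ε T : ℝ} (hε : 0 < ε) (x1 : E3) (g g1 g2 : ℝ → ℝ) (t : ℝ) (u : E3 → ℝ) :
    ∫ x, u x * (ε ^ 2 * Kb ε T x1 g g1 g2 t x) = ∫ y, u (x1 + ε • y) * Nk g g1 g2 (T - t) ε y := by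
  set h : E3 → ℝ := fun x => u x * (ε ^ 2 * Kb ε T x1 g g1 g2 t x) with hh
  have e1 : ∫ x, h x = ∫ x, h (x1 + x) := (integral_add_left_eq_self h x1).symm
  have e2 := Measure.integral_comp_smul (μ := (volume : Measure E3)) (fun x => h (x1 + x)) ε
  have hdim : Module.finrank ℝ E3 = 3 := by simp
  rw [hdim, abs_of_pos (by positivity), smul_eq_mul] at e2
  have e3 : ∫ x, h (x1 + x) = ε ^ 3 * ∫ y, h (x1 + ε • y) := by
    rw [e2]; field_simp
  rw [e1, e3, ← integral_const_mul]
  refine integral_congr_ae (Eventually.of_forall fun y => ?_)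
  simp only [hh, Kb, Nk, rho_scale hε]
  have h0 : 0 < jb y := lt_of_lt_of_le one_pos (jb_ge y)
  field_simp

theorem Nk_bound {g g1 g2 G : ℝ → ℝ} (h : GG g g1 g2 G) {T Cg : ℝ} (hT : 0 ≤ T) (hCg : 0 ≤ Cg)
    (b0 : ∀ s ≤ T, |g s| ≤ Cg) (b1 : ∀ s ≤ T, |g1 s| ≤ Cg) (b2 : ∀ s ≤ T, |g2 s| ≤ Cg)
    {s ε : ℝ} (hs : s ≤ T) (hε : 0 < ε) (hε1 : ε ≤ 1) (y : E3) :
    |Nk g g1 g2 s ε y| ≤ Cg * (T + 6) * (jb y)⁻¹ ^ 4 ∧ (s ≤ ε * jb y → Nk g g1 g2 s ε y = 0) := by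
  have hj := jb_ge y
  have hj0 : 0 < jb y := by linarith
  have hz : s ≤ ε * jb y → Nk g g1 g2 s ε y = 0 := by
    intro hle
    simp [Nk, h.z0 _ (sub_nonpos.2 hle), h.z1 _ (sub_nonpos.2 hle), h.z2 _ (sub_nonpos.2 hle)]
  refine ⟨?_, hz⟩
  by_cases hle : s ≤ ε * jb y
  · rw [hz hle, abs_zero]; positivity
  have hle' : ε * jb y ≤ T := by linarith
  have hσ : s - ε * jb y ≤ T := by nlinarith
  have hi : (jb y)⁻¹ ≤ 1 := inv_le_one_of_one_le₀ hj
  have hi0 : 0 < (jb y)⁻¹ := inv_pos.2 hj0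
  have k3 : ε ^ 2 * (jb y)⁻¹ ^ 3 ≤ T * (jb y)⁻¹ ^ 4 := by
    have e : ε ^ 2 * (jb y)⁻¹ ^ 3 = ε * (ε * jb y) * (jb y)⁻¹ ^ 4 := by field_simp
    rw [e]
    gcongr
    have : 0 ≤ ε * jb y := by positivity
    nlinarith
  have k4 : 3 * ε * (jb y)⁻¹ ^ 4 ≤ 3 * (jb y)⁻¹ ^ 4 := by
    gcongr; linarith
  have k5 : 3 * (jb y)⁻¹ ^ 5 ≤ 3 * (jb y)⁻¹ ^ 4 := by
    rw [pow_succ (jb y)⁻¹ 4]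
    have : (jb y)⁻¹ ^ 4 * (jb y)⁻¹ ≤ (jb y)⁻¹ ^ 4 := mul_le_of_le_one_right (by positivity) hi
    linarith
  have a1 : |ε ^ 2 * g2 (s - ε * jb y) * (jb y)⁻¹ ^ 3| ≤ Cg * (T * (jb y)⁻¹ ^ 4) := by
    rw [show ε ^ 2 * g2 (s - ε * jb y) * (jb y)⁻¹ ^ 3 = g2 (s - ε * jb y) * (ε ^ 2 * (jb y)⁻¹ ^ 3) by ring,
      abs_mul, abs_of_pos (show 0 < ε ^ 2 * (jb y)⁻¹ ^ 3 by positivity)]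
    exact mul_le_mul (b2 _ hσ) k3 (by positivity) hCg
  have a2 : |3 * ε * g1 (s - ε * jb y) * (jb y)⁻¹ ^ 4| ≤ Cg * (3 * (jb y)⁻¹ ^ 4) := by
    rw [show 3 * ε * g1 (s - ε * jb y) * (jb y)⁻¹ ^ 4 = g1 (s - ε * jb y) * (3 * ε * (jb y)⁻¹ ^ 4) by ring,
      abs_mul, abs_of_pos (show 0 < 3 * ε * (jb y)⁻¹ ^ 4 by positivity)]
    exact mul_le_mul (b1 _ hσ) k4 (by positivity) hCg
  have a3 : |3 * g (s - ε * jb y) * (jb y)⁻¹ ^ 5| ≤ Cg * (3 * (jb y)⁻¹ ^ 4) := by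
    rw [show 3 * g (s - ε * jb y) * (jb y)⁻¹ ^ 5 = g (s - ε * jb y) * (3 * (jb y)⁻¹ ^ 5) by ring,
      abs_mul, abs_of_pos (show 0 < 3 * (jb y)⁻¹ ^ 5 by positivity)]
    exact mul_le_mul (b0 _ hσ) k5 (by positivity) hCg
  unfold Nk
  have t1 := abs_add_le (ε ^ 2 * g2 (s - ε * jb y) * (jb y)⁻¹ ^ 3 + 3 * ε * g1 (s - ε * jb y) * (jb y)⁻¹ ^ 4)
    (3 * g (s - ε * jb y) * (jb y)⁻¹ ^ 5)
  have t2 := abs_add_le (ε ^ 2 * g2 (s - ε * jb y) * (jb y)⁻¹ ^ 3) (3 * ε * g1 (s - ε * jb y) * (jb y)⁻¹ ^ 4)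
  have e : Cg * (T + 6) * (jb y)⁻¹ ^ 4 = Cg * (T * (jb y)⁻¹ ^ 4) + Cg * (3 * (jb y)⁻¹ ^ 4) + Cg * (3 * (jb y)⁻¹ ^ 4) := by ring
  linarith

theorem bdd_left {g : ℝ → ℝ} (hg : Continuous g) (hz : ∀ s ≤ 0, g s = 0) (T : ℝ) :
    ∃ C, 0 ≤ C ∧ ∀ s ≤ T, |g s| ≤ C := by
  obtain ⟨C, hC⟩ := (isCompact_Icc (a := (0 : ℝ)) (b := T)).exists_bound_of_continuousOn hg.continuousOn
  refine ⟨|C|, abs_nonneg _, fun s hs => ?_⟩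
  by_cases h : s ≤ 0
  · rw [hz s h]; simp
  · exact (hC s ⟨(not_le.1 h).le, hs⟩).trans (le_abs_self C)

theorem N_limit {g g1 g2 G : ℝ → ℝ} (h : GG g g1 g2 G) {T : ℝ} (hT : 0 ≤ T) (x1 : E3)
    {u : ℝ → E3 → ℝ} (hu : ContinuousOn (Function.uncurry u) (Icc 0 T ×ˢ univ)) {K : ℝ}
    (hK : ∀ ε, 0 < ε → ε ≤ 1 →
      |∫ t in (0:ℝ)..T, ∫ x, u t x * (ε ^ 2 * Kb ε T x1 g g1 g2 t x)| ≤ K) :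
    |∫ t in (0:ℝ)..T, c0 * (g (T - t) * u t x1)| ≤ K := by
  obtain ⟨A0, hA0, b0⟩ := bdd_left h.c0.continuous h.z0 T
  obtain ⟨A1, hA1, b1⟩ := bdd_left h.c1.continuous h.z1 T
  obtain ⟨A2, hA2, b2⟩ := bdd_left h.c2 h.z2 T
  set Cg := A0 + A1 + A2 with hCgd
  have hCg : 0 ≤ Cg := by positivity
  obtain ⟨Cu', hCu'⟩ := (isCompact_Icc.prod (isCompact_closedBall x1 T)).exists_bound_of_continuousOn
    (hu.mono (prod_mono_right (subset_univ (closedBall x1 T))))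
  set Cu := |Cu'| with hCud
  have hCu : ∀ t ∈ Icc 0 T, ∀ x, ‖x - x1‖ ≤ T → |u t x| ≤ Cu := fun t ht x hx =>
    (hCu' (t, x) ⟨ht, by rwa [mem_closedBall, dist_eq_norm]⟩).trans (le_abs_self _)
  have hCu0 : 0 ≤ Cu := abs_nonneg _
  have slice : ∀ t ∈ Icc 0 T, Continuous (u t) := by
    intro t ht
    rw [← continuousOn_univ]
    exact hu.comp (f := fun x => (t, x)) (by fun_prop) (fun x _ => ⟨ht, mem_univ _⟩)
  have hNb := fun {s ε : ℝ} (hs : s ≤ T) (hε : 0 < ε) (hε1 : ε ≤ 1) (y : E3) =>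
    Nk_bound h hT hCg (fun s hs => (b0 s hs).trans (by linarith)) (fun s hs => (b1 s hs).trans (by linarith))
      (fun s hs => (b2 s hs).trans (by linarith)) hs hε hε1 y
  have hjinv : Continuous (fun y : E3 => (jb y)⁻¹) :=
    jb_cont.inv₀ (fun y => (lt_of_lt_of_le one_pos (jb_ge y)).ne')
  have hNc : ∀ s ε, Continuous (Nk g g1 g2 s ε) := by
    intro s ε
    have hσ : Continuous (fun y : E3 => s - ε * jb y) := continuous_const.sub (continuous_const.mul jb_cont)
    exact (((continuous_const.mul (h.c2.comp hσ)).mul (hjinv.pow 3)).add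
      ((continuous_const.mul (h.c1.continuous.comp hσ)).mul (hjinv.pow 4))).add
      ((continuous_const.mul (h.c0.continuous.comp hσ)).mul (hjinv.pow 5))
  have hpt : ∀ t ∈ Icc 0 T, ∀ ε, 0 < ε → ε ≤ 1 → ∀ y : E3,
      ‖u t (x1 + ε • y) * Nk g g1 g2 (T - t) ε y‖ ≤ Cu * (Cg * (T + 6) * (jb y)⁻¹ ^ 4) := by
    intro t ht ε hε hε1 y
    obtain ⟨n1, n2⟩ := hNb (s := T - t) (by linarith [ht.1]) hε hε1 y
    have hj0 : 0 < jb y := lt_of_lt_of_le one_pos (jb_ge y)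
    by_cases hle : T - t ≤ ε * jb y
    · rw [n2 hle, mul_zero, norm_zero]; positivity
    · rw [norm_mul]
      refine mul_le_mul (hCu t ht _ ?_) n1 (norm_nonneg _) hCu0
      rw [add_sub_cancel_left, norm_smul, Real.norm_of_nonneg hε.le]
      have : ε * ‖y‖ ≤ ε * jb y := by gcongr; exact jb_norm y
      linarith [ht.1]
  have hbi : Integrable (fun y : E3 => Cu * (Cg * (T + 6) * (jb y)⁻¹ ^ 4)) :=
    (jb_int4.const_mul _).const_mul _
  have hev : ∀ᶠ ε : ℝ in 𝓝[>] 0, 0 < ε ∧ ε ≤ 1 := by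
    filter_upwards [Ioc_mem_nhdsGT (show (0:ℝ) < 1 by norm_num)] with ε hε
    exact hε
  have hinner : ∀ t ∈ Icc 0 T, Tendsto (fun ε : ℝ => ∫ y, u t (x1 + ε • y) * Nk g g1 g2 (T - t) ε y)
      (𝓝[>] 0) (𝓝 (c0 * (g (T - t) * u t x1))) := by
    intro t ht
    have : c0 * (g (T - t) * u t x1) = ∫ y : E3, u t x1 * (3 * g (T - t) * (jb y)⁻¹ ^ 5) := by
      unfold c0
      rw [← integral_mul_const]
      congr 1; funext y; ring
    rw [this]
    refine tendsto_integral_filter_of_dominated_convergence _ ?_ ?_ hbi ?_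
    · refine Eventually.of_forall fun ε => ?_
      exact (((slice t ht).comp (by fun_prop)).mul (hNc _ _)).aestronglyMeasurable
    · filter_upwards [hev] with ε hε
      exact Eventually.of_forall fun y => hpt t ht ε hε.1 hε.2 y
    · refine Eventually.of_forall fun y => ?_
      have hcont : Continuous (fun ε : ℝ => u t (x1 + ε • y) * Nk g g1 g2 (T - t) ε y) := by
        have hσ : Continuous (fun ε : ℝ => T - t - ε * jb y) := by fun_prop
        refine ((slice t ht).comp (by fun_prop)).mul ?_
        have q2 := h.c2.comp hσ
        have q1 := h.c1.continuous.comp hσ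
        have q0 := h.c0.continuous.comp hσ
        simp only [Function.comp_def] at q0 q1 q2
        exact ((((continuous_id.pow 2).mul q2).mul continuous_const).add
          (((continuous_const.mul continuous_id).mul q1).mul continuous_const)).add
          ((continuous_const.mul q0).mul continuous_const)
      have := (hcont.tendsto 0).mono_left (nhdsWithin_le_nhds (s := Ioi 0))
      simpa [Nk] using this
  have houter : Tendsto (fun ε : ℝ => ∫ t in (0:ℝ)..T, ∫ y, u t (x1 + ε • y) * Nk g g1 g2 (T - t) ε y)
      (𝓝[>] 0) (𝓝 (∫ t in (0:ℝ)..T, c0 * (g (T - t) * u t x1))) := by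
    have hsub : ∀ t, t ∈ uIoc 0 T → t ∈ Icc 0 T := fun t ht => by
      rw [uIoc_of_le hT] at ht; exact Ioc_subset_Icc_self ht
    refine intervalIntegral.tendsto_integral_filter_of_dominated_convergence
      (fun _ => ∫ y : E3, Cu * (Cg * (T + 6) * (jb y)⁻¹ ^ 4)) ?_ ?_ ?_ ?_
    · filter_upwards [hev] with ε hε
      have hc : ContinuousOn (fun t => ∫ x, u t x * (ε ^ 2 * Kb ε T x1 g g1 g2 t x)) (Icc 0 T) := by
        refine continuousOn_integral_of_compact_support (isCompact_closedBall x1 T) ?_ ?_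
        · exact hu.mul (continuous_const.mul (Kb_continuous hε.1 x1 h.c0.continuous h.c1.continuous h.c2)).continuousOn
        · intro t x ht hx
          rw [mem_closedBall, dist_eq_norm] at hx
          rw [Kb_zero x1 h.z0 h.z1 h.z2 (by linarith [ht.1]), mul_zero, mul_zero]
      have hc2 := hc.congr (fun t _ => (N_subst hε.1 x1 g g1 g2 t (u t)).symm)
      exact (hc2.aestronglyMeasurable measurableSet_Icc).mono_set (fun t ht => hsub t ht)
    · filter_upwards [hev] with ε hε
      refine Eventually.of_forall fun t ht => ?_
      exact norm_integral_le_of_norm_le hbi (Eventually.of_forall fun y => hpt t (hsub t ht) ε hε.1 hε.2 y)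
    · exact intervalIntegrable_const
    · exact Eventually.of_forall fun t ht => hinner t (hsub t ht)
  refine le_of_tendsto houter.abs ?_
  filter_upwards [hev] with ε hε
  have := hK ε hε.1 hε.2
  simpa only [N_subst hε.1] using this

theorem deriv_zero_left {h : ℝ → ℝ} {h' s : ℝ} (hd : HasDerivAt h h' s) (hz : ∀ r ≤ s, h r = 0) : h' = 0 := by
  have h1 : HasDerivWithinAt h h' (Iic s) s := hd.hasDerivWithinAt
  have h2 : HasDerivWithinAt h 0 (Iic s) s :=
    (hasDerivWithinAt_const s (Iic s) (0:ℝ)).congr (fun r hr => hz r hr) (hz s le_rfl)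
  exact (uniqueDiffWithinAt_Iic s).eq_deriv _ h1 h2

theorem exists_GG {δ : ℝ} (hδ : 0 < δ) : ∃ g g1 g2 G : ℝ → ℝ, GG g g1 g2 G ∧ (∀ s, δ ≤ s → g s = 0) ∧
    ∫ s, g s = 1 ∧ Integrable g := by
  let b : ContDiffBump (δ / 2 : ℝ) := ⟨δ / 4, δ / 2, by positivity, by linarith⟩
  set g : ℝ → ℝ := b.normed volume with hg
  have hsm : ContDiff ℝ 3 g := b.contDiff_normed
  have hsupp : Function.support g = ball (δ / 2) (δ / 2) := b.support_normed_eq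
  have hz : ∀ s, s ≤ 0 ∨ δ ≤ s → g s = 0 := by
    intro s hs
    rw [← Function.notMem_support, hsupp, mem_ball, Real.dist_eq]
    intro hh
    rw [abs_lt] at hh
    rcases hs with hs | hs <;> linarith
  have hz0 : ∀ s ≤ 0, g s = 0 := fun s hs => hz s (Or.inl hs)
  have h1 : ContDiff ℝ 2 (deriv g) := hsm.deriv' 
  have h2 : ContDiff ℝ 1 (deriv (deriv g)) := h1.deriv'
  have d0 : ∀ s, HasDerivAt g (deriv g s) s := fun s => (hsm.differentiable (by norm_num) s).hasDerivAt
  have d1 : ∀ s, HasDerivAt (deriv g) (deriv (deriv g) s) s := fun s =>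
    (h1.differentiable (by norm_num) s).hasDerivAt
  have z1 : ∀ s ≤ 0, deriv g s = 0 := fun s hs => deriv_zero_left (d0 s) (fun r hr => hz0 r (hr.trans hs))
  have z2 : ∀ s ≤ 0, deriv (deriv g) s = 0 := fun s hs =>
    deriv_zero_left (d1 s) (fun r hr => z1 r (hr.trans hs))
  have hi : Integrable g := b.integrable_normed
  have hint : ∫ s, g s = 1 := b.integral_normed
  have hnn : ∀ s, 0 ≤ g s := fun s => b.nonneg_normed s
  refine ⟨g, deriv g, deriv (deriv g), fun s => ∫ r in (0:ℝ)..s, g r, ⟨d0, d1, ?_, hsm.of_le (by norm_num), h1.of_le (by norm_num),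
    h2.continuous, hnn, hz0, z1, z2, ?_, ?_⟩, fun s hs => hz s (Or.inr hs), hint, hi⟩
  · intro s
    exact intervalIntegral.integral_hasDerivAt_right (hsm.continuous.intervalIntegrable _ _)
      (hsm.continuous.stronglyMeasurableAtFilter _ _) hsm.continuous.continuousAt
  · intro s hs
    show ∫ r in (0:ℝ)..s, g r = 0
    rw [intervalIntegral.integral_congr (g := fun _ => (0:ℝ))]
    · simp
    · intro r hr
      rw [uIcc_of_ge hs] at hr
      exact hz0 r hr.2
  · intro s
    show ∫ r in (0:ℝ)..s, g r ≤ 1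
    by_cases hs : 0 ≤ s
    · rw [intervalIntegral.integral_of_le hs, ← hint]
      exact setIntegral_le_integral hi (Eventually.of_forall hnn)
    · rw [intervalIntegral.integral_congr (g := fun _ => (0:ℝ))]
      · simp
      · intro r hr
        rw [uIcc_of_ge (not_le.1 hs).le] at hr
        exact hz0 r hr.2

theorem delta_limit {T : ℝ} (hT : 0 < T) {w : ℝ → ℝ} (hw : ContinuousOn w (Icc 0 T)) {K : ℝ}
    (hK : ∀ g g1 g2 G : ℝ → ℝ, GG g g1 g2 G → |∫ t in (0:ℝ)..T, c0 * (g (T - t) * w t)| ≤ K) :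
    c0 * |w T| ≤ K := by
  refine le_of_forall_pos_le_add fun η' hη' => ?_
  have hc := c0_pos
  set η := η' / c0 with hη
  have hη0 : 0 < η := by positivity
  have hcw : ContinuousWithinAt w (Icc 0 T) T := hw T ⟨hT.le, le_rfl⟩
  obtain ⟨d, hd, hdw⟩ := Metric.continuousWithinAt_iff.1 hcw η hη0
  obtain ⟨g, g1, g2, G, hG, hgz, hint, hi⟩ := exists_GG (show 0 < min d T by positivity)
  have hb := hK g g1 g2 G hG
  have hgc : Continuous (fun t => g (T - t)) := hG.c0.continuous.comp (by fun_prop)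
  have i1 : IntervalIntegrable (fun t => g (T - t)) volume 0 T := hgc.intervalIntegrable _ _
  have hone : ∫ t in (0:ℝ)..T, g (T - t) = 1 := by
    rw [intervalIntegral.integral_comp_sub_left (fun s => g s) T, sub_self, sub_zero,
      intervalIntegral.integral_of_le hT.le, ← hint]
    refine setIntegral_eq_integral_of_forall_compl_eq_zero (fun s hs => ?_)
    by_cases h0 : s ≤ 0
    · exact hG.z0 s h0
    · apply hgz
      have : ¬ s ≤ T := fun h => hs ⟨not_le.1 h0, h⟩
      exact (min_le_right _ _).trans (not_le.1 this).le
  have i2 : IntervalIntegrable (fun t => g (T - t) * w t) volume 0 T :=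
    (hgc.continuousOn.mul hw).intervalIntegrable_of_Icc hT.le
  have hdiff : |(∫ t in (0:ℝ)..T, g (T - t) * w t) - w T| ≤ η := by
    have e : (∫ t in (0:ℝ)..T, g (T - t) * w t) - w T = ∫ t in (0:ℝ)..T, g (T - t) * (w t - w T) := by
      have : w T = ∫ t in (0:ℝ)..T, g (T - t) * w T := by
        rw [intervalIntegral.integral_mul_const, hone, one_mul]
      conv_lhs => rw [this]
      rw [← intervalIntegral.integral_sub i2 (i1.mul_const _)]
      congr 1; funext t; ring
    rw [e]
    have := intervalIntegral.norm_integral_le_of_norm_le (μ := volume) (f := fun t => g (T - t) * (w t - w T))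
      (g := fun t => g (T - t) * η) hT.le (Eventually.of_forall fun t ht => ?_) (i1.mul_const _)
    · rw [intervalIntegral.integral_mul_const, hone, one_mul] at this
      exact this
    · rw [norm_mul, Real.norm_of_nonneg (hG.nn _)]
      by_cases hlt : T - t < min d T
      · gcongr
        · exact hG.nn _
        · have := hdw (x := t) ⟨ht.1.le, ht.2⟩ (by
            rw [Real.dist_eq, abs_sub_comm, abs_of_nonneg (by linarith [ht.2])]
            exact hlt.trans_le (min_le_left _ _))
          exact this.le
      · rw [hgz _ (not_lt.1 hlt)]; simp
  rw [intervalIntegral.integral_const_mul, abs_mul, abs_of_pos hc] at hb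
  have h3 : |w T| ≤ |∫ t in (0:ℝ)..T, g (T - t) * w t| + η := by
    have := abs_sub_abs_le_abs_sub (w T) (∫ t in (0:ℝ)..T, g (T - t) * w t)
    rw [abs_sub_comm] at hdiff
    linarith
  have h4 : c0 * η = η' := by rw [hη]; field_simp
  nlinarith

theorem haarV : (volume : Measure (E3 × E3)).IsAddHaarMeasure := by
  rw [Measure.volume_eq_prod]; infer_instance

theorem inner_abc {a b c : Fin 3} (hs : ∀ F : Fin 3 → ℝ, ∑ k, F k = F a + F b + F c) (z w : E3) :
    ⟪z, w⟫ = z a * w a + z b * w b + z c * w c := by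
  rw [PiLp.inner_apply, hs]
  simp [mul_comm]

theorem fub {u : E3 × E3 → ℝ} {x1 : E3} {T r : ℝ} {α : E3 → ℝ} {β : E3 → E3} {φ κ : E3 → ℝ}
    {a b c : Fin 3} (hs : ∀ F : Fin 3 → ℝ, ∑ k, F k = F a + F b + F c)
    (hu : Continuous u) (hα : Continuous α) (hβ : Continuous β) (hφ : Continuous φ) (hκ : Continuous κ)
    (h2 : ∀ x ξ, r < ‖ξ‖ → u (x, ξ) = 0)
    (zφ : ∀ x, T ≤ ‖x - x1‖ → φ x = 0) (zκ : ∀ x, T ≤ ‖x - x1‖ → κ x = 0) :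
    Integrable (fun p : E3 × E3 => u p * (α p.2 * φ p.1 + κ p.1 * ⟪p.1 - x1, β p.2⟫)) ∧
    Integrable (fun x => ((∫ ξ, u (x, ξ) * α ξ) * φ x + (∫ ξ, u (x, ξ) * β ξ a) * (κ x * (x - x1) a)
      + (∫ ξ, u (x, ξ) * β ξ b) * (κ x * (x - x1) b) + (∫ ξ, u (x, ξ) * β ξ c) * (κ x * (x - x1) c))) ∧
    ∫ x, ((∫ ξ, u (x, ξ) * α ξ) * φ x + (∫ ξ, u (x, ξ) * β ξ a) * (κ x * (x - x1) a)
      + (∫ ξ, u (x, ξ) * β ξ b) * (κ x * (x - x1) b) + (∫ ξ, u (x, ξ) * β ξ c) * (κ x * (x - x1) c))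
    = ∫ p : E3 × E3, u p * (α p.2 * φ p.1 + κ p.1 * ⟪p.1 - x1, β p.2⟫) := by
  have hi : Integrable (fun p : E3 × E3 => u p * (α p.2 * φ p.1 + κ p.1 * ⟪p.1 - x1, β p.2⟫)) := by
    have := haarV
    refine Continuous.integrable_of_hasCompactSupport (by fun_prop) (cs_prod (x1 := x1) (T := T) (r := r) ?_ ?_)
    · intro x ξ h; simp [zφ x h, zκ x h]
    · intro x ξ h; simp [h2 x ξ h]
  refine ⟨hi, ?_⟩
  rw [Measure.volume_eq_prod] at hi ⊢
  rw [integral_prod _ hi]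
  suffices hh : (fun x => ((∫ ξ, u (x, ξ) * α ξ) * φ x + (∫ ξ, u (x, ξ) * β ξ a) * (κ x * (x - x1) a)
      + (∫ ξ, u (x, ξ) * β ξ b) * (κ x * (x - x1) b) + (∫ ξ, u (x, ξ) * β ξ c) * (κ x * (x - x1) c))) = fun x => ∫ ξ, u (x, ξ) * (α ξ * φ x + κ x * ⟪x - x1, β ξ⟫) by
    rw [hh]
    exact ⟨hi.integral_prod_left, rfl⟩
  funext x
  have hI : ∀ γ : E3 → ℝ, Continuous γ → Integrable (fun ξ => u (x, ξ) * γ ξ) := by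
    intro γ hγ
    refine Continuous.integrable_of_hasCompactSupport (by fun_prop) (HasCompactSupport.intro (isCompact_closedBall (0:E3) r) ?_)
    intro ξ hξ
    rw [h2 x ξ (by simpa using hξ), zero_mul]
  have hb : ∀ i, Continuous fun ξ => β ξ i := fun i => (coord_contDiff (n := 0) i).continuous.comp hβ
  rw [← integral_mul_const, ← integral_mul_const, ← integral_mul_const, ← integral_mul_const,
    ← integral_add, ← integral_add, ← integral_add]
  · congr 1; funext ξ
    rw [inner_abc hs]; ring
  · exact ((((hI _ hα).mul_const _).add ((hI _ (hb a)).mul_const _)).add ((hI _ (hb b)).mul_const _))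
  · exact (hI _ (hb c)).mul_const _
  · exact ((hI _ hα).mul_const _).add ((hI _ (hb a)).mul_const _)
  · exact (hI _ (hb b)).mul_const _
  · exact (hI _ hα).mul_const _
  · exact (hI _ (hb a)).mul_const _

/-- volume of the momentum ball -/
def vr (r : ℝ) : ℝ := (volume : Measure E3).real (closedBall 0 r)

theorem vr_nonneg (r : ℝ) : 0 ≤ vr r := measureReal_nonneg

theorem kin_bound {u q : E3 × E3 → ℝ} {k : E3 → ℝ} {r M : ℝ} (hM : 0 ≤ M)
    (hu : ∀ p, |u p| ≤ M) (h2 : ∀ x ξ, r < ‖ξ‖ → u (x, ξ) = 0)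
    (hk : Integrable k) (hq : ∀ x ξ, ‖ξ‖ ≤ r → |q (x, ξ)| ≤ k x) :
    |∫ p, u p * q p| ≤ M * vr r * ∫ x, k x := by
  have hind : Integrable ((closedBall (0:E3) r).indicator (fun _ => (1:ℝ))) :=
    (integrable_indicator_iff measurableSet_closedBall).2 (integrableOn_const (measure_closedBall_lt_top).ne)
  have hb : Integrable (fun p : E3 × E3 => (M * k p.1) * (closedBall (0:E3) r).indicator (fun _ => (1:ℝ)) p.2) := by
    rw [Measure.volume_eq_prod]
    exact (hk.const_mul M).mul_prod hind
  have := norm_integral_le_of_norm_le hb (f := fun p => u p * q p) (Eventually.of_forall (by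
    rintro ⟨x, ξ⟩
    by_cases h : ‖ξ‖ ≤ r
    · rw [indicator_of_mem (by simpa using h), mul_one, norm_eq_abs, abs_mul]
      exact mul_le_mul (hu _) (hq _ _ h) (abs_nonneg _) hM
    · rw [h2 x ξ (not_le.1 h), indicator_of_notMem (by simpa using h)]; simp))
  rw [norm_eq_abs] at this
  refine this.trans (le_of_eq ?_)
  rw [Measure.volume_eq_prod, integral_prod_mul (fun x => M * k x), integral_indicator measurableSet_closedBall, integral_const_mul]
  simp [vr]; ring

theorem ccint {h : E3 → ℝ} (hc : Continuous h) {R : ℝ} {x1 : E3} (hz : ∀ x, R ≤ ‖x - x1‖ → h x = 0) :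
    HasCompactSupport h ∧ Integrable h := by
  have : HasCompactSupport h := by
    refine HasCompactSupport.intro (isCompact_closedBall x1 R) ?_
    intro x hx
    apply hz
    rw [mem_closedBall, dist_eq_norm, not_le] at hx
    exact hx.le
  exact ⟨this, hc.integrable_of_hasCompactSupport this⟩

theorem Kr_c {ε T : ℝ} (hε : 0 < ε) (x1 : E3) {n : WithTop ℕ∞} {g : ℝ → ℝ} (hg : ContDiff ℝ n g) (t : ℝ) :
    ContDiff ℝ n (Kr ε T x1 g t) :=
  (Kr_contDiff hε x1 hg).comp (contDiff_const.prodMk contDiff_id : ContDiff ℝ n fun x : E3 => (t, x))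

theorem Kdz_c {ε T : ℝ} (hε : 0 < ε) (x1 : E3) {n : WithTop ℕ∞} {g g1 : ℝ → ℝ} (hg : ContDiff ℝ n g)
    (hg1 : ContDiff ℝ n g1) (t : ℝ) (k : Fin 3) :
    ContDiff ℝ n (fun x => Kd ε T x1 g g1 t x * (x - x1) k) :=
  ((Kd_contDiff hε x1 hg hg1).comp (contDiff_const.prodMk contDiff_id : ContDiff ℝ n fun x : E3 => (t, x))).mul
    ((coord_contDiff k).comp (contDiff_id.sub contDiff_const))

theorem field_slice {ε T t r : ℝ} (hε : 0 < ε) {x1 : E3} {g g1 g2 G : ℝ → ℝ} (h : GG g g1 g2 G)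
    {a b c : Fin 3} (hs : ∀ F : Fin 3 → ℝ, ∑ k, F k = F a + F b + F c)
    {u : E3 × E3 → ℝ} {α : E3 → ℝ} {β : E3 → E3}
    (hu : Continuous u) (hα : Continuous α) (hβ : Continuous β)
    (hz : ∀ x ξ, r < ‖ξ‖ → u (x, ξ) = 0)
    {Ea Eb Ec Bb Bc dEa dBb dBc Ein : E3 → ℝ}
    (hEa : ContDiff ℝ 1 Ea) (hEb : ContDiff ℝ 1 Eb) (hEc : ContDiff ℝ 1 Ec)
    (hBb : ContDiff ℝ 1 Bb) (hBc : ContDiff ℝ 1 Bc) (hEin : ContDiff ℝ 2 Ein)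
    (cEa : Continuous dEa) (cBb : Continuous dBb) (cBc : Continuous dBc)
    (h1 : ∀ x, dEa x = pd3 Bc b x - pd3 Bb c x - ∫ ξ, u (x, ξ) * α ξ)
    (h2 : ∀ x, dBb x = -(pd3 Ea c x - pd3 Ec a x) + ∫ ξ, u (x, ξ) * β ξ c)
    (h3 : ∀ x, dBc x = -(pd3 Eb a x - pd3 Ea b x) - ∫ ξ, u (x, ξ) * β ξ b)
    (h4 : ∀ x, pd3 Ea a x + pd3 Eb b x + pd3 Ec c x = ∫ ξ, u (x, ξ) * β ξ a) :
    ∫ x, (dEa x * (-Kr ε T x1 g1 t x) + (Ea x - Ein x) * Kr ε T x1 g2 t x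
        + (dBc x * (Kd ε T x1 g g1 t x * (x - x1) b) + Bc x * (-Kd ε T x1 g1 g2 t x * (x - x1) b))
        - (dBb x * (Kd ε T x1 g g1 t x * (x - x1) c) + Bb x * (-Kd ε T x1 g1 g2 t x * (x - x1) c)))
    = (∫ x, (Ea x - Ein x) * (ε ^ 2 * Kb ε T x1 g g1 g2 t x))
      - (∫ x, (∑ k, pd3 (pd3 Ein k) k x) * Kr ε T x1 g t x)
      - ∫ p : E3 × E3, u p * (α p.2 * (-Kr ε T x1 g1 t p.1) + Kd ε T x1 g g1 t p.1 * ⟪p.1 - x1, β p.2⟫) := by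
  have cg2 : ContDiff ℝ 0 g2 := contDiff_zero.2 h.c2
  have cKr1 := (Kr_c (T := T) hε x1 h.c1 t)
  have cKr := (Kr_c (T := T) hε x1 h.c0 t)
  have cKr2 := (Kr_c (T := T) hε x1 cg2 t).continuous
  have cP := fun k => Kdz_c (T := T) hε x1 h.c0 h.c1 t k
  have cKd : Continuous (Kd ε T x1 g g1 t) := 
    ((Kd_contDiff hε x1 h.c0 h.c1).comp (contDiff_const.prodMk contDiff_id : ContDiff ℝ 1 fun x : E3 => (t, x))).continuous
  have cQ := fun k => (Kdz_c (T := T) hε x1 (h.c1.of_le zero_le_one) cg2 t k).continuous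
  have cKb : Continuous (Kb ε T x1 g g1 g2 t) :=
    (Kb_continuous hε x1 h.c0.continuous h.c1.continuous h.c2).comp (by fun_prop : Continuous fun x : E3 => (t, x))
  have zKr := fun x (hx : T - t ≤ ‖x - x1‖) => Kr_zero (ε := ε) x1 h.z0 hx
  have zKr1 := fun x (hx : T - t ≤ ‖x - x1‖) => Kr_zero (ε := ε) x1 h.z1 hx
  have zKr2 := fun x (hx : T - t ≤ ‖x - x1‖) => Kr_zero (ε := ε) x1 h.z2 hx
  have zKd := fun x (hx : T - t ≤ ‖x - x1‖) => Kd_zero (ε := ε) x1 h.z0 h.z1 hx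
  have zKb := fun x (hx : T - t ≤ ‖x - x1‖) => Kb_zero (ε := ε) x1 h.z0 h.z1 h.z2 hx
  have cEin := hEin.continuous
  have csP := fun k => (ccint (cP k).continuous (R := T - t) (x1 := x1) (fun x hx => by rw [zKd x hx, zero_mul])).1
  have pP : ∀ j k x, pd3 (fun y => Kd ε T x1 g g1 t y * (y - x1) j) k x = _ :=
    fun j k x => Kdz_fderiv hε x1 h.d0 h.d1 t x j k
  have pφ : ∀ k x, pd3 (fun y => -Kr ε T x1 g1 t y) k x = -Kd ε T x1 g1 g2 t x * (x - x1) k := by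
    intro k x
    have := Kr_fderiv (T := T) hε x1 h.d1 t x k
    unfold pd3
    rw [fderiv_fun_neg, neg_apply, this]; ring
  have box : ∀ x, ∑ k, pd3 (fun y => Kd ε T x1 g g1 t y * (y - x1) k) k x
      = Kr ε T x1 g2 t x - ε ^ 2 * Kb ε T x1 g g1 g2 t x := by
    intro x
    rw [← box_eq hε x1 (g := g) (g1 := g1) (g2 := g2) t x]
    refine Finset.sum_congr rfl fun k _ => ?_
    rw [pP]; simp
  have mx := vm_maxwell_slice (φ' := Kr ε T x1 g2 t) hEa hEb hEc hBb hBc cKr1.neg (cP a) (cP b) (cP c)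
    (ccint cKr1.neg.continuous (R := T - t) (x1 := x1) (fun x hx => by simp [zKr1 x hx])).1 (csP a) (csP b) (csP c)
    (by intro x; rw [pP, pP]; simp only [eq_comm (a := b)]; ring) (by intro x; rw [pP, pP]; simp only [eq_comm (a := c)]; ring)
    h1 h2 h3 h4
  obtain ⟨fi, fj, fe⟩ := fub (T := T - t) (x1 := x1) hs hu hα hβ cKr1.neg.continuous cKd hz
    (fun x hx => by simp [zKr1 x hx]) zKd
  have lap := vm_lap hEin cKr cP (ccint cKr.continuous zKr).1 csP
    (fun k x => Kr_fderiv hε x1 h.d0 t x k)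
  simp only [box] at lap
  have boxabc : ∀ x, Kr ε T x1 g2 t x - (pd3 (fun y => Kd ε T x1 g g1 t y * (y - x1) a) a x
      + pd3 (fun y => Kd ε T x1 g g1 t y * (y - x1) b) b x + pd3 (fun y => Kd ε T x1 g g1 t y * (y - x1) c) c x)
      = ε ^ 2 * Kb ε T x1 g g1 g2 t x := by
    intro x
    rw [← hs (fun k => pd3 (fun y => Kd ε T x1 g g1 t y * (y - x1) k) k x), box]; ring
  simp only [boxabc, pφ] at mx
  have i1 : Integrable (fun x => Ein x * (Kr ε T x1 g2 t x)) :=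
    (ccint (by fun_prop) (R := T - t) (x1 := x1) (fun x hx => by simp [zKr2 x hx])).2
  have i2 : Integrable (fun x => Ea x * (ε ^ 2 * Kb ε T x1 g g1 g2 t x)) :=
    (ccint (by have := hEa.continuous; fun_prop) (R := T - t) (x1 := x1) (fun x hx => by simp [zKb x hx])).2
  have i3 : Integrable (fun x => Ein x * (ε ^ 2 * Kb ε T x1 g g1 g2 t x)) :=
    (ccint (by fun_prop) (R := T - t) (x1 := x1) (fun x hx => by simp [zKb x hx])).2
  have i4 : Integrable (fun x => dEa x * (-Kr ε T x1 g1 t x) + Ea x * Kr ε T x1 g2 t x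
        + (dBc x * (Kd ε T x1 g g1 t x * (x - x1) b) + Bc x * (-Kd ε T x1 g1 g2 t x * (x - x1) b))
        - (dBb x * (Kd ε T x1 g g1 t x * (x - x1) c) + Bb x * (-Kd ε T x1 g1 g2 t x * (x - x1) c))) := by
    refine (ccint (R := T - t) (x1 := x1) ?_ ?_).2
    · have a1 := hEa.continuous
      have a2 := hBb.continuous
      have a3 := hBc.continuous
      have a4 := cKr1.continuous
      have a5 := (cP b).continuous
      have a6 := (cP c).continuous
      have a7 := cQ b
      have a8 := cQ c
      simp only [neg_mul]
      fun_prop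
    · intro x hx
      simp [zKr1 x hx, zKr2 x hx, zKd x hx, Kd_zero (ε := ε) x1 h.z1 h.z2 hx]
  have e1 : ∀ x, (dEa x * (-Kr ε T x1 g1 t x) + (Ea x - Ein x) * Kr ε T x1 g2 t x
        + (dBc x * (Kd ε T x1 g g1 t x * (x - x1) b) + Bc x * (-Kd ε T x1 g1 g2 t x * (x - x1) b))
        - (dBb x * (Kd ε T x1 g g1 t x * (x - x1) c) + Bb x * (-Kd ε T x1 g1 g2 t x * (x - x1) c)))
      = (dEa x * (-Kr ε T x1 g1 t x) + Ea x * Kr ε T x1 g2 t x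
        + (dBc x * (Kd ε T x1 g g1 t x * (x - x1) b) + Bc x * (-Kd ε T x1 g1 g2 t x * (x - x1) b))
        - (dBb x * (Kd ε T x1 g g1 t x * (x - x1) c) + Bb x * (-Kd ε T x1 g1 g2 t x * (x - x1) c)))
        - Ein x * (Kr ε T x1 g2 t x) := by intro x; ring
  simp only [e1]
  rw [integral_sub i4 i1, mx, integral_sub i2 fj, fe]
  have e2 : ∀ x, (Ea x - Ein x) * (ε ^ 2 * Kb ε T x1 g g1 g2 t x)
    = Ea x * (ε ^ 2 * Kb ε T x1 g g1 g2 t x) - Ein x * (ε ^ 2 * Kb ε T x1 g g1 g2 t x) := by intro x; ring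
  simp only [e2]
  rw [integral_sub i2 i3, ← lap]
  have e3 : ∀ x, Ein x * (Kr ε T x1 g2 t x - ε ^ 2 * Kb ε T x1 g g1 g2 t x)
    = Ein x * (Kr ε T x1 g2 t x) - Ein x * (ε ^ 2 * Kb ε T x1 g g1 g2 t x) := by intro x; ring
  simp only [e3]
  rw [integral_sub i1 i3]
  ring

theorem kr_bound {ε T t C0 : ℝ} (hε : 0 < ε) (ht : 0 ≤ t) (hT : 0 ≤ T) (hC : 0 ≤ C0) {x1 : E3} {g g1 g2 G : ℝ → ℝ}
    (h : GG g g1 g2 G) {w : E3 → ℝ} (hw : ∀ x, |w x| ≤ C0) :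
    |∫ x, w x * Kr ε T x1 g t x| ≤ C0 * (T * cR) := by
  have hi : Integrable (Kr ε T x1 g t) :=
    (ccint (Kr_c (T := T) hε x1 h.c0 t).continuous (R := T - t) (fun x hx => Kr_zero (ε := ε) x1 h.z0 hx)).2
  have := norm_integral_le_of_norm_le (hi.const_mul C0) (f := fun x => w x * Kr ε T x1 g t x)
    (Eventually.of_forall fun x => by
      rw [norm_eq_abs, abs_mul, abs_of_nonneg (Kr_nonneg hε h t x1 x)]
      exact mul_le_mul_of_nonneg_right (hw x) (Kr_nonneg hε h t x1 x))
  rw [norm_eq_abs, integral_const_mul] at this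
  exact this.trans (mul_le_mul_of_nonneg_left (I1_bound hε h ht hT x1) hC)

theorem init_bound {ε T C0 : ℝ} (hε : 0 < ε) (hT : 0 ≤ T) (hC : 0 ≤ C0) {x1 : E3} {g g1 g2 G : ℝ → ℝ}
    (h : GG g g1 g2 G) {Bb Bc : E3 → ℝ} {b c : Fin 3} (hBb : ContDiff ℝ 1 Bb) (hBc : ContDiff ℝ 1 Bc)
    (hw : ∀ x, |pd3 Bc b x - pd3 Bb c x| ≤ C0) :
    |∫ x, (Bc x * (Kd ε T x1 g g1 0 x * (x - x1) b) - Bb x * (Kd ε T x1 g g1 0 x * (x - x1) c))| ≤ C0 * (T * cR) := by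
  have cs := (ccint (Kr_c (T := T) hε x1 h.c0 0).continuous (R := T - 0) (fun x hx => Kr_zero (ε := ε) x1 h.z0 hx)).1
  have t1 := vm_td hBc (Kr_c (T := T) hε x1 h.c0 0) cs b
  have t2 := vm_td hBb (Kr_c (T := T) hε x1 h.c0 0) cs c
  have e : ∀ k x, pd3 (Kr ε T x1 g 0) k x = Kd ε T x1 g g1 0 x * (x - x1) k :=
    fun k x => Kr_fderiv hε x1 h.d0 0 x k
  simp only [e] at t1 t2
  rw [int_add_zero (t1.1.sub t2.1) (R := fun x => (-(pd3 Bc b x - pd3 Bb c x)) * Kr ε T x1 g 0 x)]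
  · exact kr_bound hε le_rfl hT hC h (fun x => by rw [abs_neg]; exact hw x)
  · simp only [Pi.sub_apply]
    rw [integral_sub t1.1 t2.1, t1.2, t2.2, sub_zero]
  · intro x; simp only [Pi.sub_apply]; ring

theorem kin_slice {ε T t r M C L : ℝ} (hε : 0 < ε) (ht : 0 ≤ t) (hT : 0 ≤ T) (hM : 0 ≤ M) (hC : 0 ≤ C) (hL : 0 ≤ L)
    {x1 : E3} {g g1 g2 G : ℝ → ℝ} (h : GG g g1 g2 G) {u q : E3 × E3 → ℝ} {F : E3 × E3 → E3}
    (hu : ∀ p, |u p| ≤ M) (hz : ∀ x ξ, r < ‖ξ‖ → u (x, ξ) = 0)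
    (hF : ∀ x ξ, ‖x - x1‖ ≤ T - t → ‖F (x, ξ)‖ ≤ L)
    (hq : ∀ x ξ, ‖ξ‖ ≤ r → |q (x, ξ)| ≤ C * Kr ε T x1 g t x * ((rho ε x1 x)⁻¹ + ‖F (x, ξ)‖)) :
    |∫ p, u p * q p| ≤ M * vr r * (C * (cR + L * (T * cR))) := by
  have cK := (Kr_c (T := T) hε x1 h.c0 t).continuous
  have zK := fun x (hx : T - t ≤ ‖x - x1‖) => Kr_zero (ε := ε) x1 h.z0 hx
  have crho : Continuous (fun x => (rho ε x1 x)⁻¹) :=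
    ((rho_contDiff hε x1 (n := 0)).continuous).inv₀ (fun x => (rho_pos hε x1 x).ne')
  have i1 : Integrable (Kr ε T x1 g t) := (ccint cK (R := T - t) zK).2
  have i2 : Integrable (fun x => Kr ε T x1 g t x * (rho ε x1 x)⁻¹) :=
    (ccint (cK.mul crho) (R := T - t) (x1 := x1) (fun x hx => by simp [zK x hx])).2
  have hk : Integrable (fun x => C * (Kr ε T x1 g t x * (rho ε x1 x)⁻¹ + L * Kr ε T x1 g t x)) :=
    (i2.add (i1.const_mul L)).const_mul C
  refine (kin_bound hM hu hz hk ?_).trans ?_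
  · intro x ξ hξ
    refine (hq x ξ hξ).trans ?_
    have k0 := Kr_nonneg (T := T) hε h t x1 x
    by_cases hx : ‖x - x1‖ ≤ T - t
    · have := mul_le_mul_of_nonneg_left (hF x ξ hx) (mul_nonneg hC k0)
      linarith
    · rw [zK x (not_le.1 hx).le]; simp
  · have := vr_nonneg r
    refine mul_le_mul_of_nonneg_left ?_ (by positivity)
    rw [integral_const_mul, integral_add i2 (i1.const_mul L), integral_const_mul]
    have a1 := I2_bound (T := T) hε h t x1
    have a2 := mul_le_mul_of_nonneg_left (I1_bound hε h ht hT x1) hL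
    exact mul_le_mul_of_nonneg_left (by linarith) hC

structure Scen (τ r M C0 : ℝ) (a b c : Fin 3) (α : E3 → ℝ) (β : E3 → E3) (u : ℝ → E3 × E3 → ℝ)
    (Fc : ℝ → E3 × E3 → E3) (Ea Eb Ec Bb Bc : ℝ → E3 → ℝ) (Ein : E3 → ℝ) : Prop where
  hM : 0 ≤ M
  hC0 : 0 ≤ C0
  hs : ∀ F : Fin 3 → ℝ, ∑ k, F k = F a + F b + F c
  cα : ContDiff ℝ 1 α
  cβ : ContDiff ℝ 1 β
  ru : ContDiffOn ℝ 1 (fun p : ℝ × (E3 × E3) => u p.1 p.2) (Ico 0 τ ×ˢ univ)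
  rEa : ContDiffOn ℝ 1 (fun p : ℝ × E3 => Ea p.1 p.2) (Ico 0 τ ×ˢ univ)
  rEb : ContDiffOn ℝ 1 (fun p : ℝ × E3 => Eb p.1 p.2) (Ico 0 τ ×ˢ univ)
  rEc : ContDiffOn ℝ 1 (fun p : ℝ × E3 => Ec p.1 p.2) (Ico 0 τ ×ˢ univ)
  rBb : ContDiffOn ℝ 1 (fun p : ℝ × E3 => Bb p.1 p.2) (Ico 0 τ ×ˢ univ)
  rBc : ContDiffOn ℝ 1 (fun p : ℝ × E3 => Bc p.1 p.2) (Ico 0 τ ×ˢ univ)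
  uM : ∀ t ∈ Ico 0 τ, ∀ p, |u t p| ≤ M
  uz : ∀ t ∈ Ico 0 τ, ∀ x ξ, r < ‖ξ‖ → u t (x, ξ) = 0
  hV : ∀ t ∈ Ioo 0 τ, ∀ p, deriv (fun s => u s p) t = -fderiv ℝ (u t) p (vrel p.2, Fc t p)
  cF : ∀ t ∈ Ioo 0 τ, ∀ i, ContDiff ℝ 1 (fun p => Fc t p i)
  dF : ∀ t ∈ Ioo 0 τ, ∀ p, ∑ i, fderiv ℝ (fun p => Fc t p i) p (0, e3 i) = 0
  m1 : ∀ t ∈ Ioo 0 τ, ∀ x, deriv (fun s => Ea s x) t = pd3 (Bc t) b x - pd3 (Bb t) c x - ∫ ξ, u t (x, ξ) * α ξ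
  m2 : ∀ t ∈ Ioo 0 τ, ∀ x, deriv (fun s => Bb s x) t = -(pd3 (Ea t) c x - pd3 (Ec t) a x) + ∫ ξ, u t (x, ξ) * β ξ c
  m3 : ∀ t ∈ Ioo 0 τ, ∀ x, deriv (fun s => Bc s x) t = -(pd3 (Eb t) a x - pd3 (Ea t) b x) - ∫ ξ, u t (x, ξ) * β ξ b
  m4 : ∀ t ∈ Ioo 0 τ, ∀ x, pd3 (Ea t) a x + pd3 (Eb t) b x + pd3 (Ec t) c x = ∫ ξ, u t (x, ξ) * β ξ a
  cEin : ContDiff ℝ 2 Ein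
  E0 : ∀ x, Ea 0 x = Ein x
  Einb : ∀ x, |Ein x| ≤ C0
  lap : ∀ x, |∑ k, pd3 (pd3 Ein k) k x| ≤ C0
  cBb : ContDiff ℝ 1 (Bb 0)
  cBc : ContDiff ℝ 1 (Bc 0)
  curl0 : ∀ x, |pd3 (Bc 0) b x - pd3 (Bb 0) c x| ≤ C0

/-- field identity integrated in time -/
theorem scen_field {τ r M C0 : ℝ} {a b c : Fin 3} {α : E3 → ℝ} {β : E3 → E3} {u : ℝ → E3 × E3 → ℝ}
    {Fc : ℝ → E3 × E3 → E3} {Ea Eb Ec Bb Bc : ℝ → E3 → ℝ} {Ein : E3 → ℝ}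
    (S : Scen τ r M C0 a b c α β u Fc Ea Eb Ec Bb Bc Ein) {ε T : ℝ} (hε : 0 < ε) (hT : T ∈ Ioo 0 τ)
    (x1 : E3) {g g1 g2 G : ℝ → ℝ} (h : GG g g1 g2 G) :
    ∃ W : ℝ → ℝ, ContinuousOn W (Icc 0 T) ∧ |∫ t in (0:ℝ)..T, W t| ≤ C0 * (T * cR) ∧
      ∀ t ∈ Ioo 0 T, W t = (∫ x, (Ea t x - Ein x) * (ε ^ 2 * Kb ε T x1 g g1 g2 t x))
      - (∫ x, (∑ k, pd3 (pd3 Ein k) k x) * Kr ε T x1 g t x)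
      - ∫ p : E3 × E3, u t p * (α p.2 * (-Kr ε T x1 g1 t p.1) + Kd ε T x1 g g1 t p.1 * ⟪p.1 - x1, β p.2⟫) := by
  obtain ⟨Da, cDa, -, hDa, -, sa⟩ := vm_joint S.rEa
  obtain ⟨Db, cDb, -, hDb, -, sb⟩ := vm_joint S.rBb
  obtain ⟨Dc, cDc, -, hDc, -, sc⟩ := vm_joint S.rBc
  obtain ⟨-, -, -, -, -, sEb⟩ := vm_joint S.rEb
  obtain ⟨-, -, -, -, -, sEc⟩ := vm_joint S.rEc
  obtain ⟨-, -, -, -, -, su⟩ := vm_joint S.ru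
  have cg2 : ContDiff ℝ 0 g2 := contDiff_zero.2 h.c2
  have cK1 := (Kr_contDiff (T := T) hε x1 h.c1).continuous
  have cK2 := (Kr_contDiff (T := T) hε x1 cg2).continuous
  have cKd := (Kd_contDiff (T := T) hε x1 h.c0 h.c1).continuous
  have cKd1 := (Kd_contDiff (T := T) hε x1 (h.c1.of_le zero_le_one) cg2).continuous
  have czz : ∀ k, Continuous fun p : ℝ × E3 => (p.2 - x1) k := fun k =>
    (coord_contDiff (n := 0) k).continuous.comp (by fun_prop)
  have hsub : Icc 0 T ×ˢ (univ : Set E3) ⊆ Ico 0 τ ×ˢ univ :=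
    prod_mono (fun t ht => ⟨ht.1, ht.2.trans_lt hT.2⟩) subset_rfl
  have cA := S.rEa.continuousOn.mono hsub
  have cB := S.rBb.continuousOn.mono hsub
  have cC := S.rBc.continuousOn.mono hsub
  have cE : Continuous fun p : ℝ × E3 => Ein p.2 := S.cEin.continuous.comp continuous_snd
  have cda : ContinuousOn (fun p : ℝ × E3 => Da p (1, 0)) (Icc 0 T ×ˢ univ) :=
    (cDa.mono hsub).clm_apply continuousOn_const
  have cdb : ContinuousOn (fun p : ℝ × E3 => Db p (1, 0)) (Icc 0 T ×ˢ univ) :=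
    (cDb.mono hsub).clm_apply continuousOn_const
  have cdc : ContinuousOn (fun p : ℝ × E3 => Dc p (1, 0)) (Icc 0 T ×ˢ univ) :=
    (cDc.mono hsub).clm_apply continuousOn_const
  have hK : ∀ t ∈ Icc 0 T, ∀ x, x ∉ closedBall x1 T → T - t ≤ ‖x - x1‖ := by
    intro t ht x hx
    rw [mem_closedBall, dist_eq_norm, not_le] at hx
    have := ht.1
    linarith
  obtain ⟨w1, w2⟩ := vm_time (μ := (volume : Measure E3)) hT.1.le
    (h := fun t x => (Ea t x - Ein x) * (-Kr ε T x1 g1 t x) + Bc t x * (Kd ε T x1 g g1 t x * (x - x1) b)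
      - Bb t x * (Kd ε T x1 g g1 t x * (x - x1) c))
    (ht := fun t x => Da (t, x) (1, 0) * (-Kr ε T x1 g1 t x) + (Ea t x - Ein x) * Kr ε T x1 g2 t x
        + (Dc (t, x) (1, 0) * (Kd ε T x1 g g1 t x * (x - x1) b) + Bc t x * (-Kd ε T x1 g1 g2 t x * (x - x1) b))
        - (Db (t, x) (1, 0) * (Kd ε T x1 g g1 t x * (x - x1) c) + Bb t x * (-Kd ε T x1 g1 g2 t x * (x - x1) c)))
    (isCompact_closedBall x1 T)
    (((cA.sub cE.continuousOn).mul cK1.neg.continuousOn).add (cC.mul (cKd.mul (czz b)).continuousOn) |>.sub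
      (cB.mul (cKd.mul (czz c)).continuousOn))
    ((((cda.mul cK1.neg.continuousOn).add ((cA.sub cE.continuousOn).mul cK2.continuousOn)).add
      ((cdc.mul (cKd.mul (czz b)).continuousOn).add (cC.mul (cKd1.neg.mul (czz b)).continuousOn))).sub
      ((cdb.mul (cKd.mul (czz c)).continuousOn).add (cB.mul (cKd1.neg.mul (czz c)).continuousOn)))
    (by
      intro t ht x
      have ht' : t ∈ Ioo 0 τ := ⟨ht.1, ht.2.trans hT.2⟩
      have d1 := (Kr_dt (ε := ε) (T := T) x1 h.d1 t x).fun_neg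
      rw [neg_neg] at d1
      have d2 := Kd_dt (ε := ε) (T := T) x1 h.d0 h.d1 t x
      exact ((((hDa t ht' x).sub_const (Ein x)).fun_mul d1).fun_add
        ((hDc t ht' x).fun_mul (d2.mul_const ((x - x1) b)))).fun_sub
        ((hDb t ht' x).fun_mul (d2.mul_const ((x - x1) c))))
    (by
      intro t ht x hx
      have hx := hK t ht x hx
      simp [Kr_zero (ε := ε) x1 h.z1 hx, Kd_zero (ε := ε) x1 h.z0 h.z1 hx])
    (by
      intro t ht x hx
      have hx := hK t ht x hx
      simp [Kr_zero (ε := ε) x1 h.z1 hx, Kr_zero (ε := ε) x1 h.z2 hx, Kd_zero (ε := ε) x1 h.z0 h.z1 hx,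
        Kd_zero (ε := ε) x1 h.z1 h.z2 hx])
  refine ⟨_, w1, ?_, ?_⟩
  · rw [w2]
    have hTz : ∀ x : E3, T - T ≤ ‖x - x1‖ := fun x => by rw [sub_self]; exact norm_nonneg _
    have e1 : ∀ x, Kr ε T x1 g1 T x = 0 := fun x => Kr_zero x1 h.z1 (hTz x)
    have e2 : ∀ x, Kd ε T x1 g g1 T x = 0 := fun x => Kd_zero x1 h.z0 h.z1 (hTz x)
    simp only [e1, e2, S.E0]
    simp only [neg_zero, mul_zero, zero_mul, add_zero, integral_zero, zero_sub, abs_neg, sub_self, zero_add]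
    exact init_bound hε hT.1.le S.hC0 h S.cBb S.cBc S.curl0
  · intro t ht
    have ht' : t ∈ Ioo 0 τ := ⟨ht.1, ht.2.trans hT.2⟩
    have hin : ∀ x : E3, (t, x) ∈ Ico 0 τ ×ˢ (univ : Set E3) := fun x => ⟨⟨ht'.1.le, ht'.2⟩, mem_univ _⟩
    have hcd : ∀ (D : ℝ × E3 → (ℝ × E3 →L[ℝ] ℝ)), ContinuousOn D (Ico 0 τ ×ˢ univ) →
        Continuous (fun x => D (t, x) (1, 0)) := by
      intro D hD
      have : Continuous fun x : E3 => D (t, x) := hD.comp_continuous (by fun_prop) hin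
      exact this.clm_apply continuous_const
    refine field_slice hε h S.hs (su t ht').continuous S.cα.continuous S.cβ.continuous
      (S.uz t ⟨ht'.1.le, ht'.2⟩) (sa t ht') (sEb t ht') (sEc t ht') (sb t ht') (sc t ht') S.cEin
      (hcd _ cDa) (hcd _ cDb) (hcd _ cDc) ?_ ?_ ?_ (S.m4 t ht')
    · intro x; rw [← (hDa t ht' x).deriv]; exact S.m1 t ht' x
    · intro x; rw [← (hDb t ht' x).deriv]; exact S.m2 t ht' x
    · intro x; rw [← (hDc t ht' x).deriv]; exact S.m3 t ht' x

/-- kinetic identity integrated in time -/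
theorem scen_kin {τ r M C0 : ℝ} {a b c : Fin 3} {α : E3 → ℝ} {β : E3 → E3} {u : ℝ → E3 × E3 → ℝ}
    {Fc : ℝ → E3 × E3 → E3} {Ea Eb Ec Bb Bc : ℝ → E3 → ℝ} {Ein : E3 → ℝ}
    (S : Scen τ r M C0 a b c α β u Fc Ea Eb Ec Bb Bc Ein) {ε T C : ℝ} (hε : 0 < ε) (hT : T ∈ Ioo 0 τ)
    (x1 : E3) {g g1 g2 G : ℝ → ℝ} (h : GG g g1 g2 G) (hC : 0 ≤ C)
    (hA : ∀ x ξ, ‖ξ‖ ≤ r → |Aw α β ε x1 (x, ξ)| ≤ C) :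
    ∃ W : ℝ → ℝ, ContinuousOn W (Icc 0 T) ∧ |∫ t in (0:ℝ)..T, W t| ≤ M * vr r * (C * (T * cR)) ∧
      ∀ t ∈ Ioo 0 T, W t = ∫ p : E3 × E3, u t p * (-(Aw α β ε x1 p * Kr ε T x1 g1 t p.1)
        + fderiv ℝ (fun p : E3 × E3 => Aw α β ε x1 p * Kr ε T x1 g t p.1) p (vrel p.2, Fc t p)) := by
  have := haarV
  obtain ⟨D, cD, -, hD, -, su⟩ := vm_joint S.ru
  have cA := Aw_contDiff S.cα S.cβ hε x1
  have cK := (Kr_contDiff (T := T) hε x1 h.c0)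
  have cK1 := (Kr_contDiff (T := T) hε x1 h.c1).continuous
  have hsub : Icc 0 T ×ˢ (univ : Set (E3 × E3)) ⊆ Ico 0 τ ×ˢ univ :=
    prod_mono (fun t ht => ⟨ht.1, ht.2.trans_lt hT.2⟩) subset_rfl
  have cU := S.ru.continuousOn.mono hsub
  have cd : ContinuousOn (fun p : ℝ × (E3 × E3) => D p (1, 0)) (Icc 0 T ×ˢ univ) :=
    (cD.mono hsub).clm_apply continuousOn_const
  have cA' : Continuous fun p : ℝ × (E3 × E3) => Aw α β ε x1 p.2 := cA.continuous.comp continuous_snd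
  have cK' : Continuous fun p : ℝ × (E3 × E3) => Kr ε T x1 g p.1 p.2.1 :=
    cK.continuous.comp (by fun_prop : Continuous fun p : ℝ × (E3 × E3) => (p.1, p.2.1))
  have cK1' : Continuous fun p : ℝ × (E3 × E3) => Kr ε T x1 g1 p.1 p.2.1 :=
    cK1.comp (by fun_prop : Continuous fun p : ℝ × (E3 × E3) => (p.1, p.2.1))
  have hK : ∀ t ∈ Icc 0 T, ∀ p : E3 × E3, p ∉ closedBall x1 T ×ˢ closedBall (0 : E3) r →
      T - t ≤ ‖p.1 - x1‖ ∨ r < ‖p.2‖ := by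
    rintro t ht ⟨x, ξ⟩ hp
    by_contra! hh
    apply hp
    have := ht.1
    exact ⟨by rw [mem_closedBall, dist_eq_norm]; linarith [hh.1], by simpa using hh.2⟩
  have hDz : ∀ t ∈ Icc 0 T, ∀ x ξ, r < ‖ξ‖ → D (t, (x, ξ)) (1, 0) = 0 := by
    intro t ht x ξ hξ
    have hpos : ∀ s ∈ Ioo 0 τ, D (s, (x, ξ)) (1, 0) = 0 := by
      intro s hs
      refine (hD s hs (x, ξ)).unique ?_
      have : (fun s => u s (x, ξ)) =ᶠ[𝓝 s] fun _ => 0 := by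
        filter_upwards [Ioo_mem_nhds hs.1 hs.2] with s' hs'
        exact S.uz s' ⟨hs'.1.le, hs'.2⟩ x ξ hξ
      exact (hasDerivAt_const s (0:ℝ)).congr_of_eventuallyEq this
    rcases ht.1.eq_or_lt with h0 | h0
    · subst h0
      have c1 : ContinuousOn (fun s => D (s, (x, ξ)) (1, 0)) (Ico 0 τ) := by
        have : ContinuousOn (fun s => D (s, (x, ξ))) (Ico 0 τ) :=
          cD.comp (by fun_prop) (fun s hs => ⟨hs, mem_univ _⟩)
        exact this.clm_apply continuousOn_const
      have c2 : Tendsto (fun s => D (s, (x, ξ)) (1, 0)) (𝓝[Ioo 0 τ] 0) (𝓝 (D (0, (x, ξ)) (1, 0))) :=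
        (c1 0 ⟨le_rfl, hT.1.trans hT.2⟩).mono_left (nhdsWithin_mono _ Ioo_subset_Ico_self)
      have c3 : Tendsto (fun s => D (s, (x, ξ)) (1, 0)) (𝓝[Ioo 0 τ] 0) (𝓝 0) :=
        tendsto_const_nhds.congr' (by
          filter_upwards [self_mem_nhdsWithin] with s hs
          exact (hpos s hs).symm)
      have : (𝓝[Ioo 0 τ] (0:ℝ)).NeBot := left_nhdsWithin_Ioo_neBot (hT.1.trans hT.2)
      exact tendsto_nhds_unique c2 c3
    · exact hpos t ⟨h0, ht.2.trans_lt hT.2⟩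
  obtain ⟨w1, w2⟩ := vm_time (μ := (volume : Measure (E3 × E3))) hT.1.le
    (h := fun t p => u t p * (Aw α β ε x1 p * Kr ε T x1 g t p.1))
    (ht := fun t p => D (t, p) (1, 0) * (Aw α β ε x1 p * Kr ε T x1 g t p.1)
      + u t p * (-(Aw α β ε x1 p * Kr ε T x1 g1 t p.1)))
    ((isCompact_closedBall x1 T).prod (isCompact_closedBall (0 : E3) r))
    (cU.mul (cA'.mul cK').continuousOn)
    ((cd.mul (cA'.mul cK').continuousOn).add (cU.mul (cA'.mul cK1').neg.continuousOn))
    (by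
      intro t ht p
      have ht' : t ∈ Ioo 0 τ := ⟨ht.1, ht.2.trans hT.2⟩
      have d1 := (Kr_dt (ε := ε) (T := T) x1 h.d0 t p.1).const_mul (Aw α β ε x1 p)
      rw [mul_neg] at d1
      exact (hD t ht' p).fun_mul d1)
    (by
      intro t ht p hp
      rcases hK t ht p hp with hx | hx
      · simp [Kr_zero (ε := ε) x1 h.z0 hx]
      · have := S.uz t ⟨ht.1, ht.2.trans_lt hT.2⟩ p.1 p.2 hx
        simp only [Prod.mk.eta] at this
        simp [this])
    (by
      intro t ht p hp
      rcases hK t ht p hp with hx | hx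
      · simp [Kr_zero (ε := ε) x1 h.z0 hx, Kr_zero (ε := ε) x1 h.z1 hx]
      · have := S.uz t ⟨ht.1, ht.2.trans_lt hT.2⟩ p.1 p.2 hx
        have h2 := hDz t ht p.1 p.2 hx
        simp only [Prod.mk.eta] at this h2
        simp [this, h2])
  refine ⟨_, w1, ?_, ?_⟩
  · rw [w2]
    have hTz : ∀ x : E3, T - T ≤ ‖x - x1‖ := fun x => by rw [sub_self]; exact norm_nonneg _
    have e1 : ∀ x, Kr ε T x1 g T x = 0 := fun x => Kr_zero x1 h.z0 (hTz x)
    simp only [e1]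
    simp only [mul_zero, integral_zero, zero_sub, abs_neg]
    have h0 : (0:ℝ) ∈ Ico 0 τ := ⟨le_rfl, hT.1.trans hT.2⟩
    have i1 : Integrable (Kr ε T x1 g 0) :=
      (ccint (Kr_c (T := T) hε x1 h.c0 0).continuous (R := T - 0) (fun x hx => Kr_zero (ε := ε) x1 h.z0 hx)).2
    refine (kin_bound S.hM (S.uM 0 h0) (S.uz 0 h0) (i1.const_mul C) ?_).trans ?_
    · intro x ξ hξ
      have k0 := Kr_nonneg (T := T) hε h 0 x1 x
      show |Aw α β ε x1 (x, ξ) * Kr ε T x1 g 0 x| ≤ _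
      rw [abs_mul, abs_of_nonneg k0]
      exact mul_le_mul_of_nonneg_right (hA x ξ hξ) k0
    · have := vr_nonneg r
      have := S.hM
      rw [integral_const_mul]
      have := I1_bound (T := T) hε h le_rfl hT.1.le x1
      gcongr
  · intro t ht
    have ht' : t ∈ Ioo 0 τ := ⟨ht.1, ht.2.trans hT.2⟩
    refine vlasov_slice (x1 := x1) (T := T - t) (r := r) (su t ht')
      (Ψ := fun p => Aw α β ε x1 p * Kr ε T x1 g t p.1)
      (cA.mul ((Kr_c hε x1 h.c0 t).comp contDiff_fst)) (S.cF t ht') (S.dF t ht') ?_ (S.uz t ⟨ht'.1.le, ht'.2⟩) ?_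
    · intro x ξ hx
      show _ * Kr ε T x1 g t x = 0
      rw [Kr_zero x1 h.z0 hx, mul_zero]
    · intro p
      rw [← (hD t ht' p).deriv]; exact S.hV t ht' p

theorem exp_int {Λ T : ℝ} (hΛ : 0 < Λ) : ∫ t in (0:ℝ)..T, Real.exp (Λ * t) ≤ Real.exp (Λ * T) / Λ := by
  have hd : ∀ t ∈ uIcc 0 T, HasDerivAt (fun s => Real.exp (Λ * s) / Λ) (Real.exp (Λ * t)) t := by
    intro t _
    have := ((((hasDerivAt_id t).const_mul Λ).exp).div_const Λ)
    simp only [id, mul_one] at this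
    rwa [mul_div_assoc, div_self hΛ.ne', mul_one] at this
  rw [intervalIntegral.integral_eq_sub_of_hasDerivAt hd (by
    apply Continuous.intervalIntegrable; fun_prop)]
  have : 0 ≤ Real.exp (Λ * 0) / Λ := by positivity
  linarith

theorem scen_eps {τ r M C0 : ℝ} {a b c : Fin 3} {α : E3 → ℝ} {β : E3 → E3} {u : ℝ → E3 × E3 → ℝ}
    {Fc : ℝ → E3 × E3 → E3} {Ea Eb Ec Bb Bc : ℝ → E3 → ℝ} {Ein : E3 → ℝ}
    (S : Scen τ r M C0 a b c α β u Fc Ea Eb Ec Bb Bc Ein) {ε T C A Λ : ℝ} (hε : 0 < ε) (hT : T ∈ Ioo 0 τ)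
    (x1 : E3) {g g1 g2 G : ℝ → ℝ} (h : GG g g1 g2 G) (hC : 0 ≤ C) (hA0 : 0 ≤ A) (hΛ : 0 < Λ)
    (hQ : ∀ ε, 0 < ε → ∀ (T : ℝ) (g g1 : ℝ → ℝ), (∀ s, HasDerivAt g (g1 s) s) → (∀ s, 0 ≤ g s) →
      ∀ (t : ℝ) (x1 x ξ : E3), ‖ξ‖ ≤ r →
      |Aw α β ε x1 (x, ξ)| ≤ C ∧ ∀ F : E3,
      |(-(Aw α β ε x1 (x, ξ) * Kr ε T x1 g1 t x)
          + fderiv ℝ (fun p : E3 × E3 => Aw α β ε x1 p * Kr ε T x1 g t p.1) (x, ξ) (vrel ξ, F))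
        - (-(α ξ * Kr ε T x1 g1 t x) + Kd ε T x1 g g1 t x * ⟪x - x1, β ξ⟫)|
      ≤ C * Kr ε T x1 g t x * ((rho ε x1 x)⁻¹ + ‖F‖))
    (hF : ∀ t ∈ Icc 0 T, ∀ x ξ, ‖x - x1‖ ≤ T - t → ‖Fc t (x, ξ)‖ ≤ A * Real.exp (Λ * t)) :
    |∫ t in (0:ℝ)..T, ∫ x, (Ea t x - Ein x) * (ε ^ 2 * Kb ε T x1 g g1 g2 t x)| ≤
      (C0 * (T * cR) + M * vr r * (C * (T * cR))) + (T * (C0 * (T * cR) + M * vr r * C * cR)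
        + M * vr r * C * (T * cR) * A * (Real.exp (Λ * T) / Λ)) := by
  obtain ⟨W1, c1, b1, e1⟩ := scen_field S hε hT x1 h
  obtain ⟨W2, c2, b2, e2⟩ := scen_kin S hε hT x1 h hC
    (fun x ξ hξ => (hQ ε hε T g g1 h.d0 h.nn 0 x1 x ξ hξ).1)
  have hM := S.hM
  have hC0 := S.hC0
  have hvr := vr_nonneg r
  have hcR := cR_nonneg
  have hT0 := hT.1.le
  set N : ℝ → ℝ := fun t => ∫ x, (Ea t x - Ein x) * (ε ^ 2 * Kb ε T x1 g g1 g2 t x) with hN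
  show |∫ t in (0:ℝ)..T, N t| ≤ _
  have i1 : IntervalIntegrable W1 volume 0 T := ContinuousOn.intervalIntegrable (by rwa [uIcc_of_le hT0])
  have i2 : IntervalIntegrable W2 volume 0 T := ContinuousOn.intervalIntegrable (by rwa [uIcc_of_le hT0])
  have key : ∀ t ∈ Ioo 0 T, |N t - (W1 t + W2 t)| ≤
      (C0 * (T * cR) + M * vr r * C * cR) + (M * vr r * C * (T * cR) * A) * Real.exp (Λ * t) := by
    intro t ht
    have ht' : t ∈ Ioo 0 τ := ⟨ht.1, ht.2.trans hT.2⟩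
    have htI : t ∈ Ico 0 τ := ⟨ht'.1.le, ht'.2⟩
    obtain ⟨-, -, -, -, -, su⟩ := vm_joint S.ru
    have cu := (su t ht').continuous
    have cKd : Continuous (Kd ε T x1 g g1 t) := 
      ((Kd_contDiff hε x1 h.c0 h.c1).comp (contDiff_const.prodMk contDiff_id : ContDiff ℝ 1 fun x : E3 => (t, x))).continuous
    have cK1 := (Kr_c (T := T) hε x1 h.c1 t).continuous
    obtain ⟨iY, -, -⟩ := fub (T := T - t) (x1 := x1) S.hs cu S.cα.continuous S.cβ.continuous
      cK1.neg cKd (S.uz t htI)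
      (fun x hx => by simp [Kr_zero (ε := ε) x1 h.z1 hx]) (fun x hx => Kd_zero (ε := ε) x1 h.z0 h.z1 hx)
    simp only [Pi.neg_apply] at iY
    have cAw := Aw_contDiff S.cα S.cβ hε x1
    have cPs : ContDiff ℝ 1 (fun p : E3 × E3 => Aw α β ε x1 p * Kr ε T x1 g t p.1) :=
      cAw.mul ((Kr_c hε x1 h.c0 t).comp contDiff_fst)
    have cFc : Continuous (Fc t) := by
      have : Fc t = fun p => ∑ i : Fin 3, Fc t p i • e3 i := funext fun p => vec_eq_sum _
      rw [this]
      exact continuous_finsetSum _ fun i _ => ((S.cF t ht' i).continuous).smul continuous_const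
    have iX : Integrable (fun p : E3 × E3 => u t p * (-(Aw α β ε x1 p * Kr ε T x1 g1 t p.1)
        + fderiv ℝ (fun p : E3 × E3 => Aw α β ε x1 p * Kr ε T x1 g t p.1) p (vrel p.2, Fc t p))) := by
      have := haarV
      have cf : Continuous fun p : E3 × E3 => 
          fderiv ℝ (fun p : E3 × E3 => Aw α β ε x1 p * Kr ε T x1 g t p.1) p (vrel p.2, Fc t p) :=
        (cPs.continuous_fderiv one_ne_zero).clm_apply
          ((vrel_contDiff.continuous.comp continuous_snd).prodMk cFc)
      refine Continuous.integrable_of_hasCompactSupport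
        (cu.mul (((cAw.continuous.mul (cK1.comp continuous_fst)).neg).add cf))
        (cs_prod (x1 := x1) (T := T - t + 1) (r := r) ?_ ?_)
      · intro x ξ hx
        have := fderiv_zero_of_x (x1 := x1) (T := T - t)
          (u := fun p : E3 × E3 => Aw α β ε x1 p * Kr ε T x1 g t p.1)
          (fun x ξ hx => by simp [Kr_zero (ε := ε) x1 h.z0 hx]) x ξ (by linarith)
        simp only [this]
        simp [Kr_zero (ε := ε) (g := g1) x1 h.z1 (show T - t ≤ ‖x - x1‖ by linarith)]
      · intro x ξ hx
        rw [S.uz t htI x ξ hx, zero_mul]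
    have e3 : N t - (W1 t + W2 t) = (∫ x, (∑ k, pd3 (pd3 Ein k) k x) * Kr ε T x1 g t x)
        - ∫ p : E3 × E3, u t p * ((-(Aw α β ε x1 p * Kr ε T x1 g1 t p.1)
        + fderiv ℝ (fun p : E3 × E3 => Aw α β ε x1 p * Kr ε T x1 g t p.1) p (vrel p.2, Fc t p))
        - (α p.2 * (-Kr ε T x1 g1 t p.1) + Kd ε T x1 g g1 t p.1 * ⟪p.1 - x1, β p.2⟫)) := by
      have : ∀ p : E3 × E3, u t p * ((-(Aw α β ε x1 p * Kr ε T x1 g1 t p.1)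
        + fderiv ℝ (fun p : E3 × E3 => Aw α β ε x1 p * Kr ε T x1 g t p.1) p (vrel p.2, Fc t p))
        - (α p.2 * (-Kr ε T x1 g1 t p.1) + Kd ε T x1 g g1 t p.1 * ⟪p.1 - x1, β p.2⟫))
        = _ - _ := fun p => mul_sub _ _ _
      simp only [this]
      rw [integral_sub iX iY, e1 t ht, e2 t ht]
      ring
    rw [e3]
    refine (abs_sub _ _).trans ?_
    have k1 := kr_bound (w := fun x => ∑ k, pd3 (pd3 Ein k) k x) (x1 := x1) hε ht.1.le hT0 hC0 h S.lap
    have k2 := kin_slice (u := u t) (F := Fc t) (r := r) (L := A * Real.exp (Λ * t)) hε ht.1.le hT0 hM hC (by positivity) h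
      (S.uM t htI) (S.uz t htI) (hF t ⟨ht.1.le, ht.2.le⟩)
      (q := fun p => ((-(Aw α β ε x1 p * Kr ε T x1 g1 t p.1)
        + fderiv ℝ (fun p : E3 × E3 => Aw α β ε x1 p * Kr ε T x1 g t p.1) p (vrel p.2, Fc t p))
        - (α p.2 * (-Kr ε T x1 g1 t p.1) + Kd ε T x1 g g1 t p.1 * ⟪p.1 - x1, β p.2⟫)))
      (by
        intro x ξ hξ
        have := (hQ ε hε T g g1 h.d0 h.nn t x1 x ξ hξ).2 (Fc t (x, ξ))
        simp only [mul_neg]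
        exact this)
    refine (add_le_add k1 k2).trans (le_of_eq ?_)
    ring
  by_cases hNi : IntervalIntegrable N volume 0 T
  · have hsplit : ∫ t in (0:ℝ)..T, N t = (∫ t in (0:ℝ)..T, W1 t) + (∫ t in (0:ℝ)..T, W2 t)
        + ∫ t in (0:ℝ)..T, (N t - (W1 t + W2 t)) := by
      rw [intervalIntegral.integral_sub hNi (i1.add i2), intervalIntegral.integral_add i1 i2]; ring
    have hb : |∫ t in (0:ℝ)..T, (N t - (W1 t + W2 t))| ≤ ∫ t in (0:ℝ)..T,
        ((C0 * (T * cR) + M * vr r * C * cR) + (M * vr r * C * (T * cR) * A) * Real.exp (Λ * t)) := by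
      rw [← norm_eq_abs]
      refine intervalIntegral.norm_integral_le_of_norm_le hT0 ?_ (by apply Continuous.intervalIntegrable; fun_prop)
      have : ∀ᵐ t : ℝ, t ≠ T := by simp [ae_iff]
      filter_upwards [this] with t ht ht2
      exact key t ⟨ht2.1, lt_of_le_of_ne ht2.2 ht⟩
    rw [intervalIntegral.integral_add (by simp) (by apply Continuous.intervalIntegrable; fun_prop),
      intervalIntegral.integral_const, intervalIntegral.integral_const_mul, smul_eq_mul, sub_zero] at hb
    have h3 := mul_le_mul_of_nonneg_left (exp_int (T := T) hΛ)
      (show 0 ≤ M * vr r * C * (T * cR) * A by positivity)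
    rw [hsplit]
    refine (abs_add_le _ _).trans (add_le_add ((abs_add_le _ _).trans (add_le_add b1 b2)) ?_)
    linarith
  · rw [intervalIntegral.integral_undef hNi, abs_zero]
    positivity

theorem scen_final {τ r M C0 : ℝ} {a b c : Fin 3} {α : E3 → ℝ} {β : E3 → E3} {u : ℝ → E3 × E3 → ℝ}
    {Fc : ℝ → E3 × E3 → E3} {Ea Eb Ec Bb Bc : ℝ → E3 → ℝ} {Ein : E3 → ℝ}
    (S : Scen τ r M C0 a b c α β u Fc Ea Eb Ec Bb Bc Ein) :
    ∃ C', 0 ≤ C' ∧ ∀ T ∈ Ioo 0 τ, ∀ (x1 : E3) (A Λ : ℝ), 0 ≤ A → 0 < Λ →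
      (∀ t ∈ Icc 0 T, ∀ x ξ, ‖x - x1‖ ≤ T - t → ‖Fc t (x, ξ)‖ ≤ A * Real.exp (Λ * t)) →
      |Ea T x1| ≤ C' + C' * A * (Real.exp (Λ * T) / Λ) := by
  obtain ⟨C, hC, hQ⟩ := Q_bound S.cα S.cβ r
  have hM := S.hM
  have hC0 := S.hC0
  have hvr := vr_nonneg r
  have hcR := cR_nonneg
  have hc0 := c0_pos
  by_cases hτ : 0 < τ
  swap
  · exact ⟨0, le_rfl, fun T hT => absurd (hT.1.trans hT.2) hτ⟩
  set K1 := (C0 * (τ * cR) + M * vr r * (C * (τ * cR))) + τ * (C0 * (τ * cR) + M * vr r * C * cR) with hK1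
  set K2 := M * vr r * C * (τ * cR) with hK2
  have k1 : 0 ≤ K1 := by positivity
  have k2 : 0 ≤ K2 := by positivity
  refine ⟨C0 + K1 / c0 + K2 / c0, by positivity, ?_⟩
  intro T hT x1 A Λ hA hΛ hF
  have hT0 := hT.1.le
  have hTτ := hT.2.le
  have hsub : Icc 0 T ×ˢ (univ : Set E3) ⊆ Ico 0 τ ×ˢ univ :=
    prod_mono (fun t ht => ⟨ht.1, ht.2.trans_lt hT.2⟩) subset_rfl
  have cu : ContinuousOn (Function.uncurry fun t x => Ea t x - Ein x) (Icc 0 T ×ˢ univ) :=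
    (S.rEa.continuousOn.mono hsub).sub (S.cEin.continuous.comp continuous_snd).continuousOn
  have cw : ContinuousOn (fun t => Ea t x1 - Ein x1) (Icc 0 T) :=
    cu.comp (f := fun t : ℝ => (t, x1)) (by fun_prop) (fun t ht => ⟨ht, mem_univ _⟩)
  have main := delta_limit hT.1 cw (K := K1 + K2 * A * (Real.exp (Λ * T) / Λ)) (by
    intro g g1 g2 G h
    refine N_limit h hT0 x1 (u := fun t x => Ea t x - Ein x) cu ?_
    intro ε hε _
    refine (scen_eps S hε hT x1 h hC hA hΛ hQ hF).trans ?_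
    have : (C0 * (T * cR) + M * vr r * (C * (T * cR))) + T * (C0 * (T * cR) + M * vr r * C * cR) ≤ K1 := by
      rw [hK1]; gcongr
    have : M * vr r * C * (T * cR) * A * (Real.exp (Λ * T) / Λ) ≤ K2 * A * (Real.exp (Λ * T) / Λ) := by
      rw [hK2]; gcongr
    linarith)
  have hE := S.Einb x1
  have h1 : |Ea T x1 - Ein x1| ≤ (K1 + K2 * A * (Real.exp (Λ * T) / Λ)) / c0 := by
    rw [le_div_iff₀ hc0]; linarith
  have h2 : |Ea T x1| ≤ |Ea T x1 - Ein x1| + |Ein x1| := by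
    have := abs_add_le (Ea T x1 - Ein x1) (Ein x1)
    rwa [sub_add_cancel] at this
  have hX : 0 ≤ A * (Real.exp (Λ * T) / Λ) := by positivity
  have e : (K1 + K2 * A * (Real.exp (Λ * T) / Λ)) / c0 = K1 / c0 + K2 / c0 * (A * (Real.exp (Λ * T) / Λ)) := by ring
  have p1 : 0 ≤ (C0 + K1 / c0) * (A * (Real.exp (Λ * T) / Λ)) := by positivity
  have p2 : 0 ≤ K2 / c0 := by positivity
  rw [e] at h1
  linarith

def cyc (a b c : Fin 3) : Prop := (a = 0 ∧ b = 1 ∧ c = 2) ∨ (a = 1 ∧ b = 2 ∧ c = 0) ∨ (a = 2 ∧ b = 0 ∧ c = 1)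

theorem cyc_rot {a b c : Fin 3} (h : cyc a b c) : cyc b c a := by unfold cyc at *; tauto

theorem cyc_sum {a b c : Fin 3} (h : cyc a b c) (F : Fin 3 → ℝ) : ∑ k, F k = F a + F b + F c := by
  rw [Fin.sum_univ_three]
  rcases h with ⟨rfl, rfl, rfl⟩ | ⟨rfl, rfl, rfl⟩ | ⟨rfl, rfl, rfl⟩ <;> ring

theorem cyc_ne {a b c : Fin 3} (h : cyc a b c) : a ≠ b ∧ a ≠ c ∧ b ≠ c := by
  rcases h with ⟨rfl, rfl, rfl⟩ | ⟨rfl, rfl, rfl⟩ | ⟨rfl, rfl, rfl⟩ <;> decide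

structure VM (τ r M C : ℝ) (u : ℝ → E3 × E3 → ℝ) (Fc : ℝ → E3 × E3 → E3) (E B : Fin 3 → ℝ → E3 → ℝ)
    (Ei Bi : Fin 3 → E3 → ℝ) : Prop where
  hM : 0 ≤ M
  hC : 0 ≤ C
  ru : ContDiffOn ℝ 1 (fun p : ℝ × (E3 × E3) => u p.1 p.2) (Ico 0 τ ×ˢ univ)
  rE : ∀ i, ContDiffOn ℝ 1 (fun p : ℝ × E3 => E i p.1 p.2) (Ico 0 τ ×ˢ univ)
  rB : ∀ i, ContDiffOn ℝ 1 (fun p : ℝ × E3 => B i p.1 p.2) (Ico 0 τ ×ˢ univ)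
  uM : ∀ t ∈ Ico 0 τ, ∀ p, |u t p| ≤ M
  uz : ∀ t ∈ Ico 0 τ, ∀ x ξ, r < ‖ξ‖ → u t (x, ξ) = 0
  hV : ∀ t ∈ Ioo 0 τ, ∀ p, deriv (fun s => u s p) t = -fderiv ℝ (u t) p (vrel p.2, Fc t p)
  cF : ∀ t ∈ Ioo 0 τ, ∀ i, ContDiff ℝ 1 (fun p => Fc t p i)
  dF : ∀ t ∈ Ioo 0 τ, ∀ p, ∑ i, fderiv ℝ (fun p => Fc t p i) p (0, e3 i) = 0
  amp : ∀ a b c, cyc a b c → ∀ t ∈ Ioo 0 τ, ∀ x,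
    deriv (fun s => E a s x) t = pd3 (B c t) b x - pd3 (B b t) c x - ∫ ξ, u t (x, ξ) * vrel ξ a
  far : ∀ a b c, cyc a b c → ∀ t ∈ Ioo 0 τ, ∀ x,
    deriv (fun s => B a s x) t = -(pd3 (E c t) b x - pd3 (E b t) c x)
  gE : ∀ t ∈ Ioo 0 τ, ∀ x, ∑ i, pd3 (E i t) i x = ∫ ξ, u t (x, ξ)
  gB : ∀ t ∈ Ioo 0 τ, ∀ x, ∑ i, pd3 (B i t) i x = 0
  cE : ∀ i, ContDiff ℝ 2 (Ei i)
  cB : ∀ i, ContDiff ℝ 2 (Bi i)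
  E0 : ∀ i x, E i 0 x = Ei i x
  B0 : ∀ i x, B i 0 x = Bi i x
  bE : ∀ i x, |Ei i x| ≤ C
  bB : ∀ i x, |Bi i x| ≤ C
  b1E : ∀ i j x, |pd3 (Ei i) j x| ≤ C
  b1B : ∀ i j x, |pd3 (Bi i) j x| ≤ C
  b2E : ∀ i x, |∑ k, pd3 (pd3 (Ei i) k) k x| ≤ C
  b2B : ∀ i x, |∑ k, pd3 (pd3 (Bi i) k) k x| ≤ C

theorem pd3_neg (h : E3 → ℝ) (k : Fin 3) (x : E3) : pd3 (fun y => -h y) k x = -pd3 h k x := by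
  unfold pd3; rw [fderiv_fun_neg, neg_apply]

theorem vm_scenE {τ r M C : ℝ} {u : ℝ → E3 × E3 → ℝ} {Fc : ℝ → E3 × E3 → E3} {E B : Fin 3 → ℝ → E3 → ℝ}
    {Ei Bi : Fin 3 → E3 → ℝ} (V : VM τ r M C u Fc E B Ei Bi) {a b c : Fin 3} (h : cyc a b c) :
    Scen τ r M (2 * C) a b c (fun ξ => vrel ξ a) (fun _ => e3 a) u Fc (E a) (E b) (E c) (B b) (B c) (Ei a) where
  hM := V.hM
  hC0 := by have := V.hC; linarith
  hs := cyc_sum h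
  cα := (coord_contDiff a).comp (vrel_contDiff.of_le le_top)
  cβ := contDiff_const
  ru := V.ru
  rEa := V.rE a
  rEb := V.rE b
  rEc := V.rE c
  rBb := V.rB b
  rBc := V.rB c
  uM := V.uM
  uz := V.uz
  hV := V.hV
  cF := V.cF
  dF := V.dF
  m1 := V.amp a b c h
  m2 := by
    intro t ht x
    rw [V.far b c a (cyc_rot h) t ht x]
    simp [e3_apply, (cyc_ne h).2.1.symm]
  m3 := by
    intro t ht x
    rw [V.far c a b (cyc_rot (cyc_rot h)) t ht x]
    simp [e3_apply, (cyc_ne h).1.symm]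
  m4 := by
    intro t ht x
    rw [← cyc_sum h (fun i => pd3 (E i t) i x), V.gE t ht x]
    simp [e3_apply]
  cEin := V.cE a
  E0 := V.E0 a
  Einb := fun x => by have := V.bE a x; have := V.hC; linarith
  lap := fun x => by have := V.b2E a x; have := V.hC; linarith
  cBb := by
    have : B b 0 = Bi b := funext (V.B0 b)
    rw [this]; exact (V.cB b).of_le (by norm_num)
  cBc := by
    have : B c 0 = Bi c := funext (V.B0 c)
    rw [this]; exact (V.cB c).of_le (by norm_num)
  curl0 := by
    intro x
    have h1 : B b 0 = Bi b := funext (V.B0 b)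
    have h2 : B c 0 = Bi c := funext (V.B0 c)
    rw [h1, h2]
    have := V.b1B c b x
    have := V.b1B b c x
    exact (abs_sub _ _).trans (by linarith)

theorem vm_scenB {τ r M C : ℝ} {u : ℝ → E3 × E3 → ℝ} {Fc : ℝ → E3 × E3 → E3} {E B : Fin 3 → ℝ → E3 → ℝ}
    {Ei Bi : Fin 3 → E3 → ℝ} (V : VM τ r M C u Fc E B Ei Bi) {a b c : Fin 3} (h : cyc a b c) :
    Scen τ r M (2 * C) a b c (fun _ => 0) (fun ξ => vrel ξ b • e3 c - vrel ξ c • e3 b) u Fc (B a) (B b) (B c)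
      (fun t x => -E b t x) (fun t x => -E c t x) (Bi a) where
  hM := V.hM
  hC0 := by have := V.hC; linarith
  hs := cyc_sum h
  cα := contDiff_const
  cβ := (((coord_contDiff b).comp (vrel_contDiff.of_le le_top)).smul contDiff_const).sub
    (((coord_contDiff c).comp (vrel_contDiff.of_le le_top)).smul contDiff_const)
  ru := V.ru
  rEa := V.rB a
  rEb := V.rB b
  rEc := V.rB c
  rBb := (V.rE b).neg
  rBc := (V.rE c).neg
  uM := V.uM
  uz := V.uz
  hV := V.hV
  cF := V.cF
  dF := V.dF
  m1 := by
    intro t ht x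
    rw [V.far a b c h t ht x, pd3_neg, pd3_neg]; simp; ring
  m2 := by
    intro t ht x
    rw [deriv.fun_neg, V.amp b c a (cyc_rot h) t ht x]
    simp [e3_apply, (cyc_ne h).2.2.symm]; ring
  m3 := by
    intro t ht x
    rw [deriv.fun_neg, V.amp c a b (cyc_rot (cyc_rot h)) t ht x]
    simp [e3_apply, (cyc_ne h).2.2, integral_neg]; ring
  m4 := by
    intro t ht x
    rw [← cyc_sum h (fun i => pd3 (B i t) i x), V.gB t ht x]
    simp [e3_apply, (cyc_ne h).1, (cyc_ne h).2.1]
  cEin := V.cB a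
  E0 := V.B0 a
  Einb := fun x => by have := V.bB a x; have := V.hC; linarith
  lap := fun x => by have := V.b2B a x; have := V.hC; linarith
  cBb := by
    have : E b 0 = Ei b := funext (V.E0 b)
    simp only [V.E0]; exact ((V.cE b).of_le (by norm_num)).neg
  cBc := by
    simp only [V.E0]; exact ((V.cE c).of_le (by norm_num)).neg
  curl0 := by
    intro x
    rw [pd3_neg, pd3_neg]
    have h1 : E b 0 = Ei b := funext (V.E0 b)
    have h2 : E c 0 = Ei c := funext (V.E0 c)
    rw [h1, h2]
    have := V.b1E c b x
    have := V.b1E b c x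
    refine (abs_sub _ _).trans ?_
    rw [abs_neg, abs_neg]; linarith

/-- bounds on all components with one constant -/
theorem vm_comp {τ r M C : ℝ} {u : ℝ → E3 × E3 → ℝ} {Fc : ℝ → E3 × E3 → E3} {E B : Fin 3 → ℝ → E3 → ℝ}
    {Ei Bi : Fin 3 → E3 → ℝ} (V : VM τ r M C u Fc E B Ei Bi) :
    ∃ C', 0 ≤ C' ∧ ∀ T ∈ Ioo 0 τ, ∀ (x1 : E3) (A Λ : ℝ), 0 ≤ A → 0 < Λ →
      (∀ t ∈ Icc 0 T, ∀ x ξ, ‖x - x1‖ ≤ T - t → ‖Fc t (x, ξ)‖ ≤ A * Real.exp (Λ * t)) →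
      ∑ k, (|E k T x1| + |B k T x1|) ≤ C' + C' * A * (Real.exp (Λ * T) / Λ) := by
  have hcy : ∀ k : Fin 3, ∃ b c, cyc k b c := by
    intro k
    fin_cases k
    · exact ⟨1, 2, Or.inl ⟨rfl, rfl, rfl⟩⟩
    · exact ⟨2, 0, Or.inr (Or.inl ⟨rfl, rfl, rfl⟩)⟩
    · exact ⟨0, 1, Or.inr (Or.inr ⟨rfl, rfl, rfl⟩)⟩
  choose b c hbc using hcy
  choose CE hE0 hE using fun k => scen_final (vm_scenE V (hbc k))
  choose CB hB0 hB using fun k => scen_final (vm_scenB V (hbc k))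
  refine ⟨∑ k, (CE k + CB k), Finset.sum_nonneg fun k _ => add_nonneg (hE0 k) (hB0 k), ?_⟩
  intro T hT x1 A Λ hA hΛ hF
  rw [Finset.sum_mul, Finset.sum_mul, ← Finset.sum_add_distrib]
  refine Finset.sum_le_sum fun k _ => ?_
  have := hE k T hT x1 A Λ hA hΛ hF
  have := hB k T hT x1 A Λ hA hΛ hF
  linarith

theorem cone_gron {τ C' C0 : ℝ} (hτ : 0 < τ) (hC' : 0 ≤ C') (hC0 : 0 ≤ C0) (Y : ℝ → E3 → ℝ)
    (hY : ContinuousOn (fun p : ℝ × E3 => Y p.1 p.2) (Ico 0 τ ×ˢ univ))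
    (hpos : ∀ t x, 0 ≤ Y t x)
    (h0 : ∀ x, Y 0 x ≤ C0)
    (hstep : ∀ T ∈ Ioo 0 τ, ∀ (x1 : E3) (A Λ : ℝ), 0 ≤ A → 0 < Λ →
      (∀ t ∈ Icc 0 T, ∀ x, ‖x - x1‖ ≤ T - t → Y t x ≤ A * Real.exp (Λ * t)) →
      Y T x1 ≤ C' + C' * A * (Real.exp (Λ * T) / Λ)) :
    ∃ C : ℝ, ∀ t ∈ Ico 0 τ, ∀ x, Y t x ≤ C := by
  obtain ⟨Λ, hΛ⟩ : ∃ Λ, Λ = 2 * C' + 1 := ⟨_, rfl⟩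
  have hΛp : 0 < Λ := by rw [hΛ]; linarith
  refine ⟨(C0 + 2 * C') * Real.exp (Λ * τ), fun T hT x0 => ?_⟩
  let K : Set (ℝ × E3) := {p | 0 ≤ p.1 ∧ p.1 ≤ T ∧ ‖p.2 - x0‖ ≤ T - p.1}
  have hKc : IsCompact K := by
    refine IsCompact.of_isClosed_subset ((isCompact_Icc (a := 0) (b := T)).prod (isCompact_closedBall x0 T)) ?_ ?_
    · exact (isClosed_le continuous_const continuous_fst).inter
        ((isClosed_le continuous_fst continuous_const).inter
          (isClosed_le (f := fun p : ℝ × E3 => ‖p.2 - x0‖) (g := fun p : ℝ × E3 => T - p.1) (by fun_prop) (by fun_prop)))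
    · rintro ⟨t, x⟩ ⟨h1, h2, h3⟩
      simp only at h1 h2 h3
      refine ⟨⟨h1, h2⟩, ?_⟩
      rw [mem_closedBall, dist_eq_norm]; linarith
  have hKne : ((T, x0) : ℝ × E3) ∈ K := ⟨hT.1, le_refl _, by simp⟩
  have hcont : ContinuousOn (fun p : ℝ × E3 => Y p.1 p.2 * Real.exp (-(Λ * p.1))) K := by
    refine ContinuousOn.mul (hY.mono ?_) (by fun_prop)
    rintro ⟨t, x⟩ ⟨h1, h2, h3⟩
    exact ⟨⟨h1, lt_of_le_of_lt h2 hT.2⟩, mem_univ _⟩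
  obtain ⟨⟨t1, x1⟩, ⟨k1, k2, k3⟩, hmax⟩ := hKc.exists_isMaxOn ⟨_, hKne⟩ hcont
  simp only at k1 k2 k3
  obtain ⟨A, hA⟩ : ∃ A, A = Y t1 x1 * Real.exp (-(Λ * t1)) := ⟨_, rfl⟩
  have hle : ∀ p ∈ K, Y p.1 p.2 ≤ A * Real.exp (Λ * p.1) := by
    intro p hp
    have h := hmax hp
    simp only [Set.mem_ofPred_eq] at h
    rw [← hA] at h
    have h2 := mul_le_mul_of_nonneg_right h (Real.exp_pos (Λ * p.1)).le
    rwa [mul_assoc, ← Real.exp_add, neg_add_cancel, Real.exp_zero, mul_one] at h2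
  have hA0 : 0 ≤ A := by rw [hA]; exact mul_nonneg (hpos _ _) (Real.exp_pos _).le
  have hAle : A ≤ C0 + 2 * C' := by
    rcases k1.eq_or_lt with h | h
    · subst h
      rw [hA]; simp; linarith [h0 x1]
    · have hs := hstep t1 ⟨h, lt_of_le_of_lt k2 hT.2⟩ x1 A Λ hA0 hΛp (by
        intro t ht x hx
        refine hle (t, x) ⟨ht.1, ht.2.trans k2, ?_⟩
        have := norm_sub_le_norm_sub_add_norm_sub x x1 x0
        simp only
        linarith)
      have hY1 : Y t1 x1 = A * Real.exp (Λ * t1) := by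
        rw [hA, mul_assoc, ← Real.exp_add, neg_add_cancel, Real.exp_zero, mul_one]
      rw [hY1] at hs
      have he : 1 ≤ Real.exp (Λ * t1) := Real.one_le_exp (by positivity)
      have h3 : C' * A * (Real.exp (Λ * t1) / Λ) ≤ A * Real.exp (Λ * t1) / 2 := by
        rw [mul_div_assoc', div_le_div_iff₀ hΛp two_pos, hΛ]
        have : 0 ≤ A * Real.exp (Λ * t1) := by positivity
        rw [hΛ] at this
        nlinarith
      have h4 : A ≤ A * Real.exp (Λ * t1) := le_mul_of_one_le_right hA0 he
      linarith
  refine (hle _ hKne).trans ?_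
  simp only
  have : Real.exp (Λ * T) ≤ Real.exp (Λ * τ) := Real.exp_le_exp.2 (by nlinarith [hT.2])
  gcongr

theorem bd1 {g : E3 → ℝ} (hg : Continuous g) (hs : HasCompactSupport g) : ∃ C, ∀ x, |g x| ≤ C := by
  obtain ⟨C, hC⟩ := hs.exists_bound_of_continuous hg
  exact ⟨C, fun x => by simpa using hC x⟩

theorem fin_bd {ι : Type*} [Fintype ι] {α : Type*} {g : ι → α → ℝ} (h : ∀ i, ∃ C, ∀ x, |g i x| ≤ C) :
    ∃ C, 0 ≤ C ∧ ∀ i x, |g i x| ≤ C := by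
  choose C hC using h
  refine ⟨∑ i, |C i|, Finset.sum_nonneg fun i _ => abs_nonneg _, fun i x => ?_⟩
  exact (hC i x).trans ((le_abs_self _).trans
    (Finset.single_le_sum (f := fun i => |C i|) (fun i _ => abs_nonneg _) (Finset.mem_univ i)))

theorem pd3_cs {g : E3 → ℝ} (hs : HasCompactSupport g) (k : Fin 3) : HasCompactSupport (pd3 g k) :=
  (hs.fderiv (𝕜 := ℝ)).comp_left (g := fun L : E3 →L[ℝ] ℝ => L (e3 k)) (by simp)

theorem pd3_cd {g : E3 → ℝ} {n m : WithTop ℕ∞} (hg : ContDiff ℝ n g) (h : m + 1 ≤ n) (k : Fin 3) :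
    ContDiff ℝ m (pd3 g k) :=
  (hg.fderiv_right h).clm_apply contDiff_const

theorem data_bd {F : E3 → E3} (hF : ContDiff ℝ 2 F) (hs : HasCompactSupport F) :
    ∃ C, 0 ≤ C ∧ (∀ i x, |F x i| ≤ C) ∧ (∀ i j x, |pd3 (fun y => F y i) j x| ≤ C) ∧
      (∀ i x, |∑ k, pd3 (pd3 (fun y => F y i) k) k x| ≤ C) := by
  have c2 : ∀ i, ContDiff ℝ 2 (fun y => F y i) := fun i => (coord_contDiff i).comp hF
  have s2 : ∀ i : Fin 3, HasCompactSupport (fun y => F y i) := fun i =>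
    hs.comp_left (g := fun v : E3 => v i) (by simp)
  have c1 : ∀ i k, ContDiff ℝ 1 (pd3 (fun y => F y i) k) := fun i k =>
    pd3_cd (c2 i) (by norm_num) k
  have c0 : ∀ i k, ContDiff ℝ 0 (pd3 (pd3 (fun y => F y i) k) k) := fun i k =>
    pd3_cd (c1 i k) (by norm_num) k
  obtain ⟨C1, p1, h1⟩ := fin_bd (g := fun (i : Fin 3) x => F x i) fun i => bd1 (c2 i).continuous (s2 i)
  obtain ⟨C2, p2, h2⟩ := fin_bd (g := fun (q : Fin 3 × Fin 3) x => pd3 (fun y => F y q.1) q.2 x)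
    fun q => bd1 (c1 q.1 q.2).continuous (pd3_cs (s2 q.1) q.2)
  obtain ⟨C3, p3, h3⟩ := fin_bd (g := fun (q : Fin 3 × Fin 3) x => pd3 (pd3 (fun y => F y q.1) q.2) q.2 x)
    fun q => bd1 (c0 q.1 q.2).continuous (pd3_cs (pd3_cs (s2 q.1) q.2) q.2)
  refine ⟨C1 + C2 + 3 * C3, by positivity, fun i x => ?_, fun i j x => ?_, fun i x => ?_⟩
  · have := h1 i x; linarith
  · have := h2 (i, j) x; simp only at this; linarith
  · refine (Finset.abs_sum_le_sum_abs _ _).trans ?_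
    rw [Fin.sum_univ_three]
    have a := h3 (i, 0) x; have b := h3 (i, 1) x; have c := h3 (i, 2) x
    simp only at a b c
    linarith

theorem vlasov_lin {f : E3 → E3 → ℝ} (hf : ContDiff ℝ 1 (fun p : E3 × E3 => f p.1 p.2)) (e b x ξ : E3) :
    ⟪vrel ξ, gradient (fun y => f y ξ) x⟫ +
      ∑ i : Fin 3, fderiv ℝ (fun η => (e + cross3 (vrel η) b) i * f x η) ξ (e3 i)
      = fderiv ℝ (fun p : E3 × E3 => f p.1 p.2) (x, ξ) (vrel ξ, e + cross3 (vrel ξ) b) := by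
  have hd : HasFDerivAt (fun p : E3 × E3 => f p.1 p.2) (fderiv ℝ (fun p : E3 × E3 => f p.1 p.2) (x, ξ)) (x, ξ) :=
    (hf.differentiable one_ne_zero (x, ξ)).hasFDerivAt
  set L := fderiv ℝ (fun p : E3 × E3 => f p.1 p.2) (x, ξ) with hL
  have h1 : HasFDerivAt (fun y => f y ξ) (L.comp (ContinuousLinearMap.inl ℝ E3 E3)) x :=
    HasFDerivAt.comp (f := fun y : E3 => (y, ξ)) x hd (hasFDerivAt_prodMk_left x ξ)
  have h2 : HasFDerivAt (fun η => f x η) (L.comp (ContinuousLinearMap.inr ℝ E3 E3)) ξ :=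
    HasFDerivAt.comp (f := fun η : E3 => (x, η)) ξ hd (hasFDerivAt_prodMk_right x ξ)
  have g1 : ⟪vrel ξ, gradient (fun y => f y ξ) x⟫ = L (vrel ξ, 0) := by
    rw [real_inner_comm, gradient, InnerProductSpace.toDual_symm_apply, h1.fderiv]; simp
  have g2 : ∀ i : Fin 3, fderiv ℝ (fun η => (e + cross3 (vrel η) b) i * f x η) ξ (e3 i) =
      (e + cross3 (vrel ξ) b) i * L (0, e3 i) +
        f x ξ * fderiv ℝ (fun η => (e + cross3 (vrel η) b) i) ξ (e3 i) := by
    intro i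
    have h3 := ((force_contDiff e b i).differentiable (by simp) ξ).hasFDerivAt
    rw [(h3.fun_mul h2).fderiv]; simp
  rw [g1, Finset.sum_congr rfl fun i _ => g2 i, Finset.sum_add_distrib, ← Finset.mul_sum, force_div, mul_zero,
    add_zero]
  have g3 : ∑ i, (e + cross3 (vrel ξ) b) i * L (0, e3 i) = L (0, e + cross3 (vrel ξ) b) := by
    have : ∀ v : E3, L (0, v) = (L.comp (ContinuousLinearMap.inr ℝ E3 E3)) v := fun v => by simp
    simp only [this]
    conv_rhs => rw [vec_eq_sum (e + cross3 (vrel ξ) b)]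
    rw [map_sum]; simp only [map_smul, smul_eq_mul]
  rw [g3, ← map_add]; simp

theorem fc_cd {e b : E3 → E3} (he : ∀ i, ContDiff ℝ 1 (fun x => e x i)) (hb : ∀ i, ContDiff ℝ 1 (fun x => b x i))
    (i : Fin 3) : ContDiff ℝ 1 (fun p : E3 × E3 => (e p.1 + cross3 (vrel p.2) (b p.1)) i) := by
  have hv : ∀ j, ContDiff ℝ 1 (fun p : E3 × E3 => vrel p.2 j) := fun j =>
    ((coord_contDiff j).comp (vrel_contDiff.of_le le_top)).comp contDiff_snd
  have he' : ∀ j, ContDiff ℝ 1 (fun p : E3 × E3 => e p.1 j) := fun j => (he j).comp contDiff_fst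
  have hb' : ∀ j, ContDiff ℝ 1 (fun p : E3 × E3 => b p.1 j) := fun j => (hb j).comp contDiff_fst
  fin_cases i
  · exact (he' 0).add (((hv 1).mul (hb' 2)).sub ((hv 2).mul (hb' 1)))
  · exact (he' 1).add (((hv 2).mul (hb' 0)).sub ((hv 0).mul (hb' 2)))
  · exact (he' 2).add (((hv 0).mul (hb' 1)).sub ((hv 1).mul (hb' 0)))

theorem fc_div {e b : E3 → E3} (he : ∀ i, ContDiff ℝ 1 (fun x => e x i)) (hb : ∀ i, ContDiff ℝ 1 (fun x => b x i))
    (p : E3 × E3) :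
    ∑ i, fderiv ℝ (fun p : E3 × E3 => (e p.1 + cross3 (vrel p.2) (b p.1)) i) p (0, e3 i) = 0 := by
  obtain ⟨x, ξ⟩ := p
  rw [← force_div (e x) (b x) ξ]
  refine Finset.sum_congr rfl fun i _ => ?_
  have hd := ((fc_cd he hb i).differentiable one_ne_zero (x, ξ)).hasFDerivAt
  have h2 := HasFDerivAt.comp (f := fun η : E3 => (x, η)) ξ hd (hasFDerivAt_prodMk_right x ξ)
  have h3 : fderiv ℝ (fun η => (e x + cross3 (vrel η) (b x)) i) ξ = _ := h2.fderiv
  rw [h3]; simp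

theorem curl_cyc {a b c : Fin 3} (h : cyc a b c) (F : E3 → E3) (x : E3) :
    curl3 F x a = pd3 (fun y => F y c) b x - pd3 (fun y => F y b) c x := by
  rcases h with ⟨rfl, rfl, rfl⟩ | ⟨rfl, rfl, rfl⟩ | ⟨rfl, rfl, rfl⟩ <;> rfl

theorem deriv_coord {F : ℝ → E3} {t : ℝ} (h : DifferentiableAt ℝ F t) (a : Fin 3) :
    deriv (fun s => F s a) t = deriv F t a := by
  have := (coord_hasFDerivAt a (F t)).comp_hasDerivAt t h.hasDerivAt
  exact this.deriv

theorem field_diff {τ : ℝ} {F : ℝ → E3 → E3} (hF : ContDiffOn ℝ 1 (fun p : ℝ × E3 => F p.1 p.2)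
      (Set.Ico 0 τ ×ˢ (Set.univ : Set E3))) {t : ℝ} (ht : t ∈ Ioo 0 τ) (x : E3) :
    DifferentiableAt ℝ (fun s => F s x) t := by
  have h1 : DifferentiableAt ℝ (fun p : ℝ × E3 => F p.1 p.2) (t, x) :=
    (hF.contDiffAt (prod_mem_nhds (Ico_mem_nhds ht.1 ht.2) univ_mem)).differentiableAt one_ne_zero
  exact DifferentiableAt.comp (f := fun s : ℝ => (s, x)) t h1 (by fun_prop)

theorem int_coord {g : E3 → ℝ} (hg : Integrable g) (a : Fin 3) :
    (∫ ξ, g ξ • vrel ξ) a = ∫ ξ, g ξ * vrel ξ a := by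
  have hi : Integrable (fun ξ => g ξ • vrel ξ) := by
    refine hg.mono (hg.aestronglyMeasurable.smul
      (vrel_contDiff.continuous).aestronglyMeasurable) ?_
    refine Eventually.of_forall fun ξ => ?_
    rw [norm_smul]
    exact mul_le_of_le_one_right (norm_nonneg _) (vrel_norm_lt ξ).le
  have := (EuclideanSpace.proj (𝕜 := ℝ) a).integral_comp_comm hi
  simpa using this.symm

/-- **Boundedness of the electromagnetic field under a momentum support bound**: if the
momentum support radius of a `C¹` solution of the relativistic Vlasov–Maxwell system
remains bounded on `[0,τ)`, then the field `(E,B)` is bounded on `[0,τ) × ℝ³`. -/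
theorem field_bounded_of_momentum_support_bounded
    (τ : ℝ) (hτ : 0 < τ)
    (f : ℝ → E3 → E3 → ℝ) (Efld Bfld : ℝ → E3 → E3)
    (fin : E3 → E3 → ℝ) (Ein Bin : E3 → E3)
    -- regularity of the solution on `[0,τ)`
    (hfreg : ContDiffOn ℝ 1 (fun p : ℝ × E3 × E3 => f p.1 p.2.1 p.2.2)
      (Set.Ico 0 τ ×ˢ (Set.univ : Set (E3 × E3))))
    (hEreg : ContDiffOn ℝ 1 (fun p : ℝ × E3 => Efld p.1 p.2)
      (Set.Ico 0 τ ×ˢ (Set.univ : Set E3)))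
    (hBreg : ContDiffOn ℝ 1 (fun p : ℝ × E3 => Bfld p.1 p.2)
      (Set.Ico 0 τ ×ˢ (Set.univ : Set E3)))
    -- regularity, positivity and support of the initial data
    (hfinreg : ContDiff ℝ 1 (fun p : E3 × E3 => fin p.1 p.2))
    (hfinpos : ∀ x ξ : E3, 0 ≤ fin x ξ)
    (hfinsupp : HasCompactSupport (fun p : E3 × E3 => fin p.1 p.2))
    (hEinreg : ContDiff ℝ 2 Ein) (hBinreg : ContDiff ℝ 2 Bin)
    (hEinsupp : HasCompactSupport Ein) (hBinsupp : HasCompactSupport Bin)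
    -- initial conditions
    (hf0 : ∀ x ξ : E3, f 0 x ξ = fin x ξ)
    (hE0 : ∀ x : E3, Efld 0 x = Ein x) (hB0 : ∀ x : E3, Bfld 0 x = Bin x)
    -- integrability in the momentum variable
    (hintf : ∀ t ∈ Set.Ico 0 τ, ∀ x : E3, Integrable fun ξ : E3 => f t x ξ)
    -- compatibility conditions on the initial data
    (hcompatE : ∀ x : E3, divg Ein x = ∫ ξ : E3, fin x ξ)
    (hcompatB : ∀ x : E3, divg Bin x = 0)
    -- the Vlasov equation
    (hVlasov : ∀ t ∈ Set.Ioo 0 τ, ∀ x ξ : E3,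
      deriv (fun s => f s x ξ) t + ⟪vrel ξ, gradient (fun y => f t y ξ) x⟫
        = -∑ i : Fin 3,
            fderiv ℝ (fun η => (Efld t x + cross3 (vrel η) (Bfld t x)) i * f t x η) ξ (e3 i))
    -- the Maxwell equations
    (hAmpere : ∀ t ∈ Set.Ioo 0 τ, ∀ x : E3,
      deriv (fun s => Efld s x) t - curl3 (Bfld t) x = -∫ ξ : E3, f t x ξ • vrel ξ)
    (hGaussE : ∀ t ∈ Set.Ioo 0 τ, ∀ x : E3, divg (Efld t) x = ∫ ξ : E3, f t x ξ)
    (hFaraday : ∀ t ∈ Set.Ioo 0 τ, ∀ x : E3,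
      deriv (fun s => Bfld s x) t + curl3 (Efld t) x = 0)
    (hGaussB : ∀ t ∈ Set.Ioo 0 τ, ∀ x : E3, divg (Bfld t) x = 0)    -- bounded momentum support radius
    (hR : ∃ r : ℝ, 0 < r ∧ ∀ t ∈ Set.Ico 0 τ, ∀ x ξ : E3, r < ‖ξ‖ → f t x ξ = 0) :
    ∃ C : ℝ, ∀ t ∈ Set.Ico 0 τ, ∀ x : E3, ‖Efld t x‖ + ‖Bfld t x‖ ≤ C := by
  obtain ⟨r, hr, hR⟩ := hR
  obtain ⟨CE, hCE, bE, b1E, b2E⟩ := data_bd hEinreg hEinsupp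
  obtain ⟨CB, hCB, bB, b1B, b2B⟩ := data_bd hBinreg hBinsupp
  obtain ⟨M0, hM0⟩ := hfinsupp.exists_bound_of_continuous hfinreg.continuous
  have hM0' : ∀ x ξ, |fin x ξ| ≤ M0 := fun x ξ => by simpa using hM0 (x, ξ)
  have hMn : 0 ≤ M0 := (abs_nonneg _).trans (hM0' 0 0)
  have rE : ∀ i : Fin 3, ContDiffOn ℝ 1 (fun p : ℝ × E3 => Efld p.1 p.2 i) (Ico 0 τ ×ˢ univ) := fun i =>
    (coord_contDiff i).comp_contDiffOn hEreg
  have rB : ∀ i : Fin 3, ContDiffOn ℝ 1 (fun p : ℝ × E3 => Bfld p.1 p.2 i) (Ico 0 τ ×ˢ univ) := fun i =>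
    (coord_contDiff i).comp_contDiffOn hBreg
  have sE : ∀ t ∈ Ioo 0 τ, ∀ i : Fin 3, ContDiff ℝ 1 (fun x => Efld t x i) := fun t ht i => by
    obtain ⟨D, -, -, -, -, h⟩ := vm_joint (u := fun t x => Efld t x i) (rE i)
    exact h t ht
  have sB : ∀ t ∈ Ioo 0 τ, ∀ i : Fin 3, ContDiff ℝ 1 (fun x => Bfld t x i) := fun t ht i => by
    obtain ⟨D, -, -, -, -, h⟩ := vm_joint (u := fun t x => Bfld t x i) (rB i)
    exact h t ht
  obtain ⟨D, -, hD, hDt, hDx, hfc⟩ := vm_joint (u := fun t (p : E3 × E3) => f t p.1 p.2) hfreg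
  have hVl : ∀ t ∈ Ioo 0 τ, ∀ x ξ, deriv (fun s => f s x ξ) t =
      -fderiv ℝ (fun p : E3 × E3 => f t p.1 p.2) (x, ξ) (vrel ξ, Efld t x + cross3 (vrel ξ) (Bfld t x)) := by
    intro t ht x ξ
    rw [← vlasov_lin (hfc t ht)]
    have := hVlasov t ht x ξ
    linarith
  have hVj : ∀ t ∈ Ioo 0 τ, ∀ x ξ, D (t, x, ξ) (1, vrel ξ, Efld t x + cross3 (vrel ξ) (Bfld t x)) = 0 := by
    intro t ht x ξ
    have h1 := hVl t ht x ξ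
    have h2 := (hDt t ht (x, ξ)).deriv
    simp only at h2
    rw [h2, hDx t ht (x, ξ)] at h1
    have h3 : ((1 : ℝ), vrel ξ, Efld t x + cross3 (vrel ξ) (Bfld t x)) =
      ((1 : ℝ), (0 : E3 × E3)) + ((0 : ℝ), vrel ξ, Efld t x + cross3 (vrel ξ) (Bfld t x)) := by simp
    rw [h3, map_add, h1]; simp
  have hup : ∀ t ∈ Ico 0 τ, ∀ x ξ, f t x ξ ≤ M0 :=
    vm_max hMn f (fun t x ξ => Efld t x + cross3 (vrel ξ) (Bfld t x)) hfreg
      (fun x ξ => by rw [hf0]; exact (le_abs_self _).trans (hM0' x ξ)) hR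
      (fun t ht x ξ => by rw [(hD t ht (x, ξ)).fderiv]; exact hVj t ht x ξ)
  have hlo : ∀ t ∈ Ico 0 τ, ∀ x ξ, -f t x ξ ≤ M0 :=
    vm_max (r := r) hMn (fun t x ξ => -f t x ξ) (fun t x ξ => Efld t x + cross3 (vrel ξ) (Bfld t x)) hfreg.neg
      (fun x ξ => by rw [hf0]; exact (neg_le_abs _).trans (hM0' x ξ))
      (fun t ht x ξ h => by simp [hR t ht x ξ h])
      (fun t ht x ξ => by
        rw [((hD t ht (x, ξ)).fun_neg).fderiv, neg_apply, hVj t ht x ξ, neg_zero])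
  have V : VM τ r M0 (CE + CB) (fun t p => f t p.1 p.2)
      (fun t p => Efld t p.1 + cross3 (vrel p.2) (Bfld t p.1)) (fun i t x => Efld t x i)
      (fun i t x => Bfld t x i) (fun i x => Ein x i) (fun i x => Bin x i) :=
    { hM := hMn
      hC := by positivity
      ru := hfreg
      rE := rE
      rB := rB
      uM := fun t ht p => abs_le.2 ⟨by have := hlo t ht p.1 p.2; linarith, hup t ht p.1 p.2⟩
      uz := hR
      hV := fun t ht p => hVl t ht p.1 p.2
      cF := fun t ht i => fc_cd (sE t ht) (sB t ht) i
      dF := fun t ht p => fc_div (sE t ht) (sB t ht) p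
      amp := fun a b c h t ht x => by
        have h1 := congrArg (fun v : E3 => v a) (hAmpere t ht x)
        simp only [PiLp.sub_apply, PiLp.neg_apply] at h1
        rw [int_coord (hintf t ⟨ht.1.le, ht.2⟩ x), curl_cyc h, ← deriv_coord (field_diff hEreg ht x)] at h1
        linarith
      far := fun a b c h t ht x => by
        have h1 := congrArg (fun v : E3 => v a) (hFaraday t ht x)
        simp only [PiLp.add_apply, PiLp.zero_apply] at h1
        rw [curl_cyc h, ← deriv_coord (field_diff hBreg ht x)] at h1
        linarith
      gE := hGaussE
      gB := hGaussB
      cE := fun i => (coord_contDiff i).comp hEinreg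
      cB := fun i => (coord_contDiff i).comp hBinreg
      E0 := fun i x => by rw [hE0]
      B0 := fun i x => by rw [hB0]
      bE := fun i x => by have := bE i x; linarith
      bB := fun i x => by have := bB i x; linarith
      b1E := fun i j x => by have := b1E i j x; linarith
      b1B := fun i j x => by have := b1B i j x; linarith
      b2E := fun i x => by have := b2E i x; linarith
      b2B := fun i x => by have := b2B i x; linarith }
  obtain ⟨C', hC', hstep⟩ := vm_comp V
  have nb : ∀ t x, ‖Efld t x‖ + ‖Bfld t x‖ ≤ ∑ k : Fin 3, (|Efld t x k| + |Bfld t x k|) := by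
    intro t x
    rw [Fin.sum_univ_three]
    have := norm_le_sum (Efld t x); have := norm_le_sum (Bfld t x); linarith
  refine cone_gron (C' := C') (C0 := 3 * (CE + CB)) hτ hC' (by positivity)
    (fun t x => ‖Efld t x‖ + ‖Bfld t x‖) (hEreg.continuousOn.norm.add hBreg.continuousOn.norm)
    (fun t x => by positivity) ?_ ?_
  · intro x
    refine (nb 0 x).trans ?_
    rw [Fin.sum_univ_three, hE0, hB0]
    have a0 := bE 0 x; have a1 := bE 1 x; have a2 := bE 2 x
    have c0 := bB 0 x; have c1 := bB 1 x; have c2 := bB 2 x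
    linarith
  · intro T hT x1 A Λ hA hΛ h
    refine (nb T x1).trans (hstep T hT x1 A Λ hA hΛ fun t ht x ξ hx => ?_)
    exact (force_norm _ _ _).trans (h t ht x hx)
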